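/- arXiv:2105.11027 — 2 statements merged into one kernel-verified Lean document; each statement's English description precedes it below -/
import Mathlib

section
/- Let D = (d_1 ≥ d_2 ≥ … ≥ d_ℓ) be a partition of n, P_D the block upper-triangular parabolic subgroup of GL_n(F_q) with diagonal blocks of sizes d_1,…,d_ℓ, and I_D the permutation representation of GL_n(F_q) on complex-valued functions on GL_n(F_q)/P_D. Let ν be an irreducible constituent of I_D that occurs in I_D with multiplicity one and does not occur in I_{D'} for any partition D' of n strictly dominating D. Set k = n − d_1. Then ν has a nonzero H_k-fixed vector but no nonzero H_{k−1}-eigenvector; in other words, ν belongs to the new k-spectrum and has tensor rank k. -/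
/-!
STATEMENT 15: If ν is an irreducible constituent of I_D (functions on
GL_n/P_D) occurring with multiplicity one and not occurring in I_{D'} for any
partition D' strictly dominating D, then ν has a nonzero H_k-fixed vector and
no nonzero H_j-eigenvector for j < k, where k = n − d_1; i.e. ν lies in the
new k-spectrum and has tensor rank k.
-/

open Matrix
open scoped MatrixGroups

set_option synthInstance.maxHeartbeats 1000000
set_option maxHeartbeats 1000000

namespace Stmt15

variable {F : Type} [Field F] [Fintype F] [DecidableEq F]
variable {V : Type} [AddCommGroup V] [Module ℂ V]

/-- The subgroup `H_k ≤ GL_n(F)` of elements fixing the first `k` standard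
basis vectors of `F^n` (equivalently, fixing pointwise every vector supported
in the first `k` coordinates). -/
def Hsub (n k : ℕ) : Subgroup (GL (Fin n) F) where
  carrier := {g | ∀ v : Fin n → F, (∀ i : Fin n, k ≤ (i : ℕ) → v i = 0) →
      (↑g : Matrix (Fin n) (Fin n) F) *ᵥ v = v}
  one_mem' := by intro v hv; simp
  mul_mem' := by
    intro g h hg hh v hv
    rw [Units.val_mul, ← Matrix.mulVec_mulVec, hh v hv, hg v hv]
  inv_mem' := by
    intro g hg v hv
    calc (↑g⁻¹ : Matrix (Fin n) (Fin n) F) *ᵥ v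
        = (↑g⁻¹ : Matrix (Fin n) (Fin n) F) *ᵥ ((↑g : Matrix (Fin n) (Fin n) F) *ᵥ v) := by
          rw [hg v hv]
      _ = ((↑g⁻¹ * ↑g : Matrix (Fin n) (Fin n) F)) *ᵥ v := Matrix.mulVec_mulVec ..
      _ = v := by rw [← Units.val_mul, inv_mul_cancel, Units.val_one, Matrix.one_mulVec]

/-- `ρ` has a nonzero vector fixed by the subgroup `H`. -/
def HasFixedVec {G : Type} [Group G] {V : Type} [AddCommGroup V] [Module ℂ V]
    (ρ : Representation ℂ G V) (H : Subgroup G) : Prop :=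
  ∃ v : V, v ≠ 0 ∧ ∀ h ∈ H, ρ h v = v

/-- `ρ` has a nonzero eigenvector for the subgroup `H`: a nonzero `v` with
`ρ(h) v = c(h) • v` for all `h ∈ H`, for some character `c` of `H`. -/
def HasEigenVec {G : Type} [Group G] {V : Type} [AddCommGroup V] [Module ℂ V]
    (ρ : Representation ℂ G V) (H : Subgroup G) : Prop :=
  ∃ c : H →* ℂ, ∃ v : V, v ≠ 0 ∧ ∀ h : H, ρ (h : G) v = c h • v

/-- The subspace `E_m ⊆ F^n` of vectors supported in the first `m`
coordinates. -/
def Esub (n m : ℕ) : Submodule F (Fin n → F) where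
  carrier := {v | ∀ i : Fin n, m ≤ (i : ℕ) → v i = 0}
  add_mem' := by
    intro a b ha hb i hi
    simp [ha i hi, hb i hi]
  zero_mem' := by intro i hi; rfl
  smul_mem' := by
    intro c v hv i hi
    simp [hv i hi]

/-- The stabilizer in `GL_n(F)` of a subspace `E ⊆ F^n`. -/
def stabE {n : ℕ} (E : Submodule F (Fin n → F)) : Subgroup (GL (Fin n) F) where
  carrier := {g | ∀ v ∈ E, (↑g : Matrix (Fin n) (Fin n) F) *ᵥ v ∈ E}
  one_mem' := by intro v hv; simpa using hv
  mul_mem' := by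
    intro g h hg hh v hv
    rw [Units.val_mul, ← Matrix.mulVec_mulVec]
    exact hg _ (hh v hv)
  inv_mem' := by
    intro g hg v hv
    let e : (Fin n → F) ≃ₗ[F] (Fin n → F) :=
      LinearEquiv.ofLinear
        (Matrix.mulVecLin (↑g : Matrix (Fin n) (Fin n) F))
        (Matrix.mulVecLin (↑g⁻¹ : Matrix (Fin n) (Fin n) F))
        (by rw [← Matrix.mulVecLin_mul, ← Units.val_mul, mul_inv_cancel, Units.val_one,
              Matrix.mulVecLin_one])
        (by rw [← Matrix.mulVecLin_mul, ← Units.val_mul, inv_mul_cancel, Units.val_one,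
              Matrix.mulVecLin_one])
    have ecoe : (e : (Fin n → F) →ₗ[F] (Fin n → F))
        = Matrix.mulVecLin (↑g : Matrix (Fin n) (Fin n) F) := rfl
    have hmap : Submodule.map
        (Matrix.mulVecLin (↑g : Matrix (Fin n) (Fin n) F)) E = E := by
      apply Submodule.eq_of_le_of_finrank_le
      · rintro x ⟨u, hu, rfl⟩
        simpa using hg u hu
      · rw [← ecoe, LinearEquiv.finrank_map_eq]
    have hv' : v ∈ Submodule.map
        (Matrix.mulVecLin (↑g : Matrix (Fin n) (Fin n) F)) E := by
      rw [hmap]; exact hv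
    rcases hv' with ⟨u, hu, heq⟩
    rw [Matrix.mulVecLin_apply] at heq
    have hgu : (↑g⁻¹ : Matrix (Fin n) (Fin n) F) *ᵥ v = u := by
      rw [← heq, Matrix.mulVec_mulVec, ← Units.val_mul, inv_mul_cancel, Units.val_one,
        Matrix.one_mulVec]
    rw [hgu]; exact hu

/-- Partial sums of the parts of a partition: `psum l d j = d_0 + ⋯ + d_{j-1}`. -/
def psum (l : ℕ) (d : Fin l → ℕ) (j : ℕ) : ℕ :=
  ∑ i ∈ Finset.univ.filter (fun i : Fin l => (i : ℕ) < j), d i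

/-- The block upper-triangular parabolic subgroup `P_D` of `GL_n(F)` attached
to the partition `D = (d_0 ≥ d_1 ≥ ⋯)`: the simultaneous stabilizer of the
subspaces spanned by the first `d_0 + ⋯ + d_{j-1}` coordinates. -/
def parab (n l : ℕ) (d : Fin l → ℕ) : Subgroup (GL (Fin n) F) :=
  ⨅ j : ℕ, stabE (Esub n (psum l d j))

/-- The space of right-`P`-invariant functions on `GL_n(F)`: the space of the
permutation representation `I_P = Ind_P^{GL_n} 1` on functions on
`GL_n(F)/P`. -/
noncomputable def cosetSpace {n : ℕ} (P : Subgroup (GL (Fin n) F)) :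
    Submodule ℂ (GL (Fin n) F → ℂ) where
  carrier := {f | ∀ g : GL (Fin n) F, ∀ p ∈ P, f (g * p) = f g}
  add_mem' := by
    intro a b ha hb g p hp
    simp [ha g p hp, hb g p hp]
  zero_mem' := by intro g p hp; rfl
  smul_mem' := by
    intro c f hf g p hp
    simp [hf g p hp]

/-- The representation `I_P = Ind_P^{GL_n} 1` of `GL_n(F)` on functions on
`GL_n(F)/P`, by left translation. -/
noncomputable def indTriv {n : ℕ} (P : Subgroup (GL (Fin n) F)) :
    Representation ℂ (GL (Fin n) F) ↥(cosetSpace P) where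
  toFun g₀ :=
    { toFun := fun f => ⟨fun g => (f : GL (Fin n) F → ℂ) (g₀⁻¹ * g), by
        intro g p hp
        show (f : GL (Fin n) F → ℂ) (g₀⁻¹ * (g * p)) = _
        rw [← mul_assoc]
        exact f.2 _ p hp⟩
      map_add' := fun f g => Subtype.ext (funext fun x => rfl)
      map_smul' := fun c f => Subtype.ext (funext fun x => rfl) }
  map_one' := by
    refine LinearMap.ext fun f => Subtype.ext (funext fun g => ?_)
    show (f : GL (Fin n) F → ℂ) (1⁻¹ * g) = (f : GL (Fin n) F → ℂ) g
    rw [inv_one, one_mul]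
  map_mul' := by
    intro a b
    refine LinearMap.ext fun f => Subtype.ext (funext fun g => ?_)
    show (f : GL (Fin n) F → ℂ) ((a * b)⁻¹ * g)
        = (f : GL (Fin n) F → ℂ) (b⁻¹ * (a⁻¹ * g))
    rw [_root_.mul_inv_rev, mul_assoc]

/-- The space `Hom_G(ν, σ)` of intertwining operators from `ν` to `σ`;
its dimension is the multiplicity of the irreducible `ν` in `σ`. -/
noncomputable def interSub {H : Type} [Group H] {Vν M : Type} [AddCommGroup Vν] [Module ℂ Vν]
    [AddCommGroup M] [Module ℂ M]
    (ν : Representation ℂ H Vν) (σ : Representation ℂ H M) :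
    Submodule ℂ (Vν →ₗ[ℂ] M) where
  carrier := {φ | ∀ h v, φ (ν h v) = σ h (φ v)}
  add_mem' := by
    intro φ ψ hφ hψ h v
    simp [LinearMap.add_apply, hφ h v, hψ h v]
  zero_mem' := by intro h v; simp
  smul_mem' := by
    intro c φ hφ h v
    simp [LinearMap.smul_apply, hφ h v]

/-- Irreducibility of a representation. -/
def IsIrred {G : Type} [Group G] {V : Type} [AddCommGroup V] [Module ℂ V]
    (ρ : Representation ℂ G V) : Prop :=
  (∃ v : V, v ≠ 0) ∧
    ∀ p : Submodule ℂ V, (∀ g : G, ∀ v ∈ p, ρ g v ∈ p) → p = ⊥ ∨ p = ⊤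

/-!
Frobenius reciprocity turns occurrence in `I_D` into the existence of a `P_D`-fixed vector. By the
Bruhat decomposition the double cosets of `P_D` and `P_E` correspond to nonnegative integer matrices
with margins `D` and `E`, so the inner product of the characters of `I_D` and `I_E` is the
coefficient of `x^D` in the product `h_E` of complete homogeneous polynomials. The characters of
the `I_D` thus pair like the `h_D`; in particular the character of `I_D` does not depend on the
order of the parts, and the virtual character `s_D` obtained from the Jacobi–Trudi determinant has
norm one. All its terms but `I_D` are indexed by compositions strictly dominating `D`, so `ν` pairs
with `s_D` as it does with `I_D`, that is, at least to `1`. Hence `‖ν - s_D‖² ≤ 1 + 1 - 2 = 0`, and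
`ν` has character `s_D`. Pieri's rule then shows that `ν` has no `P_E`-fixed vector when some part
of `E` exceeds `d_1`.

For the fixed vector, put the part `d_1` last: `H_{n - d_1}` lies in the resulting parabolic.
Conversely let `v` be an `H_j`-eigenvector with `j < n - d_1`, and let `f` be a functional invariant
under the Borel subgroup `B`. Irreducibility and the Bruhat decomposition allow us to assume
`f (σ v) ≠ 0` for a permutation `σ` which is increasing on the first `j` indices. The eigencharacter
is then trivial on `H_j ∩ σ⁻¹ B σ`, hence trivial, and averaging `v` over the parabolic of block
sizes `(1, …, 1, n - j)`, which is `H_j` times its intersection with `σ⁻¹ B σ`, gives a nonzero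
fixed vector. This is impossible because `n - j > d_1`.
-/

section ClassFunctions

variable {G : Type*} [Group G]

/-- The character of the permutation representation on `G ⧸ P`. -/
noncomputable def permChar (P : Subgroup G) (g : G) : ℂ :=
  Nat.card (MulAction.fixedBy (G ⧸ P) g)

theorem permChar_inv (P : Subgroup G) (g : G) : permChar P g⁻¹ = permChar P g := by
  rw [permChar, MulAction.fixedBy_inv, permChar]

theorem permChar_inv_eq_conj (P : Subgroup G) (g : G) :
    permChar P g⁻¹ = starRingEnd ℂ (permChar P g) := by
  rw [permChar_inv, permChar, map_natCast]

theorem permChar_conj (P : Subgroup G) (g h : G) : permChar P (h * g * h⁻¹) = permChar P g := by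
  rw [permChar, permChar, ← MulAction.smul_fixedBy, Nat.cast_inj]
  exact Nat.card_image_of_injective (MulAction.injective h) _

theorem mem_fixedBy_quotient_iff (P : Subgroup G) (g x : G) :
    (x : G ⧸ P) ∈ MulAction.fixedBy (G ⧸ P) g ↔ x⁻¹ * g * x ∈ P := by
  rw [MulAction.mem_fixedBy, MulAction.Quotient.smul_coe, eq_comm, QuotientGroup.eq, smul_eq_mul,
    mul_assoc]

variable [Fintype G]

/-- The bilinear form `(φ, ψ) ↦ |G|⁻¹ ∑ φ(g) ψ(g⁻¹)` on functions on a finite group. On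
characters it is the usual inner product, since there `ψ(g⁻¹)` is the conjugate of `ψ(g)`. -/
noncomputable def charPairing : LinearMap.BilinForm ℂ (G → ℂ) :=
  LinearMap.mk₂ ℂ (fun φ ψ => (Nat.card G : ℂ)⁻¹ * ∑ g, φ g * ψ g⁻¹)
    (fun φ φ' ψ => by simp [add_mul, Finset.sum_add_distrib, mul_add])
    (fun c φ ψ => by simp [Finset.mul_sum, mul_assoc, mul_left_comm])
    (fun φ ψ ψ' => by simp [mul_add, Finset.sum_add_distrib])
    (fun c φ ψ => by simp [Finset.mul_sum, mul_left_comm])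

theorem charPairing_apply (φ ψ : G → ℂ) :
    charPairing φ ψ = (Nat.card G : ℂ)⁻¹ * ∑ g, φ g * ψ g⁻¹ :=
  rfl

theorem charPairing_comm (φ ψ : G → ℂ) : charPairing φ ψ = charPairing ψ φ := by
  rw [charPairing_apply, charPairing_apply, ← Equiv.sum_comp (Equiv.inv G)]
  simp [mul_comm]

theorem charPairing_self_of_inv_eq_conj {φ : G → ℂ} (hφ : ∀ g, φ g⁻¹ = starRingEnd ℂ (φ g)) :
    charPairing φ φ = ((Nat.card G : ℝ)⁻¹ * ∑ g, Complex.normSq (φ g) : ℝ) := by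
  simp [charPairing_apply, hφ, Complex.mul_conj]

theorem eq_zero_of_charPairing_self_re_nonpos {φ : G → ℂ}
    (hφ : ∀ g, φ g⁻¹ = starRingEnd ℂ (φ g)) (h : (charPairing φ φ).re ≤ 0) : φ = 0 := by
  rw [charPairing_self_of_inv_eq_conj hφ, Complex.ofReal_re] at h
  have hcard : (0 : ℝ) < (Nat.card G : ℝ)⁻¹ := inv_pos.2 (Nat.cast_pos.2 Nat.card_pos)
  have hnonneg : ∀ g ∈ Finset.univ, 0 ≤ Complex.normSq (φ g) := fun g _ => Complex.normSq_nonneg _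
  have hsum : ∑ g, Complex.normSq (φ g) = 0 :=
    le_antisymm (nonpos_of_mul_nonpos_right h hcard) (Finset.sum_nonneg hnonneg)
  funext g
  simpa using (Finset.sum_eq_zero_iff_of_nonneg hnonneg).1 hsum g (Finset.mem_univ g)

theorem eq_of_charPairing_le {φ ψ : G → ℂ} (hφ : ∀ g, φ g⁻¹ = starRingEnd ℂ (φ g))
    (hψ : ∀ g, ψ g⁻¹ = starRingEnd ℂ (ψ g))
    (h : (charPairing φ φ).re + (charPairing ψ ψ).re ≤ 2 * (charPairing φ ψ).re) : φ = ψ := by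
  refine sub_eq_zero.1 (eq_zero_of_charPairing_self_re_nonpos (fun g => by simp [hφ, hψ]) ?_)
  simp only [map_sub, LinearMap.sub_apply, charPairing_comm ψ φ, Complex.sub_re]
  linarith

open scoped Classical in
theorem sum_fixing_coset_eq {φ : G → ℂ} (hφ : ∀ g h, φ (h * g * h⁻¹) = φ g) (P : Subgroup G)
    [Fintype P] (c : G ⧸ P) : ∑ g with c ∈ MulAction.fixedBy (G ⧸ P) g, φ g = ∑ p : P, φ p := by
  obtain ⟨x, rfl⟩ := QuotientGroup.mk_surjective c
  refine (Finset.sum_bij' (fun (p : P) _ => x * p * x⁻¹)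
    (fun g hg => ⟨x⁻¹ * g * x, (mem_fixedBy_quotient_iff P g x).1 (Finset.mem_filter.1 hg).2⟩)
    (by simp [mul_assoc]) (by simp) (by simp [mul_assoc]) (by simp [mul_assoc]) ?_).symm
  exact fun p _ => (hφ p x).symm

theorem charPairing_permChar {φ : G → ℂ} (hφ : ∀ g h, φ (h * g * h⁻¹) = φ g) (P : Subgroup G)
    [Fintype P] : charPairing φ (permChar P) = (Nat.card P : ℂ)⁻¹ * ∑ p : P, φ p := by
  classical
  have hcard : (Nat.card G : ℂ) = Nat.card (G ⧸ P) * Nat.card P := by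
    exact_mod_cast P.card_eq_card_quotient_mul_card_subgroup
  have hquot : (Nat.card (G ⧸ P) : ℂ) ≠ 0 := by simp
  have hP : (Nat.card P : ℂ) ≠ 0 := by simp
  have hswap : ∑ g, φ g * permChar P g⁻¹ = Nat.card (G ⧸ P) * ∑ p : P, φ p := by
    calc ∑ g, φ g * permChar P g⁻¹
        = ∑ g, ∑ c : G ⧸ P, if c ∈ MulAction.fixedBy (G ⧸ P) g then φ g else 0 := by
          refine Finset.sum_congr rfl fun g _ => ?_
          rw [permChar_inv, permChar, Finset.sum_ite, Finset.sum_const_zero, add_zero,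
            Finset.sum_const, nsmul_eq_mul, mul_comm, Nat.card_eq_fintype_card,
            Fintype.card_ofFinset]
      _ = ∑ c : G ⧸ P, ∑ g with c ∈ MulAction.fixedBy (G ⧸ P) g, φ g := by
          rw [Finset.sum_comm]
          simp only [Finset.sum_filter]
      _ = Nat.card (G ⧸ P) * ∑ p : P, φ p := by
          simp only [sum_fixing_coset_eq hφ]
          simp [Nat.card_eq_fintype_card]
  rw [charPairing_apply, hswap, hcard]
  field_simp

theorem charPairing_permChar_permChar (P Q : Subgroup G) :
    charPairing (permChar P) (permChar Q) = Nat.card (MulAction.orbitRel.Quotient Q (G ⧸ P)) := by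
  classical
  have hQ : (Nat.card Q : ℂ) ≠ 0 := by simp
  have hburnside :
      (∑ q : Q, permChar P q) = Nat.card (MulAction.orbitRel.Quotient Q (G ⧸ P)) * Nat.card Q := by
    have := MulAction.sum_card_fixedBy_eq_card_orbits_mul_card_group Q (G ⧸ P)
    simp only [← Nat.card_eq_fintype_card] at this
    simp only [permChar]
    exact_mod_cast this
  rw [charPairing_permChar (permChar_conj P), hburnside]
  field_simp

end ClassFunctions

section Characters

variable {G : Type} [Group G] {W : Type} [AddCommGroup W] [Module ℂ W]

theorem IsIrred.isIrreducible {ρ : Representation ℂ G W} (h : IsIrred ρ) : ρ.IsIrreducible where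
  exists_pair_ne := by
    obtain ⟨w, hw⟩ := h.1
    refine ⟨⊥, ⊤, fun hbot => hw ?_⟩
    have hmem : w ∈ (⊤ : Subrepresentation ρ).toSubmodule := Submodule.mem_top
    rwa [← hbot] at hmem
  eq_bot_or_eq_top p :=
    (h.2 p.toSubmodule fun g _ hw => p.apply_mem_toSubmodule g hw).imp
      (fun hp => Subrepresentation.toSubmodule_injective hp)
      (fun hp => Subrepresentation.toSubmodule_injective hp)

theorem IsIrred.exists_functional_apply_ne_zero {ρ : Representation ℂ G W} (h : IsIrred ρ)
    {f : W →ₗ[ℂ] ℂ} (hf : f ≠ 0) {w : W} (hw : w ≠ 0) : ∃ g, f (ρ g w) ≠ 0 := by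
  by_contra! hzero
  have hspan := h.2 (Submodule.span ℂ (Set.range fun g => ρ g w)) fun g u hu => by
    refine Submodule.span_induction ?_ (by simp) (fun a b _ _ ha hb => ?_) (fun c a _ ha => ?_) hu
    · rintro _ ⟨k, rfl⟩
      exact Submodule.subset_span ⟨g * k, by simp⟩
    · rw [map_add]; exact add_mem ha hb
    · rw [map_smul]; exact Submodule.smul_mem _ c ha
  rcases hspan with hbot | htop
  · have hmem : w ∈ Submodule.span ℂ (Set.range fun g => ρ g w) :=
      Submodule.subset_span ⟨1, by simp⟩
    rw [hbot] at hmem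
    exact hw hmem
  · refine hf (LinearMap.ext_on htop ?_)
    rintro _ ⟨g, rfl⟩
    exact hzero g

theorem hasFixedVec_iff_invariants_ne_bot (ρ : Representation ℂ G W) (P : Subgroup G) :
    HasFixedVec ρ P ↔ Representation.invariants (ρ.comp P.subtype) ≠ ⊥ := by
  simp [Submodule.ne_bot_iff, HasFixedVec, Representation.mem_invariants, and_comm]

theorem HasFixedVec.mono {ρ : Representation ℂ G W} {P Q : Subgroup G} (h : HasFixedVec ρ Q)
    (hPQ : P ≤ Q) : HasFixedVec ρ P :=
  let ⟨w, hw, hfix⟩ := h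
  ⟨w, hw, fun p hp => hfix p (hPQ hp)⟩

theorem hasFixedVec_of_functional_eq [Finite G] {ρ : Representation ℂ G W} {P : Subgroup G}
    {f : W →ₗ[ℂ] ℂ} {w : W} (hw : f w ≠ 0) (h : ∀ p ∈ P, f (ρ p w) = f w) : HasFixedVec ρ P := by
  have := Fintype.ofFinite P
  refine ⟨∑ p : P, ρ p w, fun hzero => ?_, fun p hp => ?_⟩
  · have hf := congrArg f hzero
    rw [map_sum, map_zero, Finset.sum_congr rfl fun (p : P) _ => h p p.2] at hf
    simp [hw] at hf
  · rw [map_sum, ← Equiv.sum_comp (Equiv.mulLeft (⟨p, hp⟩ : P)) fun q : P => ρ q w]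
    simp

theorem apply_eq_of_conj_mem {ρ : Representation ℂ G W} {P : Subgroup G} {f : W →ₗ[ℂ] ℂ}
    (hinv : ∀ p ∈ P, ∀ w, f (ρ p w) = f w) {g x : G} (hx : g * x * g⁻¹ ∈ P) (w : W) :
    f (ρ g (ρ x w)) = f (ρ g w) := by
  rw [← hinv _ hx (ρ g w)]
  simp only [← Module.End.mul_apply, ← map_mul, inv_mul_cancel_right]

section UnitaryTrick

variable {ι : Type*} [Fintype ι] [DecidableEq ι] (M : G →* Matrix ι ι ℂ)

open scoped ComplexOrder in
theorem posDef_sum_conjTranspose_mul_self [Fintype G] : (∑ x, (M x)ᴴ * M x).PosDef := by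
  classical
  rw [← Finset.add_sum_erase _ _ (Finset.mem_univ (1 : G)), map_one]
  exact Matrix.PosDef.add_posSemidef (by simpa using Matrix.PosDef.one)
    (Matrix.posSemidef_sum _ fun x _ => Matrix.posSemidef_conjTranspose_mul_self _)

theorem conjTranspose_mul_sum_eq_sum_mul_map_inv [Fintype G] (g : G) :
    (M g)ᴴ * ∑ x, (M x)ᴴ * M x = (∑ x, (M x)ᴴ * M x) * M g⁻¹ := by
  rw [Finset.mul_sum, Finset.sum_mul, ← Equiv.sum_comp (Equiv.mulRight g) fun x =>
    (M x)ᴴ * M x * M g⁻¹]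
  refine Finset.sum_congr rfl fun x _ => ?_
  rw [Equiv.coe_mulRight, mul_assoc _ (M (x * g)), ← map_mul, mul_inv_cancel_right, map_mul,
    Matrix.conjTranspose_mul, mul_assoc]

open scoped ComplexOrder in
theorem trace_map_inv_eq_conj [Finite G] (g : G) : (M g⁻¹).trace = starRingEnd ℂ (M g).trace := by
  have := Fintype.ofFinite G
  obtain ⟨S, hS⟩ := (posDef_sum_conjTranspose_mul_self M).isUnit
  have hconj := conjTranspose_mul_sum_eq_sum_mul_map_inv M g
  rw [← hS] at hconj
  calc (M g⁻¹).trace = (S⁻¹.val * (S.val * M g⁻¹)).trace := by rw [Units.inv_mul_cancel_left]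
    _ = ((M g)ᴴ).trace := by
      rw [← hconj, Matrix.trace_mul_comm, mul_assoc, Units.mul_inv, mul_one]
    _ = starRingEnd ℂ (M g).trace := Matrix.trace_conjTranspose _

end UnitaryTrick

variable [FiniteDimensional ℂ W] (ρ : Representation ℂ G W)

theorem character_inv_eq_conj [Finite G] (g : G) :
    ρ.character g⁻¹ = starRingEnd ℂ (ρ.character g) := by
  classical
  let b := Module.finBasis ℂ W
  have htrace : ∀ x, ρ.character x = (LinearMap.toMatrixAlgEquiv b (ρ x)).trace := fun x =>
    LinearMap.trace_eq_matrix_trace ℂ b _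
  rw [htrace, htrace]
  exact trace_map_inv_eq_conj ((LinearMap.toMatrixAlgEquiv b).toMonoidHom.comp ρ) g

variable [Fintype G]

theorem charPairing_character_permChar (P : Subgroup G) :
    charPairing ρ.character (permChar P) =
      Module.finrank ℂ (Representation.invariants (ρ.comp P.subtype)) := by
  have := Fintype.ofFinite P
  have : Invertible (Nat.card P : ℂ) := invertibleOfNonzero (by simp)
  rw [charPairing_permChar ρ.char_conj]
  exact Representation.card_inv_mul_sum_char_eq_finrank (ρ.comp P.subtype)

theorem charPairing_character_permChar_eq_zero_iff (P : Subgroup G) :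
    charPairing ρ.character (permChar P) = 0 ↔ ¬ HasFixedVec ρ P := by
  rw [charPairing_character_permChar, hasFixedVec_iff_invariants_ne_bot, not_not, Nat.cast_eq_zero,
    Submodule.finrank_eq_zero]

theorem one_le_re_charPairing_character_permChar {P : Subgroup G} (h : HasFixedVec ρ P) :
    1 ≤ (charPairing ρ.character (permChar P)).re := by
  have hne := mt (charPairing_character_permChar_eq_zero_iff ρ P).1 (not_not.2 h)
  rw [charPairing_character_permChar, Nat.cast_eq_zero] at hne
  rw [charPairing_character_permChar, Complex.natCast_re]
  exact_mod_cast Nat.one_le_iff_ne_zero.2 hne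

theorem IsIrred.charPairing_character_self {ρ : Representation ℂ G W} (h : IsIrred ρ) :
    charPairing ρ.character ρ.character = 1 := by
  have := h.isIrreducible
  have : Invertible (Nat.card G : ℂ) := invertibleOfNonzero (by simp)
  exact (Representation.char_orthonormal ρ ρ).trans (if_pos ⟨Representation.Equiv.refl ρ⟩)

end Characters

section Frobenius

variable {K : Type} [Field K] {n : ℕ} {W : Type} [AddCommGroup W] [Module ℂ W]
variable {ρ : Representation ℂ (GL (Fin n) K) W} {P : Subgroup (GL (Fin n) K)}

/-- The intertwiner `w ↦ (g ↦ f (g⁻¹ w))` into functions on `GL_n ⧸ P` that corresponds to a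
`P`-invariant functional `f` under Frobenius reciprocity. -/
noncomputable def intertwinerOfFunctional (f : W →ₗ[ℂ] ℂ) (hf : ∀ p ∈ P, ∀ w, f (ρ p w) = f w) :
    W →ₗ[ℂ] cosetSpace P where
  toFun w := ⟨fun g => f (ρ g⁻¹ w), fun g p hp => by
    change f (ρ (g * p)⁻¹ w) = f (ρ g⁻¹ w)
    rw [_root_.mul_inv_rev, map_mul]
    exact hf _ (inv_mem hp) _⟩
  map_add' _ _ := Subtype.ext (funext fun _ => by simp)
  map_smul' _ _ := Subtype.ext (funext fun _ => by simp)

theorem intertwinerOfFunctional_mem_interSub (f : W →ₗ[ℂ] ℂ)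
    (hf : ∀ p ∈ P, ∀ w, f (ρ p w) = f w) :
    intertwinerOfFunctional f hf ∈ interSub ρ (indTriv P) := fun g w =>
  Subtype.ext <| funext fun x => by
    change f (ρ x⁻¹ (ρ g w)) = f (ρ (g⁻¹ * x)⁻¹ w)
    rw [_root_.mul_inv_rev, inv_inv, map_mul, Module.End.mul_apply]

theorem exists_invariant_functional {φ : W →ₗ[ℂ] cosetSpace P}
    (hφ : φ ∈ interSub ρ (indTriv P)) (hne : φ ≠ 0) :
    ∃ f : W →ₗ[ℂ] ℂ, f ≠ 0 ∧ ∀ p ∈ P, ∀ w, f (ρ p w) = f w := by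
  let f : W →ₗ[ℂ] ℂ := LinearMap.proj 1 ∘ₗ (cosetSpace P).subtype ∘ₗ φ
  have hf : ∀ g w, f (ρ g w) = (φ w : GL (Fin n) K → ℂ) g⁻¹ := fun g w => by
    change (φ (ρ g w) : GL (Fin n) K → ℂ) 1 = _
    rw [hφ g w]
    exact congrArg (φ w : GL (Fin n) K → ℂ) (mul_one g⁻¹)
  refine ⟨f, fun hzero => hne ?_, fun p hp w => ?_⟩
  · refine LinearMap.ext fun w => Subtype.ext (funext fun g => ?_)
    rw [← inv_inv g, ← hf, hzero]
    rfl
  · rw [hf, ← one_mul p⁻¹]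
    exact (φ w).2 1 p⁻¹ (inv_mem hp)

theorem hasFixedVec_of_interSub [Finite K] {φ : W →ₗ[ℂ] cosetSpace P}
    (hφ : φ ∈ interSub ρ (indTriv P)) (hne : φ ≠ 0) : HasFixedVec ρ P := by
  obtain ⟨f, hf, hinv⟩ := exists_invariant_functional hφ hne
  obtain ⟨w, hw⟩ := DFunLike.ne_iff.1 hf
  exact hasFixedVec_of_functional_eq hw fun p hp => hinv p hp w

theorem not_hasFixedVec_of_interSub_eq_bot [Finite K] (h : interSub ρ (indTriv P) = ⊥) :
    ¬ HasFixedVec ρ P := by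
  rintro ⟨w, hw, hfix⟩
  have := Fintype.ofFinite P
  obtain ⟨e, he⟩ : ∃ e : W →ₗ[ℂ] ℂ, e w ≠ 0 := by
    by_contra! hzero
    exact hw ((Module.forall_dual_apply_eq_zero_iff ℂ w).1 hzero)
  let f : W →ₗ[ℂ] ℂ := ∑ p : P, e ∘ₗ ρ p
  have hf : ∀ p ∈ P, ∀ u, f (ρ p u) = f u := fun p hp u => by
    simp only [f, LinearMap.sum_apply, LinearMap.comp_apply]
    rw [← Equiv.sum_comp (Equiv.mulRight (⟨p, hp⟩ : P)) fun q : P => e (ρ q u)]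
    simp
  have hmem := intertwinerOfFunctional_mem_interSub f hf
  rw [h, Submodule.mem_bot] at hmem
  have hfw : f (ρ 1⁻¹ w) = 0 := congrArg (fun φ => (φ w : GL (Fin n) K → ℂ) 1) hmem
  simp [f, hfix, he] at hfw

end Frobenius

section JacobiTrudi

open MvPolynomial

open Finsupp (equivFunOnFinite)

theorem hsymm_eq_sum_monomial (σ R : Type*) [Fintype σ] [DecidableEq σ] [CommSemiring R] (n : ℕ) :
    hsymm σ R n = ∑ β ∈ Finset.finsuppAntidiag Finset.univ n, monomial β 1 := by
  refine Finset.sum_bij (fun s _ => Multiset.toFinsupp s.1) (fun s _ => ?_) (fun s _ t _ h => ?_)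
    (fun β hβ => ⟨⟨Finsupp.toMultiset β, ?_⟩, Finset.mem_univ _, by simp⟩) fun s _ => ?_
  · rw [Finset.mem_finsuppAntidiag]
    exact ⟨(Finsupp.sum_fintype _ _ fun _ => rfl).symm.trans
      ((Multiset.toFinsupp_sum_eq _).trans s.2), Finset.subset_univ _⟩
  · exact Subtype.ext (Multiset.toFinsupp.injective h)
  · simpa [Finsupp.card_toMultiset, Finsupp.sum_fintype] using hβ
  · rw [monomial_eq, map_one, one_mul, Finset.prod_multiset_map_count, Finsupp.prod,
      Multiset.toFinsupp_support]
    rfl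

theorem mk_pow_mul_one_sub_C_mul_X {A : Type*} [CommRing A] (x : A) :
    PowerSeries.mk (fun m => x ^ m) * (1 - PowerSeries.C x * PowerSeries.X) = 1 := by
  have h := congrArg (PowerSeries.rescale x) (PowerSeries.mk_one_mul_one_sub_eq_one A)
  simpa [PowerSeries.rescale_mk] using h

theorem coeff_coe_mul_eq_sum {A : Type*} [CommRing A] {p : Polynomial A} {l : ℕ}
    (hp : p.natDegree < l) (f : PowerSeries A) (m : ℕ) :
    PowerSeries.coeff m ((p : PowerSeries A) * f) =
      ∑ j : Fin l, (if (j : ℕ) ≤ m then PowerSeries.coeff (m - j) f else 0) * p.coeff j := by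
  have hsum : (p : PowerSeries A) =
      ∑ j : Fin l, PowerSeries.C (p.coeff j) * PowerSeries.X ^ (j : ℕ) := by
    conv_lhs => rw [p.as_sum_range_C_mul_X_pow' hp]
    rw [← Polynomial.coeToPowerSeries.ringHom_apply, map_sum, ← Fin.sum_univ_eq_sum_range]
    simp
  rw [hsum, Finset.sum_mul, map_sum]
  refine Finset.sum_congr rfl fun j _ => ?_
  rw [mul_assoc, PowerSeries.coeff_C_mul, PowerSeries.coeff_X_pow_mul', mul_comm]

theorem mk_hsymm_eq_prod (σ R : Type*) [Fintype σ] [DecidableEq σ] [CommRing R] :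
    PowerSeries.mk (hsymm σ R) = ∏ i, PowerSeries.mk fun m => (X i : MvPolynomial σ R) ^ m := by
  ext n : 1
  rw [PowerSeries.coeff_mk, PowerSeries.coeff_prod, hsymm_eq_sum_monomial]
  refine Finset.sum_congr rfl fun β _ => ?_
  simp [monomial_eq, Finsupp.prod_fintype]

variable {l : ℕ} {R : Type*} [CommRing R]

/-- The polynomial `∏_{i ≠ k} (1 - x_i t)` in `t`, whose coefficients are the signed elementary
symmetric polynomials in all variables but `x_k`. -/
noncomputable def elemPolyErase (R : Type*) [CommRing R] (k : Fin l) :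
    Polynomial (MvPolynomial (Fin l) R) :=
  ∏ i ∈ Finset.univ.erase k, (1 - Polynomial.C (X i) * Polynomial.X)

theorem elemPolyErase_mul_mk_hsymm (k : Fin l) :
    (elemPolyErase R k : PowerSeries (MvPolynomial (Fin l) R)) * PowerSeries.mk (hsymm (Fin l) R) =
      PowerSeries.mk fun m => X k ^ m := by
  have hcoe : (elemPolyErase R k : PowerSeries (MvPolynomial (Fin l) R)) =
      ∏ i ∈ Finset.univ.erase k, (1 - PowerSeries.C (X i) * PowerSeries.X) := by
    rw [elemPolyErase, ← Polynomial.coeToPowerSeries.ringHom_apply, map_prod]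
    simp
  rw [mk_hsymm_eq_prod, ← Finset.mul_prod_erase _ _ (Finset.mem_univ k), hcoe, mul_left_comm,
    ← Finset.prod_mul_distrib, Finset.prod_eq_one, mul_one]
  intro i _
  rw [mul_comm, mk_pow_mul_one_sub_C_mul_X]

theorem natDegree_elemPolyErase_lt (k : Fin l) : (elemPolyErase R k).natDegree < l := by
  have hfactor : ∀ i ∈ Finset.univ.erase k,
      (1 - Polynomial.C (X i : MvPolynomial (Fin l) R) * Polynomial.X).natDegree ≤ 1 := by
    intro i _
    compute_degree
  calc (elemPolyErase R k).natDegree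
      ≤ ∑ i ∈ Finset.univ.erase k, _ := Polynomial.natDegree_prod_le _ _
    _ ≤ ∑ i ∈ Finset.univ.erase k, 1 := Finset.sum_le_sum hfactor
    _ < l := by simpa using k.pos

/-- The alternant matrix `(x_k ^ μ_i)`. -/
noncomputable def alternant (R : Type*) [CommRing R] (μ : Fin l → ℕ) :
    Matrix (Fin l) (Fin l) (MvPolynomial (Fin l) R) :=
  .of fun i k => X k ^ μ i

/-- The staircase `(l-1, …, 1, 0)`. -/
def staircase (l : ℕ) (i : Fin l) : ℕ := i.rev

/-- The Jacobi–Trudi matrix `(h_{μ_i - (l-1-j)})`, where `h` is zero in negative degree. The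
rows are indexed by the shifted partition `μ = d + (l-1, …, 1, 0)`. -/
noncomputable def jacobiTrudi (R : Type*) [CommRing R] (μ : Fin l → ℕ) :
    Matrix (Fin l) (Fin l) (MvPolynomial (Fin l) R) :=
  .of fun i j => if staircase l j ≤ μ i then hsymm (Fin l) R (μ i - staircase l j) else 0

theorem staircase_le_staircase {i j : Fin l} : staircase l i ≤ staircase l j ↔ j ≤ i := by
  rw [staircase, staircase, Fin.val_fin_le, Fin.rev_le_rev]

theorem alternant_eq_jacobiTrudi_mul (μ : Fin l → ℕ) :
    alternant R μ = jacobiTrudi R μ * .of fun j k => (elemPolyErase R k).coeff (staircase l j) := by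
  refine Matrix.ext fun i k => ?_
  have h := congrArg (PowerSeries.coeff (μ i)) (elemPolyErase_mul_mk_hsymm (R := R) k)
  rw [coeff_coe_mul_eq_sum (natDegree_elemPolyErase_lt k), PowerSeries.coeff_mk,
    ← Equiv.sum_comp Fin.revPerm] at h
  simpa [alternant, Matrix.mul_apply, jacobiTrudi, staircase] using h.symm

theorem det_jacobiTrudi_update_staircase {i₀ : Fin l} (hi₀ : ∀ i, i₀ ≤ i) (a : ℕ) :
    (jacobiTrudi R (Function.update (staircase l) i₀ (staircase l i₀ + a))).det =
      hsymm (Fin l) R a := by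
  rw [Matrix.det_of_isUpperTriangular, Finset.prod_eq_single i₀]
  · simp [jacobiTrudi]
  · intro i _ hi
    simp [jacobiTrudi, hi]
  · simp
  · intro i j (hij : j < i)
    have hi : i ≠ i₀ := fun h => (hi₀ j).not_gt (h ▸ hij)
    rw [jacobiTrudi, Matrix.of_apply, Function.update_of_ne hi,
      if_neg (mt staircase_le_staircase.1 (not_le.2 hij))]

theorem det_alternant (μ : Fin l → ℕ) :
    (alternant R μ).det = (jacobiTrudi R μ).det * (alternant R (staircase l)).det := by
  have hstaircase : (jacobiTrudi R (staircase l)).det = 1 := by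
    rcases l with - | l
    · exact Matrix.det_isEmpty
    · simpa using det_jacobiTrudi_update_staircase (R := R) Fin.zero_le 0
  rw [alternant_eq_jacobiTrudi_mul μ, alternant_eq_jacobiTrudi_mul (staircase l), Matrix.det_mul,
    Matrix.det_mul, hstaircase, one_mul]

theorem det_alternant_eq_sum_monomial (μ : Fin l → ℕ) :
    (alternant R μ).det =
      ∑ w : Equiv.Perm (Fin l),
        monomial (equivFunOnFinite.symm (μ ∘ w)) (Equiv.Perm.sign w : R) := by
  rw [Matrix.det_apply']
  refine Finset.sum_congr rfl fun w _ => ?_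
  rw [monomial_eq]
  simp [alternant, Finsupp.prod_fintype]

theorem coeff_det_alternant_self {μ : Fin l → ℕ} (hμ : Function.Injective μ) :
    coeff (equivFunOnFinite.symm μ) (alternant R μ).det = 1 := by
  rw [det_alternant_eq_sum_monomial, coeff_sum, Finset.sum_eq_single 1]
  · simp
  · intro w _ hw
    rw [coeff_monomial, if_neg]
    intro h
    refine hw (Equiv.ext fun i => hμ ?_)
    simpa using DFunLike.congr_fun h i
  · simp

theorem coeff_det_alternant_mul_eq_zero {μ γ : Fin l → ℕ} {i₀ : Fin l} (h : ∀ i, μ i < γ i₀)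
    (p : MvPolynomial (Fin l) R) :
    coeff (equivFunOnFinite.symm μ) ((alternant R γ).det * p) = 0 := by
  rw [det_alternant_eq_sum_monomial, Finset.sum_mul, coeff_sum]
  refine Finset.sum_eq_zero fun w _ => ?_
  rw [coeff_monomial_mul', if_neg]
  intro hle
  have hγ : γ (w (w.symm i₀)) ≤ μ (w.symm i₀) := hle (w.symm i₀)
  rw [Equiv.apply_symm_apply] at hγ
  exact hγ.not_gt (h _)

theorem coeff_det_alternant_staircase_mul_hsymm_eq_zero {d : Fin l → ℕ} (hd : Antitone d)
    {i₀ : Fin l} (hi₀ : ∀ i, i₀ ≤ i) {a : ℕ} (ha : d i₀ < a) (p : MvPolynomial (Fin l) R) :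
    coeff (equivFunOnFinite.symm (d + staircase l))
      ((alternant R (staircase l)).det * (hsymm (Fin l) R a * p)) = 0 := by
  rw [← mul_assoc, mul_comm _ (hsymm _ _ _), ← det_jacobiTrudi_update_staircase hi₀ a,
    ← det_alternant]
  refine coeff_det_alternant_mul_eq_zero (i₀ := i₀) (fun i => ?_) p
  have hdi : d i ≤ d i₀ := hd (hi₀ i)
  have hi : staircase l i ≤ staircase l i₀ := staircase_le_staircase.2 (hi₀ i)
  simp only [Pi.add_apply, Function.update_self]
  omega

end JacobiTrudi

section BlockTriangular

variable {ι : Type*} [Fintype ι] [DecidableEq ι] {α : Type*} [LinearOrder α]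
variable {K : Type*} [Field K]

/-- The parabolic subgroup of `GL` of the matrices that are block triangular with respect to the
labelling `ε` of the coordinates by their blocks; for `ε = id` this is the Borel subgroup. -/
def blockTriangularGL (K : Type*) [Field K] (ε : ι → α) : Subgroup (GL ι K) where
  carrier := {g | g.val.BlockTriangular ε}
  one_mem' := Matrix.blockTriangular_one
  mul_mem' := Matrix.BlockTriangular.mul
  inv_mem' {g} hg := by
    have := g.invertible
    rw [Set.mem_ofPred_eq, Matrix.coe_units_inv]
    exact Matrix.blockTriangular_inv_of_blockTriangular hg

/-- Permutation matrices, as elements of `GL`; `permGL K σ` maps the basis vector `e_y` to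
`e_{σ y}`. -/
def permGL (K : Type*) [Field K] : Equiv.Perm ι →* GL ι K :=
  (Matrix.permMatrixHom (n := ι) (R := K)).toHomUnits

theorem permGL_mul_apply (σ : Equiv.Perm ι) (M : Matrix ι ι K) (x y : ι) :
    ((permGL K σ).val * M) x y = M (σ.symm x) y :=
  congrFun₂ (PEquiv.toMatrix_toPEquiv_mul σ⁻¹ M) x y

theorem mul_permGL_apply (σ : Equiv.Perm ι) (M : Matrix ι ι K) (x y : ι) :
    (M * (permGL K σ).val) x y = M x (σ y) :=
  congrFun₂ (PEquiv.mul_toMatrix_toPEquiv M σ⁻¹) x y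

theorem permGL_apply (σ : Equiv.Perm ι) (x y : ι) :
    (permGL K σ).val x y = if x = σ y then 1 else 0 := by
  rw [← one_mul (permGL K σ).val, mul_permGL_apply, Matrix.one_apply]

theorem permGL_mem_blockTriangularGL {ε : ι → α} {σ : Equiv.Perm ι} (h : ∀ x, ε (σ x) = ε x) :
    permGL K σ ∈ blockTriangularGL K ε := by
  rintro x y hxy
  rw [permGL_apply, if_neg]
  rintro rfl
  exact hxy.ne (h y).symm

end BlockTriangular

section Bruhat

variable {ι : Type*} [LinearOrder ι] {K : Type*} [Field K]

/-- The last nonzero coordinate of the vector `u` is the one with index `s`. -/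
def LeadsAt (u : ι → K) (s : ι) : Prop :=
  u s ≠ 0 ∧ ∀ y, s < y → u y = 0

theorem LeadsAt.exists_smul_sub_lt {u u' : ι → K} {s : ι} (hu : LeadsAt u s)
    (hu' : LeadsAt u' s) : ∃ c : K, ∀ t, LeadsAt (u' - c • u) t → t < s := by
  refine ⟨u' s / u s, fun t ht => lt_of_not_ge fun hst => ht.1 ?_⟩
  rcases hst.eq_or_lt with rfl | hlt
  · simp [div_mul_cancel₀ _ hu.1]
  · simp [hu.2 t hlt, hu'.2 t hlt]

theorem exists_leadsAt [Finite ι] {u : ι → K} (hu : u ≠ 0) : ∃ s, LeadsAt u s := by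
  obtain ⟨s, hs, hmax⟩ := (Set.toFinite {x | u x ≠ 0}).exists_maximal (Function.ne_iff.1 hu)
  exact ⟨s, hs, fun y hy => by_contra fun h => (hmax h hy.le).not_gt hy⟩

variable [Fintype ι]

theorem blockTriangularGL_id_le {α : Type*} [LinearOrder α] {ε : ι → α} (hε : Monotone ε) :
    blockTriangularGL K (id : ι → ι) ≤ blockTriangularGL K ε :=
  fun _ hg _ _ hxy => hg (hε.reflect_lt hxy)

theorem mulVec_ne_zero (g : GL ι K) {v : ι → K} (hv : v ≠ 0) : g.val *ᵥ v ≠ 0 := fun h =>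
  hv (mulVec_injective_of_isUnit g.isUnit (h.trans (mulVec_zero _).symm))

theorem exists_minimal_leadsAt_mulVec (g : GL ι K) (i : ι) :
    ∃ (v : ι → K) (s : ι), (v i = 1 ∧ ∀ x, i < x → v x = 0) ∧ LeadsAt (g.val *ᵥ v) s ∧
      ∀ (w : ι → K) (t : ι), (w i = 1 ∧ ∀ x, i < x → w x = 0) → LeadsAt (g.val *ᵥ w) t → s ≤ t := by
  let S : Set ι := {s | ∃ v : ι → K, (v i = 1 ∧ ∀ x, i < x → v x = 0) ∧ LeadsAt (g.val *ᵥ v) s}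
  have hS : S.Nonempty := by
    obtain ⟨s, hs⟩ := exists_leadsAt (mulVec_ne_zero g (Pi.single_ne_zero_iff.2 one_ne_zero))
    exact ⟨s, Pi.single i 1, ⟨by simp, fun x hx => Pi.single_eq_of_ne hx.ne' _⟩, hs⟩
  obtain ⟨s, ⟨v, hv, hlead⟩, hmin⟩ := S.toFinite.exists_minimal hS
  exact ⟨v, s, hv, hlead, fun w t hw ht => le_of_not_gt fun hts =>
    (hmin ⟨w, hw, ht⟩ hts.le).not_gt hts⟩

-- In each column the last nonzero entry of `g⁻¹ * b` is pushed up as far as a unitriangular `b`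
-- allows; two columns ending in the same row could be improved, so the ends form a permutation.
theorem exists_bruhat_decomposition (g : GL ι K) :
    ∃ b₁ ∈ blockTriangularGL K (id : ι → ι), ∃ σ : Equiv.Perm ι,
      ∃ b₂ ∈ blockTriangularGL K (id : ι → ι), g = b₁ * permGL K σ * b₂ := by
  choose v s hv hlead hmin using exists_minimal_leadsAt_mulVec g⁻¹
  have hs : Function.Injective s := by
    refine .of_lt_imp_ne fun i j hij hsij => ?_
    obtain ⟨c, hc⟩ := (hlead i).exists_smul_sub_lt (hsij ▸ hlead j)
    rw [← mulVec_smul, ← mulVec_sub] at hc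
    have hmonic : (v j - c • v i) j = 1 ∧ ∀ x, j < x → (v j - c • v i) x = 0 :=
      ⟨by simp [hv j, (hv i).2 j hij],
        fun x hx => by simp [(hv j).2 x hx, (hv i).2 x (hij.trans hx)]⟩
    have hne : v j - c • v i ≠ 0 := fun h =>
      zero_ne_one ((congrFun h j).symm.trans hmonic.1)
    obtain ⟨t, ht⟩ := exists_leadsAt (mulVec_ne_zero g⁻¹ hne)
    exact (hmin j _ t hmonic ht).not_gt (hsij ▸ hc t ht)
  let σ : Equiv.Perm ι := .ofBijective s (Finite.injective_iff_bijective.1 hs)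
  let M : Matrix ι ι K := .of fun x i => v i x
  have hM : M.IsUpperTriangular := fun x i hxi => (hv i).2 x hxi
  have hdet : M.det ≠ 0 := by
    rw [det_of_isUpperTriangular hM]
    exact Finset.prod_ne_zero_iff.2 fun i _ => (hv i).1.trans_ne one_ne_zero
  let b : GL ι K := .mkOfDetNeZero M hdet
  have hb : g⁻¹ * b * permGL K σ⁻¹ ∈ blockTriangularGL K (id : ι → ι) := by
    intro x y hxy
    rw [Units.val_mul, mul_permGL_apply, Units.val_mul]
    refine (hlead (σ⁻¹ y)).2 x ?_
    have : s (σ⁻¹ y) = y := σ.apply_symm_apply y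
    rwa [this]
  exact ⟨b, hM, σ⁻¹, _, inv_mem hb, by group⟩

end Bruhat

section DoubleCosets

variable {ι : Type*} [Fintype ι] {α β : Type*}

theorem exists_equiv_comp_eq {κ γ : Type*} [Fintype κ] [DecidableEq γ] {f : ι → γ} {g : κ → γ}
    (h : ∀ c, Fintype.card {x // f x = c} = Fintype.card {x // g x = c}) :
    ∃ e : ι ≃ κ, ∀ x, g (e x) = f x :=
  ⟨.ofFiberEquiv fun c => Fintype.equivOfCardEq (h c), Equiv.ofFiberEquiv_map _⟩

theorem card_subtype_eq_sum_card_and {γ : Type*} [Fintype γ] [DecidableEq γ] (p : ι → Prop)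
    [DecidablePred p] (f : ι → γ) :
    Fintype.card {x // p x} = ∑ c, Fintype.card {x // p x ∧ f x = c} := by
  simp only [Fintype.card_subtype, ← Finset.filter_filter]
  exact Finset.card_eq_sum_card_fiberwise fun _ _ => Finset.mem_coe.2 (Finset.mem_univ _)

theorem card_eq_of_surjective {X Y Z : Type*} {f : X → Y} {g : X → Z}
    (hf : Function.Surjective f) (hg : Function.Surjective g)
    (h : ∀ x x', f x = f x' ↔ g x = g x') : Nat.card Y = Nat.card Z :=
  Nat.card_congr <| (Setoid.quotientKerEquivOfSurjective f hf).symm.trans <|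
    (Quotient.congrRight h).trans (Setoid.quotientKerEquivOfSurjective g hg)

/-- The sizes of the blocks of a labelling `ε`, as the exponent of a monomial in variables indexed
by the blocks. -/
noncomputable def blockSizes [Fintype α] [DecidableEq α] (ε : ι → α) : α →₀ ℕ :=
  Finsupp.equivFunOnFinite.symm fun i => Fintype.card {x // ε x = i}

/-- The numbers of coordinates in each block of `ε` which `σ` moves into each block of `η`. They
classify the double cosets of the block triangular subgroups of `η` and `ε`. -/
noncomputable def transferCounts [Fintype α] [DecidableEq α] [DecidableEq β] (ε : ι → α)
    (η : ι → β) (σ : Equiv.Perm ι) (k : β) : α →₀ ℕ :=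
  Finsupp.equivFunOnFinite.symm fun i => Fintype.card {y // ε y = i ∧ η (σ y) = k}

theorem sum_transferCounts [Fintype α] [DecidableEq α] [Fintype β] [DecidableEq β] (ε : ι → α)
    (η : ι → β) (σ : Equiv.Perm ι) : ∑ k, transferCounts ε η σ k = blockSizes ε := by
  ext i
  rw [Finsupp.finsetSum_apply]
  exact (card_subtype_eq_sum_card_and (ε · = i) fun y => η (σ y)).symm

theorem sum_transferCounts_apply [Fintype α] [DecidableEq α] [DecidableEq β] (ε : ι → α)
    (η : ι → β) (σ : Equiv.Perm ι) (k : β) :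
    ∑ i, transferCounts ε η σ k i = Fintype.card {x // η x = k} := by
  rw [← Fintype.card_congr (σ.subtypeEquiv (p := fun y => η (σ y) = k) fun _ => Iff.rfl)]
  rw [card_subtype_eq_sum_card_and _ ε]
  simp only [transferCounts, Finsupp.equivFunOnFinite_symm_apply_apply, and_comm]

theorem exists_transferCounts_eq [Fintype α] [DecidableEq α] [Fintype β] [DecidableEq β] {ε : ι → α}
    {η : ι → β} {N : β → α →₀ ℕ} (hε : ∑ k, N k = blockSizes ε)
    (hη : ∀ k, ∑ i, N k i = Fintype.card {x // η x = k}) :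
    ∃ σ : Equiv.Perm ι, transferCounts ε η σ = N := by
  let X := (p : α × β) × Fin (N p.2 p.1)
  have hX (i k) : Fintype.card {t : X // t.1.1 = i ∧ t.1.2 = k} = N k i := by
    rw [Fintype.card_congr ((Equiv.subtypeEquivRight fun t : X =>
      (Prod.ext_iff (y := (i, k))).symm).trans (Equiv.sigmaSubtype (i, k))), Fintype.card_fin]
  obtain ⟨e, he⟩ : ∃ e : ι ≃ X, ∀ y, (e y).1.1 = ε y := by
    refine exists_equiv_comp_eq (g := fun t : X => t.1.1) fun i => ?_
    rw [card_subtype_eq_sum_card_and (fun t : X => t.1.1 = i) fun t => t.1.2]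
    simp only [hX, ← Finsupp.finsetSum_apply, hε]
    rfl
  obtain ⟨e', he'⟩ : ∃ e : ι ≃ X, ∀ y, (e y).1.2 = η y := by
    refine exists_equiv_comp_eq (g := fun t : X => t.1.2) fun k => ?_
    rw [card_subtype_eq_sum_card_and (fun t : X => t.1.2 = k) fun t => t.1.1]
    simp only [and_comm, hX, hη]
  refine ⟨e.trans e'.symm, funext fun k => Finsupp.ext fun i => ?_⟩
  rw [← hX]
  refine Fintype.card_congr (e.subtypeEquiv fun y => ?_)
  simp [← he, ← he']

theorem card_and_add_card_lt_add_card_le [LinearOrder α] [LinearOrder β] (ε : ι → α) (θ : ι → β)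
    (i : α) (k : β) :
    Fintype.card {y // ε y = i ∧ θ y = k} + Fintype.card {y // ε y < i ∧ k ≤ θ y} +
      Fintype.card {y // ε y ≤ i ∧ k < θ y} =
    Fintype.card {y // ε y ≤ i ∧ k ≤ θ y} + Fintype.card {y // ε y < i ∧ k < θ y} := by
  simp only [Fintype.card_subtype, Finset.card_filter, ← Finset.sum_add_distrib]
  refine Finset.sum_congr rfl fun y _ => ?_
  grind

variable [DecidableEq ι] {K : Type*} [Field K]

/-- The projection of `K ^ ι` onto the coordinates satisfying `p`. -/
def coordProj (K : Type*) [Field K] (p : ι → Prop) [DecidablePred p] : Matrix ι ι K :=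
  diagonal fun x => if p x then 1 else 0

theorem rank_coordProj_mul_permGL_mul_coordProj (p q : ι → Prop) [DecidablePred p]
    [DecidablePred q] (σ : Equiv.Perm ι) :
    (coordProj K p * (permGL K σ).val * coordProj K q).rank =
      Fintype.card {y // q y ∧ p (σ y)} := by
  classical
  have hmul : coordProj K p * (permGL K σ).val * coordProj K q =
      (permGL K σ).val * coordProj K fun y => q y ∧ p (σ y) := by
    ext x y
    simp only [coordProj, mul_diagonal, diagonal_mul, permGL_apply]
    grind
  rw [hmul, rank_mul_eq_right_of_isUnit_det _ _ ((isUnit_iff_isUnit_det _).1 (Units.isUnit _)),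
    coordProj, rank_diagonal]
  simp

theorem coordProj_mul_mul_coordProj_eq_coordProj_mul {p : ι → Prop} [DecidablePred p]
    {M : Matrix ι ι K} (h : ∀ x y, M x y ≠ 0 → p x → p y) :
    coordProj K p * M * coordProj K p = coordProj K p * M := by
  ext x y
  simp only [coordProj, mul_diagonal, diagonal_mul]
  grind

theorem coordProj_mul_mul_coordProj_eq_mul {p : ι → Prop} [DecidablePred p] {M : Matrix ι ι K}
    (h : ∀ x y, M x y ≠ 0 → p y → p x) :
    coordProj K p * M * coordProj K p = M * coordProj K p := by
  ext x y
  simp only [coordProj, mul_diagonal, diagonal_mul]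
  grind

variable [LinearOrder α] [LinearOrder β] {ε : ι → α} {η : ι → β} {σ τ : Equiv.Perm ι}
  {q p : GL ι K}

-- Both sides are ranks of corners of the two matrices, and such a rank can only drop when the
-- matrix is multiplied by block triangular ones.
theorem card_lower_upper_le (hq : q ∈ blockTriangularGL K η) (hp : p ∈ blockTriangularGL K ε)
    (h : q * permGL K σ * p = permGL K τ) {L : α → Prop} {U : β → Prop} [DecidablePred L]
    [DecidablePred U] (hL : ∀ i j, i ≤ j → L j → L i) (hU : ∀ i j, i ≤ j → U i → U j) :
    Fintype.card {y // L (ε y) ∧ U (η (τ y))} ≤ Fintype.card {y // L (ε y) ∧ U (η (σ y))} := by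
  rw [← rank_coordProj_mul_permGL_mul_coordProj (K := K) (fun x => U (η x)) (fun y => L (ε y)),
    ← rank_coordProj_mul_permGL_mul_coordProj (K := K) (fun x => U (η x)) (fun y => L (ε y))]
  set D := coordProj K fun x => U (η x)
  set E := coordProj K fun y => L (ε y)
  have hqD : D * q.val * D = D * q.val :=
    coordProj_mul_mul_coordProj_eq_coordProj_mul fun x y hxy =>
      hU _ _ (le_of_not_gt fun hlt => hxy (hq hlt))
  have hpE : E * p.val * E = p.val * E := coordProj_mul_mul_coordProj_eq_mul fun x y hxy =>
    hL _ _ (le_of_not_gt fun hlt => hxy (hp hlt))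
  calc (D * (permGL K τ).val * E).rank
      = (D * q.val * D * (permGL K σ).val * (E * p.val * E)).rank := by
        rw [hqD, hpE, ← h, Units.val_mul, Units.val_mul]
        simp only [mul_assoc]
    _ = (D * q.val * (D * (permGL K σ).val * E) * (p.val * E)).rank := by simp only [mul_assoc]
    _ ≤ (D * q.val * (D * (permGL K σ).val * E)).rank := rank_mul_le_left _ _
    _ ≤ (D * (permGL K σ).val * E).rank := rank_mul_le_right _ _

theorem card_lower_upper_eq (hq : q ∈ blockTriangularGL K η) (hp : p ∈ blockTriangularGL K ε)
    (h : q * permGL K σ * p = permGL K τ) {L : α → Prop} {U : β → Prop} [DecidablePred L]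
    [DecidablePred U] (hL : ∀ i j, i ≤ j → L j → L i) (hU : ∀ i j, i ≤ j → U i → U j) :
    Fintype.card {y // L (ε y) ∧ U (η (τ y))} = Fintype.card {y // L (ε y) ∧ U (η (σ y))} :=
  (card_lower_upper_le hq hp h hL hU).antisymm <|
    card_lower_upper_le (inv_mem hq) (inv_mem hp) (by rw [← h]; group) hL hU

theorem exists_mul_permGL_mul_eq_iff [Fintype α] :
    (∃ q ∈ blockTriangularGL K η, ∃ p ∈ blockTriangularGL K ε,
      q * permGL K σ * p = permGL K τ) ↔ transferCounts ε η τ = transferCounts ε η σ := by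
  constructor
  · rintro ⟨q, hq, p, hp, h⟩
    refine funext fun k => Finsupp.ext fun i => ?_
    have hle_ge := card_lower_upper_eq hq hp h (L := (· ≤ i)) (U := (k ≤ ·))
      (fun _ _ => le_trans) fun _ _ h₁ h₂ => h₂.trans h₁
    have hlt_ge := card_lower_upper_eq hq hp h (L := (· < i)) (U := (k ≤ ·))
      (fun _ _ => lt_of_le_of_lt) fun _ _ h₁ h₂ => h₂.trans h₁
    have hle_gt := card_lower_upper_eq hq hp h (L := (· ≤ i)) (U := (k < ·))
      (fun _ _ => le_trans) fun _ _ h₁ h₂ => h₂.trans_le h₁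
    have hlt_gt := card_lower_upper_eq hq hp h (L := (· < i)) (U := (k < ·))
      (fun _ _ => lt_of_le_of_lt) fun _ _ h₁ h₂ => h₂.trans_le h₁
    have hσ := card_and_add_card_lt_add_card_le ε (fun y => η (σ y)) i k
    have hτ := card_and_add_card_lt_add_card_le ε (fun y => η (τ y)) i k
    change Fintype.card _ = Fintype.card _
    omega
  · intro h
    obtain ⟨π, hπ⟩ : ∃ π : Equiv.Perm ι, ∀ y, (ε (π y), η (σ (π y))) = (ε y, η (τ y)) := by
      refine exists_equiv_comp_eq (g := fun y => (ε y, η (σ y))) fun ⟨i, k⟩ => ?_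
      have hik : Fintype.card {y // ε y = i ∧ η (τ y) = k} =
          Fintype.card {y // ε y = i ∧ η (σ y) = k} := DFunLike.congr_fun (congrFun h k) i
      simpa only [Prod.ext_iff] using hik
    refine ⟨permGL K (τ * π⁻¹ * σ⁻¹), permGL_mem_blockTriangularGL fun x => ?_, permGL K π,
      permGL_mem_blockTriangularGL fun y => congrArg Prod.fst (hπ y), ?_⟩
    · simpa using (congrArg Prod.snd (hπ (π⁻¹ (σ⁻¹ x)))).symm
    · simp only [← map_mul]
      group

end DoubleCosets

section GramMatrix

theorem orbitRel_quotient_mk_eq_iff {G : Type*} [Group G] {P Q : Subgroup G} {g h : G} :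
    (Quotient.mk'' (g : G ⧸ P) : MulAction.orbitRel.Quotient Q (G ⧸ P)) =
      Quotient.mk'' (h : G ⧸ P) ↔ ∃ q ∈ Q, ∃ p ∈ P, q * h * p = g := by
  rw [Quotient.eq'', MulAction.orbitRel_apply, MulAction.mem_orbit_iff]
  constructor
  · rintro ⟨⟨q, hq⟩, hqh⟩
    exact ⟨q, hq, (q * h)⁻¹ * g, QuotientGroup.eq.mp hqh, mul_inv_cancel_left _ _⟩
  · rintro ⟨q, hq, p, hp, rfl⟩
    exact ⟨⟨q, hq⟩, (QuotientGroup.mk_mul_of_mem (q * h) hp).symm⟩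

open MvPolynomial

variable {α β : Type*} [Fintype α] [Fintype β]

theorem coeff_prod_hsymm [DecidableEq α] (R : Type*) [CommSemiring R] (a : α →₀ ℕ) (b : β → ℕ) :
    coeff a (∏ k, hsymm α R (b k)) =
      Nat.card {N : β → α →₀ ℕ // ∑ k, N k = a ∧ ∀ k, ∑ i, N k i = b k} := by
  classical
  simp only [hsymm_eq_sum_monomial, Finset.prod_univ_sum, ← monomial_sum_one, coeff_sum,
    coeff_monomial, Finset.sum_boole]
  refine congrArg Nat.cast (Nat.subtype_card _ fun N => ?_).symm
  simp [Finset.mem_finsuppAntidiag, and_comm]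

variable {ι : Type*} [Fintype ι] [LinearOrder ι] [LinearOrder α] [LinearOrder β] {K : Type*}
  [Field K] {ε : ι → α} {η : ι → β}

theorem card_orbitRel_quotient_blockTriangularGL (hε : Monotone ε) (hη : Monotone η) :
    Nat.card (MulAction.orbitRel.Quotient (blockTriangularGL K η)
      (GL ι K ⧸ blockTriangularGL K ε)) =
    Nat.card {N : β → α →₀ ℕ // ∑ k, N k = blockSizes ε ∧ ∀ k, ∑ i, N k i = blockSizes η k} := by
  refine card_eq_of_surjective (X := Equiv.Perm ι)
    (f := fun σ => Quotient.mk'' (QuotientGroup.mk (permGL K σ)))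
    (g := fun σ => ⟨transferCounts ε η σ, sum_transferCounts ε η σ,
      sum_transferCounts_apply ε η σ⟩) ?_ ?_ fun σ τ => ?_
  · rintro ⟨⟨g⟩⟩
    obtain ⟨b₁, hb₁, σ, b₂, hb₂, rfl⟩ := exists_bruhat_decomposition g
    exact ⟨σ, Eq.symm <| orbitRel_quotient_mk_eq_iff.mpr
      ⟨b₁, blockTriangularGL_id_le hη hb₁, b₂, blockTriangularGL_id_le hε hb₂, rfl⟩⟩
  · rintro ⟨N, hNε, hNη⟩
    obtain ⟨σ, hσ⟩ := exists_transferCounts_eq hNε hNη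
    exact ⟨σ, Subtype.ext hσ⟩
  · rw [Subtype.mk.injEq, ← exists_mul_permGL_mul_eq_iff (K := K)]
    exact orbitRel_quotient_mk_eq_iff

theorem charPairing_permChar_blockTriangularGL [Fintype (GL ι K)] (hε : Monotone ε)
    (hη : Monotone η) :
    charPairing (permChar (blockTriangularGL K ε)) (permChar (blockTriangularGL K η)) =
      coeff (blockSizes ε) (∏ k, hsymm α ℂ (blockSizes η k)) := by
  rw [charPairing_permChar_permChar, card_orbitRel_quotient_blockTriangularGL hε hη,
    coeff_prod_hsymm]

end GramMatrix

section Parabolic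

open MvPolynomial

variable {n l m : ℕ} {a : Fin l → ℕ} {b : Fin m → ℕ}

theorem psum_zero (a : Fin l → ℕ) : psum l a 0 = 0 := by simp [psum]

theorem psum_mono (a : Fin l → ℕ) : Monotone (psum l a) := fun i j hij =>
  Finset.sum_le_sum_of_subset fun x hx => by
    simp only [Finset.mem_filter_univ] at hx ⊢
    exact hx.trans_le hij

theorem psum_of_le (a : Fin l → ℕ) {j : ℕ} (hj : l ≤ j) : psum l a j = ∑ i, a i :=
  Finset.sum_congr (Finset.filter_true_of_mem fun i _ => i.isLt.trans_le hj) fun _ _ => rfl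

theorem psum_succ (a : Fin l → ℕ) (i : Fin l) : psum l a (i + 1) = psum l a i + a i := by
  have hfilter : Finset.univ.filter (fun x : Fin l => (x : ℕ) < i + 1) =
      insert i (Finset.univ.filter fun x : Fin l => (x : ℕ) < i) := by
    ext x
    simp only [Finset.mem_filter_univ, Finset.mem_insert, Fin.ext_iff]
    omega
  rw [psum, hfilter, Finset.sum_insert (by simp), add_comm, psum]

/-- `IsBlockIndex a ε`: the map `ε` sends a coordinate to the index of its block, when the
coordinates are cut into consecutive blocks of sizes `a 0, a 1, …`. -/
def IsBlockIndex (a : Fin l → ℕ) (ε : Fin n → Fin l) : Prop :=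
  ∀ (x : Fin n) (j : ℕ), (ε x : ℕ) < j ↔ (x : ℕ) < psum l a j

theorem exists_isBlockIndex (ha : ∑ i, a i = n) : ∃ ε : Fin n → Fin l, IsBlockIndex a ε := by
  have hlt (x : Fin n) : (x : ℕ) < psum l a l := by
    rw [psum_of_le a le_rfl, ha]
    exact x.isLt
  have hex (x : Fin n) : ∃ j, (x : ℕ) < psum l a (j + 1) :=
    ⟨l, (hlt x).trans_le (psum_mono a l.le_succ)⟩
  have hfind (x : Fin n) (j : ℕ) : Nat.find (hex x) < j ↔ (x : ℕ) < psum l a j := by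
    rw [Nat.find_lt_iff]
    refine ⟨fun ⟨i, hij, hx⟩ => hx.trans_le (psum_mono a hij), fun hx => ?_⟩
    obtain _ | i := j
    · simp [psum_zero] at hx
    · exact ⟨i, i.lt_succ_self, hx⟩
  exact ⟨fun x => ⟨Nat.find (hex x), (hfind x l).mpr (hlt x)⟩, hfind⟩

variable {ε : Fin n → Fin l}

namespace IsBlockIndex

theorem monotone (hε : IsBlockIndex a ε) : Monotone ε := fun x y hxy =>
  Nat.lt_succ_iff.mp <| (hε x _).mpr <| lt_of_le_of_lt hxy <| (hε y _).mp (Nat.lt_succ_self _)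

theorem blockSizes_eq (hε : IsBlockIndex a ε) (ha : ∑ i, a i = n) :
    blockSizes ε = Finsupp.equivFunOnFinite.symm a := by
  have hpsum (j : ℕ) : psum l a j ≤ n :=
    ((psum_mono a (le_max_left j l)).trans_eq (psum_of_le a (le_max_right j l))).trans_eq ha
  have hcard (j : ℕ) : Finset.card {x | (ε x : ℕ) < j} = psum l a j := by
    simp only [hε _ j, Fin.card_filter_val_lt, min_eq_right (hpsum j)]
  ext i
  have hunion : Finset.univ.filter (fun x => (ε x : ℕ) < i + 1) =
      Finset.univ.filter (fun x => (ε x : ℕ) < i) ∪ Finset.univ.filter (ε · = i) := by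
    ext x
    simp only [Finset.mem_filter_univ, Finset.mem_union, Fin.ext_iff]
    omega
  have hdisjoint : Disjoint (Finset.univ.filter fun x => (ε x : ℕ) < i)
      (Finset.univ.filter (ε · = i)) :=
    Finset.disjoint_filter.mpr fun x _ hx hxi => by simp [hxi] at hx
  have hadd := Finset.card_union_of_disjoint hdisjoint
  rw [← hunion, hcard, hcard, psum_succ, add_right_inj, ← Fintype.card_subtype] at hadd
  exact hadd.symm

end IsBlockIndex

variable {K : Type} [Field K]

theorem mem_stabE_Esub {k : ℕ} {g : GL (Fin n) K} :
    g ∈ stabE (Esub n k) ↔ ∀ x y : Fin n, k ≤ x → (y : ℕ) < k → g x y = 0 := by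
  constructor
  · intro hg x y hx hy
    have hsingle : Pi.single y 1 ∈ Esub (F := K) n k := fun i hi =>
      Pi.single_eq_of_ne (Fin.ne_of_val_ne (by omega)) 1
    simpa using hg _ hsingle x hx
  · intro hg v hv x hx
    change ∑ y, g x y * v y = 0
    refine Finset.sum_eq_zero fun y _ => ?_
    obtain hy | hy := lt_or_ge (y : ℕ) k
    · exact mul_eq_zero_of_left (hg x y hx hy) _
    · exact mul_eq_zero_of_right _ (hv y hy)

theorem mem_parab {g : GL (Fin n) K} :
    g ∈ parab n l a ↔ ∀ j, ∀ x y : Fin n, psum l a j ≤ x → (y : ℕ) < psum l a j → g x y = 0 := by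
  simp only [parab, Subgroup.mem_iInf, mem_stabE_Esub]

theorem IsBlockIndex.parab_eq (hε : IsBlockIndex a ε) :
    (parab n l a : Subgroup (GL (Fin n) K)) = blockTriangularGL K ε := by
  ext g
  simp only [mem_parab, ← hε _ _, ← not_lt]
  refine ⟨fun hg x y hxy => hg (ε y + 1) x y (not_lt.mpr hxy) (by simp), ?_⟩
  intro hg j x y hx hy
  exact hg (Fin.lt_def.mpr (hy.trans_le (not_lt.mp hx)))

theorem parab_eq_of_psum_eq (h : ∀ j, psum l a j = psum m b j) :
    (parab n l a : Subgroup (GL (Fin n) K)) = parab n m b := by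
  simp only [parab, h]

theorem charPairing_permChar_parab [Fintype (GL (Fin n) K)] (ha : ∑ i, a i = n)
    (hb : ∑ j, b j = n) :
    charPairing (permChar (parab n l a : Subgroup (GL (Fin n) K))) (permChar (parab n m b)) =
      coeff (Finsupp.equivFunOnFinite.symm a) (∏ j, hsymm (Fin l) ℂ (b j)) := by
  obtain ⟨ε, hε⟩ := exists_isBlockIndex ha
  obtain ⟨η, hη⟩ := exists_isBlockIndex hb
  rw [hε.parab_eq, hη.parab_eq, charPairing_permChar_blockTriangularGL hε.monotone hη.monotone,
    hε.blockSizes_eq ha, hη.blockSizes_eq hb]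
  rfl

theorem permChar_parab_comp_perm [Finite K] (ha : ∑ i, a i = n)
    (σ : Equiv.Perm (Fin l)) :
    permChar (parab n l (a ∘ σ) : Subgroup (GL (Fin n) K)) = permChar (parab n l a) := by
  have := Fintype.ofFinite (GL (Fin n) K)
  have haσ : ∑ i, (a ∘ σ) i = n := (Equiv.sum_comp σ a).trans ha
  have hpair (c : Fin l → ℕ) (hc : ∑ i, c i = n) :
      charPairing (permChar (parab n l c : Subgroup (GL (Fin n) K)))
        (permChar (parab n l (a ∘ σ))) =
      charPairing (permChar (parab n l c : Subgroup (GL (Fin n) K))) (permChar (parab n l a)) := by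
    rw [charPairing_permChar_parab hc haσ, charPairing_permChar_parab hc ha]
    exact congrArg _ (Equiv.prod_comp σ fun j => hsymm (Fin l) ℂ (a j))
  refine eq_of_charPairing_le (permChar_inv_eq_conj _) (permChar_inv_eq_conj _) (le_of_eq ?_)
  rw [hpair _ haσ, charPairing_comm, hpair _ ha]
  ring

end Parabolic

section ShiftedParts

variable {l m : ℕ} {d : Fin l → ℕ} {w : Equiv.Perm (Fin l)}

/-- The permutations indexing the terms of the Jacobi–Trudi expansion of `d` that contain no
`h` of negative degree. -/
def admissiblePerms (d : Fin l → ℕ) : Finset (Equiv.Perm (Fin l)) :=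
  {w | ∀ i, staircase l (w i) ≤ d i + staircase l i}

/-- The composition `d_i - i + w(i)` whose parts are the degrees in the `w`-th term of the
Jacobi–Trudi expansion of `d`. The subtraction truncates unless `w` is in `admissiblePerms d`. -/
def shiftedParts (d : Fin l → ℕ) (w : Equiv.Perm (Fin l)) (i : Fin l) : ℕ :=
  d i + staircase l i - staircase l (w i)

theorem mem_admissiblePerms : w ∈ admissiblePerms d ↔
    ∀ i, staircase l (w i) ≤ d i + staircase l i :=
  Finset.mem_filter_univ w

theorem one_mem_admissiblePerms (d : Fin l → ℕ) : 1 ∈ admissiblePerms d :=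
  mem_admissiblePerms.mpr fun i => Nat.le_add_left (staircase l i) (d i)

theorem shiftedParts_one (d : Fin l → ℕ) : shiftedParts d 1 = d :=
  funext fun i => Nat.add_sub_cancel (d i) (staircase l i)

theorem shiftedParts_add_staircase (hw : w ∈ admissiblePerms d) (i : Fin l) :
    shiftedParts d w i + staircase l (w i) = d i + staircase l i :=
  Nat.sub_add_cancel (mem_admissiblePerms.mp hw i)

theorem sum_shiftedParts (hw : w ∈ admissiblePerms d) : ∑ i, shiftedParts d w i = ∑ i, d i := by
  have h := Finset.sum_congr rfl fun i (_ : i ∈ Finset.univ) => shiftedParts_add_staircase hw i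
  rwa [Finset.sum_add_distrib, Finset.sum_add_distrib, Equiv.sum_comp w (staircase l),
    add_left_inj] at h

/-- The dominance order on compositions, compared through their partial sums; the two may have
different numbers of parts. -/
def StrictlyDominates (a : Fin m → ℕ) (d : Fin l → ℕ) : Prop :=
  (∀ j, psum l d j ≤ psum m a j) ∧ ∃ j, psum l d j ≠ psum m a j

theorem StrictlyDominates.of_le {m' : ℕ} {a : Fin m → ℕ} {a' : Fin m' → ℕ}
    (h : StrictlyDominates a d) (hle : ∀ j, psum m a j ≤ psum m' a' j) :
    StrictlyDominates a' d :=
  ⟨fun j => (h.1 j).trans (hle j), h.2.imp fun j hj => ((h.1 j).lt_of_ne hj |>.trans_le (hle j)).ne⟩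

theorem psum_add (a b : Fin l → ℕ) (j : ℕ) : psum l (a + b) j = psum l a j + psum l b j :=
  Finset.sum_add_distrib

theorem psum_comp_perm_le {a : Fin l → ℕ} (ha : Antitone a) (σ : Equiv.Perm (Fin l)) (j : ℕ) :
    psum l (a ∘ σ) j ≤ psum l a j := by
  have hvary : Monovary a fun i : Fin l => if (i : ℕ) < j then 1 else 0 := by
    intro x y hxy
    refine ha (Fin.le_def.mpr ?_)
    dsimp only at hxy
    split_ifs at hxy <;> omega
  simpa [psum, Finset.sum_filter] using hvary.sum_comp_perm_mul_le_sum_mul (σ := σ)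

theorem psum_shiftedParts (hw : w ∈ admissiblePerms d) (j : ℕ) :
    psum l (shiftedParts d w) j + psum l (staircase l ∘ w) j =
      psum l d j + psum l (staircase l) j := by
  rw [← psum_add, ← psum_add, show shiftedParts d w + staircase l ∘ w = d + staircase l from
    funext (shiftedParts_add_staircase hw)]

theorem strictlyDominates_shiftedParts (hw : w ∈ admissiblePerms d) (hne : w ≠ 1) :
    StrictlyDominates (shiftedParts d w) d := by
  refine ⟨fun j => ?_, ?_⟩
  · have hle := psum_comp_perm_le (fun _ _ => staircase_le_staircase.mpr) w j
    have h := psum_shiftedParts hw j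
    omega
  · by_contra! heq
    have hstair (i : Fin l) : staircase l (w i) = staircase l i := by
      have hi := psum_shiftedParts hw i
      have hi' := psum_shiftedParts hw (i + 1)
      rw [← heq] at hi hi'
      rw [psum_succ, psum_succ, psum_succ, Function.comp_apply] at hi'
      omega
    exact hne (Equiv.ext fun i => le_antisymm (staircase_le_staircase.mp (hstair i).ge)
      (staircase_le_staircase.mp (hstair i).le))

theorem exists_pos_psum_eq {a : Fin l → ℕ} (ha : Antitone a) :
    ∃ (m : ℕ) (b : Fin m → ℕ), Antitone b ∧ (∀ i, 0 < b i) ∧ ∀ j, psum m b j = psum l a j := by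
  induction l with
  | zero => exact ⟨0, a, ha, fun i => i.elim0, fun _ => rfl⟩
  | succ l ih =>
    obtain hlast | hlast := Nat.eq_zero_or_pos (a (Fin.last l))
    · obtain ⟨m, b, hb, hpos, hpsum⟩ := ih (a := a ∘ Fin.castSucc)
        (ha.comp_monotone Fin.strictMono_castSucc.monotone)
      refine ⟨m, b, hb, hpos, fun j => (hpsum j).trans ?_⟩
      simp [psum, Finset.sum_filter, Fin.sum_univ_castSucc, hlast]
    · exact ⟨l + 1, a, ha, fun i => hlast.trans_le (ha (Fin.le_last i)), fun _ => rfl⟩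

theorem exists_perm_antitone_comp (a : Fin l → ℕ) :
    ∃ σ : Equiv.Perm (Fin l), Antitone (a ∘ σ) :=
  ⟨Tuple.sort (OrderDual.toDual ∘ a), fun _ _ h => Tuple.monotone_sort (OrderDual.toDual ∘ a) h⟩

end ShiftedParts

section JacobiTrudiCharacter

open MvPolynomial

variable {n l m : ℕ} {d : Fin l → ℕ} {K : Type} [Field K]

theorem det_jacobiTrudi_eq_sum (R : Type*) [CommRing R] (d : Fin l → ℕ) :
    (jacobiTrudi R (d + staircase l)).det = ∑ w ∈ admissiblePerms d,
      (Equiv.Perm.sign w : R) • ∏ i, hsymm (Fin l) R (shiftedParts d w i) := by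
  rw [← Matrix.det_transpose, Matrix.det_apply', ← Finset.sum_subset (Finset.subset_univ _)]
  · refine Finset.sum_congr rfl fun w hw => ?_
    rw [mem_admissiblePerms] at hw
    simp [jacobiTrudi, hw, shiftedParts, smul_eq_C_mul]
  · intro w _ hw
    rw [mem_admissiblePerms] at hw
    push Not at hw
    obtain ⟨i, hi⟩ := hw
    rw [Finset.prod_eq_zero (Finset.mem_univ i), mul_zero]
    simp [jacobiTrudi, hi]

theorem coeff_det_alternant_staircase_mul (R : Type*) [CommRing R] (d : Fin l → ℕ)
    (p : MvPolynomial (Fin l) R) :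
    coeff (Finsupp.equivFunOnFinite.symm (d + staircase l))
        ((alternant R (staircase l)).det * p) =
      ∑ w ∈ admissiblePerms d,
        (Equiv.Perm.sign w : R) * coeff (Finsupp.equivFunOnFinite.symm (shiftedParts d w)) p := by
  rw [det_alternant_eq_sum_monomial, Finset.sum_mul, coeff_sum, admissiblePerms, Finset.sum_filter]
  refine Finset.sum_congr rfl fun w _ => ?_
  rw [coeff_monomial_mul']
  exact if_congr Iff.rfl (congrArg _ (congrArg (coeff · p) (Finsupp.ext fun _ => rfl))) rfl

/-- The virtual character of `GL_n` obtained from the Jacobi–Trudi determinant of `d` by replacing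
each product of complete homogeneous polynomials by the corresponding permutation character on
flags. -/
noncomputable def jacobiTrudiChar (n : ℕ) (K : Type) [Field K] (d : Fin l → ℕ) : GL (Fin n) K → ℂ :=
  ∑ w ∈ admissiblePerms d,
    (Equiv.Perm.sign w : ℂ) • permChar (parab n l (shiftedParts d w))

theorem jacobiTrudiChar_inv_eq_conj (d : Fin l → ℕ) (g : GL (Fin n) K) :
    jacobiTrudiChar n K d g⁻¹ = starRingEnd ℂ (jacobiTrudiChar n K d g) := by
  simp [jacobiTrudiChar, permChar_inv_eq_conj]

variable [Fintype (GL (Fin n) K)]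

theorem charPairing_jacobiTrudiChar_permChar {b : Fin m → ℕ} (hd : ∑ i, d i = n)
    (hb : ∑ j, b j = n) :
    charPairing (jacobiTrudiChar n K d) (permChar (parab n m b)) =
      coeff (Finsupp.equivFunOnFinite.symm (d + staircase l))
        ((alternant ℂ (staircase l)).det * ∏ j, hsymm (Fin l) ℂ (b j)) := by
  rw [coeff_det_alternant_staircase_mul, jacobiTrudiChar, map_sum, LinearMap.sum_apply]
  refine Finset.sum_congr rfl fun w hw => ?_
  rw [map_smul, LinearMap.smul_apply, smul_eq_mul,
    charPairing_permChar_parab ((sum_shiftedParts hw).trans hd) hb]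

theorem charPairing_jacobiTrudiChar_self (hmono : Antitone d) (hd : ∑ i, d i = n) :
    charPairing (jacobiTrudiChar n K d) (jacobiTrudiChar n K d) = 1 := by
  have hinj : Function.Injective (d + staircase l) := .of_lt_imp_ne fun i j hij => by
    have hdij := hmono hij.le
    have hstair := mt staircase_le_staircase.mp (not_le.mpr hij)
    simp only [Pi.add_apply]
    omega
  calc charPairing (jacobiTrudiChar n K d) (jacobiTrudiChar n K d)
      = ∑ w ∈ admissiblePerms d, (Equiv.Perm.sign w : ℂ) *
          charPairing (jacobiTrudiChar n K d) (permChar (parab n l (shiftedParts d w))) := by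
        conv_lhs => enter [2]; rw [jacobiTrudiChar]
        simp only [map_sum, map_smul, smul_eq_mul]
    _ = coeff (Finsupp.equivFunOnFinite.symm (d + staircase l))
          ((alternant ℂ (staircase l)).det * (jacobiTrudi ℂ (d + staircase l)).det) := by
        rw [det_jacobiTrudi_eq_sum, Finset.mul_sum, coeff_sum]
        refine Finset.sum_congr rfl fun w hw => ?_
        rw [charPairing_jacobiTrudiChar_permChar hd ((sum_shiftedParts hw).trans hd),
          mul_smul_comm, coeff_smul, smul_eq_mul]
    _ = 1 := by rw [mul_comm, ← det_alternant, coeff_det_alternant_self hinj]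

theorem charPairing_jacobiTrudiChar_permChar_eq_zero {b : Fin m → ℕ} (hmono : Antitone d)
    (hd : ∑ i, d i = n) (hb : ∑ j, b j = n) {i₀ : Fin l} (hi₀ : ∀ i, i₀ ≤ i) {j : Fin m}
    (hj : d i₀ < b j) :
    charPairing (jacobiTrudiChar n K d) (permChar (parab n m b)) = 0 := by
  rw [charPairing_jacobiTrudiChar_permChar hd hb, ← Finset.mul_prod_erase _ _ (Finset.mem_univ j),
    coeff_det_alternant_staircase_mul_hsymm_eq_zero hmono hi₀ hj]

end JacobiTrudiCharacter

section ConstituentCharacter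

variable {n l m : ℕ} {d : Fin l → ℕ} {K : Type} [Field K] [Finite K]
variable {W : Type} [AddCommGroup W] [Module ℂ W] [FiniteDimensional ℂ W]
  {ν : Representation ℂ (GL (Fin n) K) W}

theorem character_eq_jacobiTrudiChar (hmono : Antitone d) (hd : ∑ i, d i = n) (hν : IsIrred ν)
    (hfix : HasFixedVec ν (parab n l d))
    (hnofix : ∀ w ∈ admissiblePerms d, w ≠ 1 → ¬ HasFixedVec ν (parab n l (shiftedParts d w))) :
    ν.character = jacobiTrudiChar n K d := by
  have := Fintype.ofFinite (GL (Fin n) K)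
  have hpair : charPairing ν.character (jacobiTrudiChar n K d) =
      charPairing ν.character (permChar (parab n l d)) := by
    rw [jacobiTrudiChar, map_sum, Finset.sum_eq_single_of_mem 1 (one_mem_admissiblePerms d)]
    · simp [shiftedParts_one]
    · intro w hw hne
      rw [map_smul, (charPairing_character_permChar_eq_zero_iff ν _).mpr (hnofix w hw hne),
        smul_zero]
  have hone := one_le_re_charPairing_character_permChar ν hfix
  refine eq_of_charPairing_le (character_inv_eq_conj ν) (jacobiTrudiChar_inv_eq_conj d) ?_
  rw [hν.charPairing_character_self, charPairing_jacobiTrudiChar_self hmono hd, hpair,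
    Complex.one_re]
  linarith

theorem not_hasFixedVec_parab_of_lt {b : Fin m → ℕ} (hmono : Antitone d) (hd : ∑ i, d i = n)
    (hchar : ν.character = jacobiTrudiChar n K d) (hb : ∑ j, b j = n) {i₀ : Fin l}
    (hi₀ : ∀ i, i₀ ≤ i) {j : Fin m} (hj : d i₀ < b j) : ¬ HasFixedVec ν (parab n m b) := by
  have := Fintype.ofFinite (GL (Fin n) K)
  rw [← charPairing_character_permChar_eq_zero_iff, hchar,
    charPairing_jacobiTrudiChar_permChar_eq_zero hmono hd hb hi₀ hj]

theorem hasFixedVec_parab_comp_perm_iff {a : Fin m → ℕ} (ha : ∑ i, a i = n)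
    (σ : Equiv.Perm (Fin m)) :
    HasFixedVec ν (parab n m (a ∘ σ)) ↔ HasFixedVec ν (parab n m a) := by
  have := Fintype.ofFinite (GL (Fin n) K)
  rw [← not_iff_not, ← charPairing_character_permChar_eq_zero_iff,
    ← charPairing_character_permChar_eq_zero_iff, permChar_parab_comp_perm ha]

theorem not_hasFixedVec_parab_of_strictlyDominates
    (hdom : ∀ (r : ℕ) (b : Fin r → ℕ), Antitone b → (∀ i, 0 < b i) → ∑ i, b i = n →
      StrictlyDominates b d → ¬ HasFixedVec ν (parab n r b))
    {a : Fin m → ℕ} (ha : ∑ i, a i = n) (had : StrictlyDominates a d) :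
    ¬ HasFixedVec ν (parab n m a) := by
  obtain ⟨σ, hσ⟩ := exists_perm_antitone_comp a
  obtain ⟨r, b, hb, hpos, hpsum⟩ := exists_pos_psum_eq hσ
  have hsum : ∑ i, b i = n := by
    rw [← psum_of_le b (le_max_left r m), hpsum, psum_of_le _ (le_max_right r m), ← ha]
    exact Equiv.sum_comp σ a
  have hle (j : ℕ) : psum m a j ≤ psum r b j := by
    rw [hpsum]
    simpa [Function.comp_assoc] using psum_comp_perm_le hσ σ⁻¹ j
  rw [← hasFixedVec_parab_comp_perm_iff ha σ, ← parab_eq_of_psum_eq hpsum]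
  exact hdom r b hb hpos hsum (had.of_le hle)

end ConstituentCharacter

section PointwiseStabilizer

variable {n j : ℕ} {K : Type} [Field K]

theorem mem_Hsub {g : GL (Fin n) K} :
    g ∈ Hsub n j ↔ ∀ x y : Fin n, (y : ℕ) < j → g x y = if x = y then 1 else 0 := by
  constructor
  · intro hg x y hy
    have hsingle := hg (Pi.single y 1) fun i hi =>
      Pi.single_eq_of_ne (Fin.ne_of_val_ne (by omega)) 1
    simpa [Pi.single_apply] using congrFun hsingle x
  · intro hg v hv
    ext x
    have hterm (y : Fin n) : g x y * v y = if x = y then v y else 0 := by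
      obtain hy | hy := lt_or_ge (y : ℕ) j
      · rw [hg x y hy, ite_mul, one_mul, zero_mul]
      · rw [hv y hy, mul_zero, ite_self]
    change ∑ y, g x y * v y = v x
    simp only [hterm, Finset.sum_ite_eq, Finset.mem_univ, if_true]

theorem conj_mem_Hsub {p h : GL (Fin n) K} (hp : p ∈ stabE (Esub n j)) (hh : h ∈ Hsub n j) :
    p⁻¹ * h * p ∈ Hsub n j := by
  intro v hv
  have hpv : h.val *ᵥ (p.val *ᵥ v) = p.val *ᵥ v := hh _ (hp v hv)
  rw [Units.val_mul, Units.val_mul, ← Matrix.mulVec_mulVec, ← Matrix.mulVec_mulVec, hpv,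
    Matrix.mulVec_mulVec, ← Units.val_mul, inv_mul_cancel, Units.val_one, Matrix.one_mulVec]

variable {l : ℕ} {a : Fin (l + 1) → ℕ}

theorem Hsub_le_parab (ha : ∑ i, a i = n) :
    (Hsub n (n - a (Fin.last l)) : Subgroup (GL (Fin n) K)) ≤ parab n (l + 1) a := by
  have htotal := psum_succ a (Fin.last l)
  rw [Fin.val_last, psum_of_le a le_rfl, ha] at htotal
  intro g hg
  refine mem_parab.mpr fun j x y hx hy => ?_
  obtain hj | hj := le_or_gt j l
  · have hle := psum_mono a hj
    rw [mem_Hsub.mp hg x y (by omega), if_neg (Fin.ne_of_val_ne (by omega))]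
  · rw [psum_of_le a hj, ha] at hx
    exact absurd x.isLt (not_lt.mpr hx)

theorem hasFixedVec_Hsub [Finite K] {W : Type} [AddCommGroup W] [Module ℂ W]
    [FiniteDimensional ℂ W] {ν : Representation ℂ (GL (Fin n) K) W} (ha : ∑ i, a i = n)
    (hfix : HasFixedVec ν (parab n (l + 1) a)) (i : Fin (l + 1)) :
    HasFixedVec ν (Hsub n (n - a i)) := by
  set σ := Equiv.swap i (Fin.last l)
  have haσ : ∑ i, (a ∘ σ) i = n := (Equiv.sum_comp σ a).trans ha
  have hle := Hsub_le_parab (K := K) haσ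
  rw [Function.comp_apply, Equiv.swap_apply_right] at hle
  exact ((hasFixedVec_parab_comp_perm_iff ha σ).mpr hfix).mono hle

end PointwiseStabilizer

section Generation

open Sum

variable {ι α β : Type*} [Fintype ι] [DecidableEq ι] [Fintype α] [DecidableEq α] [Fintype β]
  [DecidableEq β] {K : Type*} [Field K]

theorem fromBlocks_mem_of_transvection_mem {S : Submonoid (Matrix (α ⊕ β) (α ⊕ β) K)}
    (htransvection : ∀ t : TransvectionStruct (α ⊕ β) K, t.j.isLeft → t.toMatrix ∈ S)
    (hdiagonal : ∀ D : α → K, (∀ x, D x ≠ 0) → diagonal (Sum.elim D 1) ∈ S)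
    {A : Matrix α α K} (hA : A.det ≠ 0) (u : Matrix β α K) : fromBlocks A 0 u 1 ∈ S := by
  have hlevi : fromBlocks A 0 0 1 ∈ S := by
    refine diagonal_transvection_induction_of_det_ne_zero (fromBlocks · 0 0 1 ∈ S) A hA
      (fun D hD => ?_) (fun t => ?_) (fun A B _ _ hA hB => ?_)
    · rw [det_diagonal, Finset.prod_ne_zero_iff] at hD
      have hmem := hdiagonal D fun x => hD x (Finset.mem_univ x)
      rwa [← fromBlocks_diagonal, Pi.one_def, diagonal_one] at hmem
    · rw [← TransvectionStruct.toMatrix_sumInl]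
      exact htransvection _ rfl
    · simpa [fromBlocks_multiply] using mul_mem hA hB
  have hunipotent : fromBlocks 1 0 u 1 ∈ S := by
    refine Matrix.induction_on' (P := (fromBlocks 1 0 · 1 ∈ S)) u ?_ (fun u v hu hv => ?_)
      fun b a t => ?_
    · simp
    · simpa [fromBlocks_multiply] using mul_mem hu hv
    · have hsingle : fromBlocks 1 0 (single b a t) 1 = transvection (inr b) (inl a) t := by
        ext (x | x) (y | y) <;> simp [transvection, one_apply, single_apply]
      exact hsingle ▸ htransvection ⟨inr b, inl a, by simp, t⟩ rfl
  simpa [fromBlocks_multiply] using mul_mem hlevi hunipotent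

theorem mem_of_transvection_mem {p : ι → Prop} {S : Submonoid (Matrix ι ι K)}
    (htransvection : ∀ t : TransvectionStruct ι K, p t.j → t.toMatrix ∈ S)
    (hdiagonal : ∀ D : ι → K, (∀ x, D x ≠ 0) → (∀ x, ¬ p x → D x = 1) → diagonal D ∈ S)
    {M : Matrix ι ι K} (hdet : M.det ≠ 0) (hM : ∀ x y, ¬ p y → M x y = if x = y then 1 else 0) :
    M ∈ S := by
  classical
  set e := Equiv.sumCompl p
  set M' := M.submatrix e e with hM'
  have hblocks : M' = fromBlocks M'.toBlocks₁₁ 0 M'.toBlocks₂₁ 1 := by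
    ext (x | x) (y | y)
    · rfl
    · exact (hM _ _ y.2).trans (if_neg fun h : (x : ι) = y => y.2 (h ▸ x.2))
    · rfl
    · exact (hM _ _ y.2).trans (if_congr Subtype.ext_iff.symm rfl rfl)
  have hdet' : M'.toBlocks₁₁.det ≠ 0 := by
    rwa [← det_submatrix_equiv_self e, ← hM', hblocks, det_fromBlocks_zero₁₂, det_one,
      mul_one] at hdet
  have hmem : M' ∈ S.comap (reindexAlgEquiv K K e : _ →* _) := by
    rw [hblocks]
    refine fromBlocks_mem_of_transvection_mem (fun t ht => ?_) (fun D hD => ?_) hdet' _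
    · obtain ⟨x, hx⟩ := isLeft_iff.mp ht
      have hmem := htransvection (t.reindexEquiv e)
        (by simpa [TransvectionStruct.reindexEquiv, hx, e] using x.2)
      rwa [TransvectionStruct.toMatrix_reindexEquiv] at hmem
    · have hmem := hdiagonal (Sum.elim D 1 ∘ e.symm)
        (fun x => by cases h : e.symm x <;> simp [h, hD])
        fun x hx => by simp [e, Equiv.sumCompl_symm_apply_of_neg hx]
      rwa [← submatrix_diagonal_equiv] at hmem
  simpa [M'] using hmem

end Generation

section TrivialEigencharacter

variable {ι : Type*} [Fintype ι] {K : Type*} [Field K]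

theorem permGL_conj_apply [DecidableEq ι] (σ : Equiv.Perm ι) (g : GL ι K) (x y : ι) :
    (permGL K σ * g * (permGL K σ)⁻¹).val x y = g (σ.symm x) (σ.symm y) := by
  rw [← map_inv, Units.val_mul, mul_permGL_apply, Units.val_mul, permGL_mul_apply]
  rfl

theorem permGL_conj_mem_blockTriangularGL_id [LinearOrder ι] {σ : Equiv.Perm ι} {g : GL ι K} :
    permGL K σ * g * (permGL K σ)⁻¹ ∈ blockTriangularGL K id ↔
      ∀ x y, σ y < σ x → g x y = 0 := by
  refine ⟨fun h x y hxy => ?_, fun h x y hxy => ?_⟩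
  · simpa [permGL_conj_apply] using h (i := σ x) (j := σ y) hxy
  · rw [permGL_conj_apply]
    exact h _ _ (by simpa using hxy)

/-- Transvections, as elements of `GL`. -/
def transvectionGL [DecidableEq ι] (t : TransvectionStruct ι K) : GL ι K :=
  ⟨t.toMatrix, t.inv.toMatrix, t.mul_inv, t.inv_mul⟩

theorem transvectionGL_apply [DecidableEq ι] (t : TransvectionStruct ι K) (x y : ι) :
    (transvectionGL t).val x y = (if x = y then 1 else 0) + if t.i = x ∧ t.j = y then t.c else 0 :=
  rfl

theorem transvectionGL_commutator [DecidableEq ι] {a b c : ι} (hab : a ≠ b) (hac : a ≠ c)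
    (hcb : c ≠ b) (s : K) :
    transvectionGL ⟨a, c, hac, s⟩ * transvectionGL ⟨c, b, hcb, 1⟩ *
      (transvectionGL ⟨a, c, hac, s⟩)⁻¹ * (transvectionGL ⟨c, b, hcb, 1⟩)⁻¹ =
      transvectionGL ⟨a, b, hab, s⟩ := by
  rw [mul_inv_eq_iff_eq_mul, mul_inv_eq_iff_eq_mul]
  refine Units.ext ?_
  change transvection a c s * transvection c b 1 =
    transvection a b s * transvection c b 1 * transvection a c s
  simp only [transvection, mul_add, add_mul, one_mul, mul_one, single_mul_single_same,
    single_mul_single_of_ne _ _ _ _ hcb.symm, single_mul_single_of_ne _ _ _ _ hab.symm, add_zero]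
  abel

theorem transvectionGL_swap_conj [DecidableEq ι] {a b : ι} (hab : a ≠ b) (s : K) :
    permGL K (Equiv.swap a b) * transvectionGL ⟨a, b, hab, s⟩ * (permGL K (Equiv.swap a b))⁻¹ =
      transvectionGL ⟨b, a, hab.symm, s⟩ := by
  ext x y
  simp only [permGL_conj_apply, transvectionGL_apply, Equiv.symm_swap,
    (Equiv.swap a b).injective.eq_iff, ← Equiv.swap_apply_eq_iff, Equiv.swap_apply_left,
    Equiv.swap_apply_right]

variable {n j : ℕ} {M : Type*} [CommGroup M] {K : Type} [Field K]

theorem transvectionGL_mem_Hsub {t : TransvectionStruct (Fin n) K} (ht : j ≤ t.j) :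
    transvectionGL t ∈ Hsub n j :=
  mem_Hsub.mpr fun x y hy => by
    rw [transvectionGL_apply, add_eq_left, if_neg]
    rintro ⟨-, rfl⟩
    omega

theorem permGL_mem_Hsub {σ : Equiv.Perm (Fin n)} (hσ : ∀ x : Fin n, (x : ℕ) < j → σ x = x) :
    permGL K σ ∈ Hsub n j :=
  mem_Hsub.mpr fun x y hy => by rw [permGL_apply, hσ y hy]

theorem map_transvectionGL_comm (c : Hsub (F := K) n j →* M) {a b : Fin n} (hab : a ≠ b)
    (ha : j ≤ a) (hb : j ≤ b) (s : K) :
    c ⟨transvectionGL ⟨a, b, hab, s⟩, transvectionGL_mem_Hsub hb⟩ =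
      c ⟨transvectionGL ⟨b, a, hab.symm, s⟩, transvectionGL_mem_Hsub ha⟩ := by
  have hswap : permGL K (Equiv.swap a b) ∈ Hsub n j := permGL_mem_Hsub fun x hx =>
    Equiv.swap_apply_of_ne_of_ne (Fin.ne_of_val_ne (by omega)) (Fin.ne_of_val_ne (by omega))
  have hconj : (⟨transvectionGL ⟨b, a, hab.symm, s⟩, transvectionGL_mem_Hsub ha⟩ : Hsub n j) =
      ⟨_, hswap⟩ * ⟨transvectionGL ⟨a, b, hab, s⟩, transvectionGL_mem_Hsub hb⟩ * ⟨_, hswap⟩⁻¹ :=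
    Subtype.ext (transvectionGL_swap_conj hab s).symm
  rw [hconj, map_mul, map_mul, map_inv, mul_comm (c _), mul_inv_cancel_right]

theorem map_transvectionGL_eq_one (c : Hsub (F := K) n j →* M) {a b e : Fin n} (hab : a ≠ b)
    (hae : a ≠ e) (heb : e ≠ b) (hb : j ≤ b) (he : j ≤ e) (s : K) :
    c ⟨transvectionGL ⟨a, b, hab, s⟩, transvectionGL_mem_Hsub hb⟩ = 1 := by
  set g : Hsub (F := K) n j := ⟨transvectionGL ⟨a, e, hae, s⟩, transvectionGL_mem_Hsub he⟩
  set h : Hsub (F := K) n j := ⟨transvectionGL ⟨e, b, heb, 1⟩, transvectionGL_mem_Hsub hb⟩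
  have hcommutator : ⟨transvectionGL ⟨a, b, hab, s⟩, transvectionGL_mem_Hsub hb⟩ =
      g * h * g⁻¹ * h⁻¹ := Subtype.ext (transvectionGL_commutator hab hae heb s).symm
  rw [hcommutator, map_mul, map_mul, map_mul, map_inv, map_inv, mul_comm (c g),
    mul_inv_cancel_right, mul_inv_cancel]

theorem eq_one_of_transvection_of_diagonal {c : Hsub (F := K) n j →* M}
    (htransvection : ∀ (t : TransvectionStruct (Fin n) K) (ht : j ≤ t.j),
      c ⟨transvectionGL t, transvectionGL_mem_Hsub ht⟩ = 1)
    (hdiagonal : ∀ h : Hsub (F := K) n j, h.1.val.IsDiag → c h = 1) : c = 1 := by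
  let toMatrix : Hsub (F := K) n j →* Matrix (Fin n) (Fin n) K :=
    (Units.coeHom _).comp (Hsub n j).subtype
  have hinjective : Function.Injective toMatrix := Units.val_injective.comp Subtype.val_injective
  ext h
  suffices hh : toMatrix h ∈ (MonoidHom.mker c).map toMatrix by
    obtain ⟨h', hh', heq⟩ := hh
    exact hinjective heq ▸ hh'
  refine mem_of_transvection_mem (p := fun x : Fin n => j ≤ x) (fun t ht => ?_)
    (fun D hD hD1 => ?_) (GeneralLinearGroup.det_ne_zero h.1)
    fun x y hy => mem_Hsub.mp h.2 x y (not_le.mp hy)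
  · exact ⟨_, htransvection t ht, rfl⟩
  · have hdet : (diagonal D).det ≠ 0 := by simpa [Finset.prod_ne_zero_iff] using hD
    refine ⟨⟨GeneralLinearGroup.mkOfDetNeZero (diagonal D) hdet, mem_Hsub.mpr fun x y hy => ?_⟩,
      hdiagonal _ (isDiag_diagonal D), rfl⟩
    change diagonal D x y = _
    obtain rfl | hxy := eq_or_ne x y
    · rw [diagonal_apply_eq, if_pos rfl, hD1 x (not_le.mpr hy)]
    · rw [diagonal_apply_ne _ hxy, if_neg hxy]

theorem eq_one_of_permGL_conj_mem_blockTriangularGL_id (hj : j + 1 < n)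
    {c : Hsub (F := K) n j →* M} {σ : Equiv.Perm (Fin n)}
    (hc : ∀ h : Hsub (F := K) n j,
      permGL K σ * h * (permGL K σ)⁻¹ ∈ blockTriangularGL K id → c h = 1) : c = 1 := by
  have hupper (t : TransvectionStruct (Fin n) K) (ht : j ≤ t.j) (hσ : σ t.i < σ t.j) :
      c ⟨transvectionGL t, transvectionGL_mem_Hsub ht⟩ = 1 := by
    refine hc _ (permGL_conj_mem_blockTriangularGL_id.mpr fun x y hxy => ?_)
    rw [transvectionGL_apply, if_neg, if_neg, add_zero]
    · rintro ⟨rfl, rfl⟩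
      exact hσ.not_gt hxy
    · rintro rfl
      exact hxy.false
  refine eq_one_of_transvection_of_diagonal ?_ fun h hdiag =>
    hc h (permGL_conj_mem_blockTriangularGL_id.mpr fun x y hxy => hdiag fun heq => ?_)
  · rintro ⟨a, b, hab, s⟩ hb
    obtain ha | ha := le_or_gt j a
    · obtain hσ | hσ := lt_or_gt_of_ne (σ.injective.ne hab)
      · exact hupper ⟨a, b, hab, s⟩ hb hσ
      · rw [map_transvectionGL_comm c hab ha hb]
        exact hupper ⟨b, a, hab.symm, s⟩ ha hσ
    · obtain ⟨e, he, heb⟩ : ∃ e : Fin n, j ≤ e ∧ e ≠ b := by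
        by_cases hbj : (b : ℕ) = j
        · exact ⟨⟨j + 1, hj⟩, j.le_succ, Fin.ne_of_val_ne (by simp [hbj])⟩
        · exact ⟨⟨j, by omega⟩, le_rfl, Fin.ne_of_val_ne (Ne.symm hbj)⟩
      exact map_transvectionGL_eq_one c hab (Fin.ne_of_val_ne (by omega)) heb hb he s
  · exact (heq ▸ hxy).false

end TrivialEigencharacter

section Eigenvector

variable {n j m : ℕ} {K : Type} [Field K]

theorem exists_perm_strictMonoOn (hj : j ≤ n) (σ : Equiv.Perm (Fin n)) :
    ∃ τ : Equiv.Perm (Fin n), (∀ x : Fin n, (x : ℕ) < j → (τ x : ℕ) < j) ∧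
      StrictMonoOn (σ * τ) {x | (x : ℕ) < j} := by
  set ρ := Tuple.sort (σ ∘ Fin.castLE hj)
  have hτ (i : Fin j) : ρ.extendDomain (Fin.castLEquiv hj) (Fin.castLE hj i) =
      Fin.castLE hj (ρ i) :=
    ρ.extendDomain_apply_image (Fin.castLEquiv hj) i
  have hmono : StrictMono (σ ∘ Fin.castLE hj ∘ ρ) :=
    (Tuple.monotone_sort (σ ∘ Fin.castLE hj)).strictMono_of_injective
      (σ.injective.comp ((Fin.castLE_injective hj).comp ρ.injective))
  refine ⟨ρ.extendDomain (Fin.castLEquiv hj), fun x hx => ?_, fun x hx y hy hxy => ?_⟩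
  · exact (congrArg Fin.val (hτ ⟨x, hx⟩)).trans_lt (ρ ⟨x, hx⟩).isLt
  · have hlt := hmono (show (⟨x, hx⟩ : Fin j) < ⟨y, hy⟩ from hxy)
    simp only [Function.comp_apply, ← hτ] at hlt
    exact hlt

theorem permGL_mem_stabE_Esub {τ : Equiv.Perm (Fin n)}
    (hτ : ∀ x : Fin n, (x : ℕ) < j → (τ x : ℕ) < j) : permGL K τ ∈ stabE (Esub n j) :=
  mem_stabE_Esub.mpr fun x y hx hy => by
    rw [permGL_apply, if_neg]
    rintro rfl
    exact (hτ y hy).not_ge hx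

theorem blockTriangularGL_id_le_stabE_Esub :
    blockTriangularGL K (id : Fin n → Fin n) ≤ stabE (Esub n j) := fun _ hg =>
  mem_stabE_Esub.mpr fun _ _ hx hy => hg (Fin.lt_def.mpr (hy.trans_le hx))

/-- The block sizes `(1, …, 1, m)`, with `j` ones. -/
def hook (j m : ℕ) : Fin (j + 1) → ℕ := Fin.snoc (fun _ : Fin j => 1) m

theorem sum_hook (j m : ℕ) : ∑ i, hook j m i = j + m := by
  simp [hook, Fin.sum_univ_castSucc]

theorem psum_hook {i : ℕ} (hi : i ≤ j) : psum (j + 1) (hook j m) i = i := by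
  induction i with
  | zero => exact psum_zero _
  | succ i ih =>
    have hsucc := psum_succ (hook j m) (Fin.castSucc ⟨i, hi⟩)
    rwa [hook, Fin.snoc_castSucc, ← hook, Fin.val_castSucc, ih (by omega)] at hsucc

theorem apply_eq_zero_of_mem_parab_hook {q : GL (Fin n) K} (hq : q ∈ parab n (j + 1) (hook j m))
    {x y : Fin n} (hxy : y < x) (hy : (y : ℕ) < j) : q x y = 0 :=
  mem_parab.mp hq (y + 1) x y ((psum_hook hy).trans_le hxy)
    ((Nat.lt_succ_self _).trans_eq (psum_hook hy).symm)

theorem exists_mem_Hsub_mul_eq {σ : Equiv.Perm (Fin n)}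
    (hσ : StrictMonoOn σ {x | (x : ℕ) < j}) {q : GL (Fin n) K}
    (hq : q ∈ parab n (j + 1) (hook j m)) :
    ∃ h ∈ Hsub n j, ∃ b, permGL K σ * b * (permGL K σ)⁻¹ ∈ blockTriangularGL K id ∧
      h * b = q := by
  let H : Matrix (Fin n) (Fin n) K := of fun x y =>
    if (y : ℕ) < j then (1 : Matrix _ _ K) x y else q x y
  let B : Matrix (Fin n) (Fin n) K := of fun x y =>
    if (y : ℕ) < j then q x y else (1 : Matrix _ _ K) x y
  have hHB : H * B = q.val := by
    ext x y
    obtain hy | hy := lt_or_ge (y : ℕ) j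
    · rw [← one_mul q.val, mul_apply, mul_apply]
      refine Finset.sum_congr rfl fun z _ => ?_
      obtain hz | hz := lt_or_ge (z : ℕ) j
      · simp [H, B, hy, hz]
      · have hzero : q z y = 0 := apply_eq_zero_of_mem_parab_hook hq (hy.trans_le hz) hy
        simp [B, hy, hzero]
    · simp [mul_apply, H, B, hy.not_gt, one_apply]
  have hdet : H.det * B.det ≠ 0 := by
    rw [← det_mul, hHB]
    exact GeneralLinearGroup.det_ne_zero q
  refine ⟨.mkOfDetNeZero H (left_ne_zero_of_mul hdet), mem_Hsub.mpr fun x y hy => if_pos hy,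
    .mkOfDetNeZero B (right_ne_zero_of_mul hdet),
    permGL_conj_mem_blockTriangularGL_id.mpr fun x y hxy => ?_, Units.ext hHB⟩
  change ite _ _ _ = _
  split_ifs with hy
  · refine apply_eq_zero_of_mem_parab_hook hq (lt_of_not_ge fun hle => ?_) hy
    exact hxy.not_ge (hσ.monotoneOn (Fin.le_def.mp hle |>.trans_lt hy) hy hle)
  · exact one_apply_ne fun heq => (heq ▸ hxy).false

variable {W : Type} [AddCommGroup W] [Module ℂ W] {ν : Representation ℂ (GL (Fin n) K) W}
  {f : W →ₗ[ℂ] ℂ} {v : W}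

theorem exists_permGL_apply_ne_zero (hν : IsIrred ν) (hf : f ≠ 0)
    (hinv : ∀ b ∈ blockTriangularGL K id, ∀ w, f (ν b w) = f w) (hv : v ≠ 0) (hj : j ≤ n) :
    ∃ p ∈ stabE (Esub n j), ∃ σ : Equiv.Perm (Fin n),
      StrictMonoOn σ {x | (x : ℕ) < j} ∧ f (ν (permGL K σ) (ν p v)) ≠ 0 := by
  obtain ⟨g, hg⟩ := hν.exists_functional_apply_ne_zero hf hv
  obtain ⟨b₁, hb₁, σ, b₂, hb₂, rfl⟩ := exists_bruhat_decomposition g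
  obtain ⟨τ, hτ, hστ⟩ := exists_perm_strictMonoOn hj σ
  refine ⟨(permGL K τ)⁻¹ * b₂, mul_mem (inv_mem (permGL_mem_stabE_Esub hτ))
    (blockTriangularGL_id_le_stabE_Esub hb₂), σ * τ, hστ, ?_⟩
  rw [mul_assoc, map_mul, Module.End.mul_apply, hinv b₁ hb₁] at hg
  rwa [← Module.End.mul_apply, ← map_mul ν, map_mul (permGL K), mul_assoc, mul_inv_cancel_left]

theorem exists_eigencharacter_apply {c : Hsub (F := K) n j →* ℂ}
    (hc : ∀ h : Hsub n j, ν h v = c h • v) {p : GL (Fin n) K} (hp : p ∈ stabE (Esub n j)) :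
    ∃ c' : Hsub (F := K) n j →* ℂˣ, ∀ h : Hsub n j, ν h (ν p v) = c' h • ν p v := by
  let conj : Hsub (F := K) n j →* Hsub n j :=
    ((MulAut.conj p⁻¹).toMonoidHom.comp (Hsub n j).subtype).codRestrict (Hsub n j) fun h => by
      simpa using conj_mem_Hsub hp h.2
  refine ⟨(c.comp conj).toHomUnits, fun h => ?_⟩
  have hconj : ν h (ν p v) = ν p (ν (conj h) v) := by
    simp only [← Module.End.mul_apply, ← map_mul]
    simp [conj, mul_assoc]
  rw [hconj, hc, map_smul]
  rfl

theorem hasFixedVec_parab_hook [Finite K] (hν : IsIrred ν) (hf : f ≠ 0)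
    (hinv : ∀ b ∈ blockTriangularGL K id, ∀ w, f (ν b w) = f w) (hj : j + 1 < n)
    (heigen : HasEigenVec ν (Hsub n j)) : HasFixedVec ν (parab n (j + 1) (hook j m)) := by
  obtain ⟨c₀, v₀, hv₀, hc₀⟩ := heigen
  obtain ⟨p, hp, σ, hσ, hne⟩ := exists_permGL_apply_ne_zero hν hf hinv hv₀ (by omega : j ≤ n)
  obtain ⟨c, hc⟩ := exists_eigencharacter_apply hc₀ hp
  set v := ν p v₀
  have hc_one : c = 1 := by
    refine eq_one_of_permGL_conj_mem_blockTriangularGL_id hj (σ := σ) fun h hh => ?_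
    have hfix := apply_eq_of_conj_mem hinv hh v
    rw [hc, Units.smul_def, map_smul, map_smul, smul_eq_mul, mul_eq_right₀ hne] at hfix
    exact Units.ext hfix
  have hHsub (h : GL (Fin n) K) (hh : h ∈ Hsub n j) : ν h v = v := by
    simpa [hc_one] using hc ⟨h, hh⟩
  refine hasFixedVec_of_functional_eq (f := f ∘ₗ ν (permGL K σ)) hne fun q hq => ?_
  obtain ⟨h, hh, b, hb, hhb⟩ := exists_mem_Hsub_mul_eq hσ (inv_mem hq)
  have hq_eq : ν q v = ν b⁻¹ v := by
    rw [← inv_inv q, ← hhb, _root_.mul_inv_rev, map_mul, Module.End.mul_apply, hHsub _ (inv_mem hh)]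
  change f (ν _ (ν q v)) = f (ν _ v)
  rw [hq_eq]
  exact apply_eq_of_conj_mem hinv (by simpa [mul_assoc] using inv_mem hb) v

end Eigenvector

section TensorRank

variable {n l j : ℕ} {d : Fin l → ℕ} {K : Type} [Field K]

theorem blockTriangularGL_id_le_parab (hd : ∑ i, d i = n) :
    blockTriangularGL K (id : Fin n → Fin n) ≤ parab n l d := by
  obtain ⟨ε, hε⟩ := exists_isBlockIndex hd
  rw [hε.parab_eq]
  exact blockTriangularGL_id_le hε.monotone

theorem pos_of_sum_pos_of_antitone (hmono : Antitone d) (hd : 0 < ∑ i, d i) {i₀ : Fin l}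
    (hi₀ : ∀ i, i₀ ≤ i) : 0 < d i₀ := by
  obtain ⟨i, -, hi⟩ := Finset.sum_pos_iff.mp hd
  exact hi.trans_le (hmono (hi₀ i))

variable [Finite K] {W : Type} [AddCommGroup W] [Module ℂ W] [FiniteDimensional ℂ W]
  {ν : Representation ℂ (GL (Fin n) K) W}

theorem not_hasEigenVec_Hsub (hmono : Antitone d) (hd : ∑ i, d i = n) (hν : IsIrred ν)
    (hchar : ν.character = jacobiTrudiChar n K d) {f : W →ₗ[ℂ] ℂ} (hf : f ≠ 0)
    (hinv : ∀ b ∈ blockTriangularGL K id, ∀ w, f (ν b w) = f w) {i₀ : Fin l}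
    (hi₀ : ∀ i, i₀ ≤ i) (hj : j < n - d i₀) : ¬ HasEigenVec ν (Hsub n j) := by
  have hpos : 0 < d i₀ := pos_of_sum_pos_of_antitone hmono (by omega) hi₀
  have hhook : ∑ i, hook j (n - j) i = n := by
    rw [sum_hook]
    omega
  have hlast : d i₀ < hook j (n - j) (Fin.last j) := by
    rw [hook, Fin.snoc_last]
    omega
  exact fun heigen => not_hasFixedVec_parab_of_lt hmono hd hchar hhook hi₀ hlast
    (hasFixedVec_parab_hook hν hf hinv (by omega) heigen)

end TensorRank

theorem sps_constituent_new_spectrum_and_tensor_rank_general {K : Type} [Field K] [Finite K]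
    {n : ℕ} (l : ℕ) (hl : 0 < l) (d : Fin l → ℕ) (hmono : Antitone d) (hsum : ∑ i, d i = n)
    {W : Type} [AddCommGroup W] [Module ℂ W] [FiniteDimensional ℂ W]
    (ν : Representation ℂ (GL (Fin n) K) W) (hν : IsIrred ν)
    (hocc : ∃ φ : W →ₗ[ℂ] cosetSpace (parab n l d),
      φ ∈ interSub ν (indTriv (parab n l d)) ∧ φ ≠ 0)
    (hdom : ∀ (l' : ℕ) (d' : Fin l' → ℕ), Antitone d' → (∀ i, 0 < d' i) → ∑ i, d' i = n →
      StrictlyDominates d' d → interSub ν (indTriv (parab n l' d')) = ⊥) :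
    HasFixedVec ν (Hsub n (n - d ⟨0, hl⟩)) ∧
      ∀ j < n - d ⟨0, hl⟩, ¬ HasEigenVec ν (Hsub n j) := by
  obtain _ | l := l
  · exact absurd hl (lt_irrefl 0)
  obtain ⟨φ, hφ, hne⟩ := hocc
  have hfix : HasFixedVec ν (parab n (l + 1) d) := hasFixedVec_of_interSub hφ hne
  have hchar : ν.character = jacobiTrudiChar n K d :=
    character_eq_jacobiTrudiChar hmono hsum hν hfix fun w hw hw1 =>
      not_hasFixedVec_parab_of_strictlyDominates
        (fun l' d' hmono' hpos' hsum' hd' =>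
          not_hasFixedVec_of_interSub_eq_bot (hdom l' d' hmono' hpos' hsum' hd'))
        ((sum_shiftedParts hw).trans hsum) (strictlyDominates_shiftedParts hw hw1)
  obtain ⟨f, hf, hinv⟩ := exists_invariant_functional hφ hne
  exact ⟨hasFixedVec_Hsub hsum hfix _, fun j hj => not_hasEigenVec_Hsub hmono hsum hν hchar hf
    (fun b hb => hinv b (blockTriangularGL_id_le_parab hsum hb)) Fin.zero_le hj⟩

/-- Scholium 10.2.1 and Proposition 10.2.3: the spherical
principal series constituent `ν = ν_D` (the multiplicity-one constituent of
`I_D` not occurring for strictly dominating partitions) belongs to the new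
`k`-spectrum and has tensor rank `k`, for `k = n − d_1`. -/
theorem sps_constituent_new_spectrum_and_tensor_rank
    {n : ℕ} (l : ℕ) (hl : 0 < l) (d : Fin l → ℕ)
    (hmono : ∀ i j : Fin l, i ≤ j → d j ≤ d i)
    (hpos : ∀ i, 0 < d i) (hsum : ∑ i, d i = n)
    {Vν : Type} [AddCommGroup Vν] [Module ℂ Vν] [FiniteDimensional ℂ Vν]
    (ν : Representation ℂ (GL (Fin n) F) Vν) (hν : IsIrred ν)
    -- ν occurs in I_D with multiplicity one: there is a nonzero intertwiner
    -- ν → I_D, unique up to scalar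
    (hocc : ∃ φ : Vν →ₗ[ℂ] ↥(cosetSpace (parab n l d)),
      φ ∈ interSub ν (indTriv (parab n l d)) ∧ φ ≠ 0)
    (hmult : ∀ φ ψ : Vν →ₗ[ℂ] ↥(cosetSpace (parab n l d)),
      φ ∈ interSub ν (indTriv (parab n l d)) →
      ψ ∈ interSub ν (indTriv (parab n l d)) → φ ≠ 0 → ∃ c : ℂ, ψ = c • φ)
    -- ν does not occur in I_{D'} for any partition D' of n strictly
    -- dominating D
    (hdom : ∀ (l' : ℕ) (d' : Fin l' → ℕ),
      (∀ i j : Fin l', i ≤ j → d' j ≤ d' i) → (∀ i, 0 < d' i) →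
      (∑ i, d' i = n) →
      (∀ j : ℕ, psum l d j ≤ psum l' d' j) →
      (∃ j : ℕ, psum l d j ≠ psum l' d' j) →
      interSub ν (indTriv (parab n l' d')) = ⊥) :
    -- conclusion, with k = n − d_1:
    HasFixedVec ν (Hsub n (n - d ⟨0, hl⟩)) ∧
      ∀ j < n - d ⟨0, hl⟩, ¬ HasEigenVec ν (Hsub n j) := by
  exact sps_constituent_new_spectrum_and_tensor_rank_general l hl d (fun i j => hmono i j) hsum ν hν
    hocc fun l' d' hmono' hpos' hsum' hd' => hdom l' d' hmono' hpos' hsum' hd'.1 hd'.2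

end Stmt15
end

section
/- Let D = (d_1 ≥ d_2 ≥ … ≥ d_ℓ) be a partition of n, P_D the block upper-triangular parabolic subgroup of GL_n(F_q) with diagonal blocks of sizes d_1,…,d_ℓ, L_D ≅ GL_{d_1}(F_q)×…×GL_{d_ℓ}(F_q) its block-diagonal Levi subgroup, and Ū_D the opposite (block lower-triangular) unipotent radical. For 1 ≤ i ≤ ℓ−1 let U(i) ≤ Ū_D be the subgroup of matrices I_n + X with X supported in the (i+1,i) block (rows of diagonal block i+1, columns of diagonal block i), so U(i) ≅ (M_{d_{i+1},d_i}(F_q),+). Call a character ψ of Ū_D of maximal rank if, for every i, the restriction of ψ to U(i), viewed as a character of M_{d_{i+1},d_i}(F_q), has rank d_{i+1}. Then: (a) the maximal rank characters of Ū_D form a single orbit under the conjugation action of L_D; (b) for every maximal rank character ψ, the space of functions f : GL_n(F_q) → ℂ satisfying f(ū g p) = ψ(ū)·f(g) for all ū ∈ Ū_D, g ∈ GL_n(F_q), p ∈ P_D is exactly one-dimensional (i.e., ψ occurs with multiplicity one in the restriction of Ind_{P_D}^{GL_n(F_q)} 1 to Ū_D); (c) if D' is a partition of n strictly dominating D, then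 the analogous space of functions with P_{D'} in place of P_D is zero. -/
/-!
STATEMENT 16: Generalized Whittaker vectors for the opposite unipotent radical
Ū_D: maximal rank characters of Ū_D form a single L_D-orbit; each occurs with
multiplicity one in Ind_{P_D}^{GL_n} 1; and does not occur in Ind_{P_{D'}} 1
for D' strictly dominating D.
-/

open Matrix
open scoped MatrixGroups

set_option maxHeartbeats 1000000

namespace Stmt16

variable {F : Type} [Field F] [Fintype F] [DecidableEq F]

/-- Partial sums of the parts of a partition: `psum l d j = d_0 + ⋯ + d_{j-1}`. -/
def psum (l : ℕ) (d : Fin l → ℕ) (j : ℕ) : ℕ :=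
  ∑ i ∈ Finset.univ.filter (fun i : Fin l => (i : ℕ) < j), d i

lemma psum_mono (l : ℕ) (d : Fin l → ℕ) {j j' : ℕ} (h : j ≤ j') :
    psum l d j ≤ psum l d j' := by
  apply Finset.sum_le_sum_of_subset
  intro t ht
  simp only [Finset.mem_filter, Finset.mem_univ, true_and] at ht ⊢
  omega

lemma psum_succ (l : ℕ) (d : Fin l → ℕ) (r : ℕ) (hr : r < l) :
    psum l d (r + 1) = psum l d r + d ⟨r, hr⟩ := by
  unfold psum
  have hins : (Finset.univ.filter (fun t : Fin l => (t : ℕ) < r + 1))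
      = insert (⟨r, hr⟩ : Fin l) (Finset.univ.filter (fun t : Fin l => (t : ℕ) < r)) := by
    ext t
    simp only [Finset.mem_filter, Finset.mem_univ, true_and, Finset.mem_insert, Fin.ext_iff]
    omega
  rw [hins, Finset.sum_insert (by simp)]
  exact Nat.add_comm _ _

/-- The index of the block containing coordinate `i`. -/
def blk (l : ℕ) (d : Fin l → ℕ) {n : ℕ} (i : Fin n) : ℕ :=
  ((Finset.univ : Finset (Fin l)).filter
    (fun t : Fin l => psum l d ((t : ℕ) + 1) ≤ (i : ℕ))).card

lemma card_filter_lt (l t0 : ℕ) (h : t0 ≤ l) :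
    ((Finset.univ : Finset (Fin l)).filter (fun t : Fin l => (t : ℕ) < t0)).card = t0 := by
  have he : ((Finset.univ : Finset (Fin l)).filter (fun t : Fin l => (t : ℕ) < t0))
      = (Finset.range t0).attachFin
          (fun m hm => lt_of_lt_of_le (Finset.mem_range.mp hm) h) := by
    ext t
    simp [Finset.mem_attachFin]
  rw [he, Finset.card_attachFin, Finset.card_range]

/-- Coordinates in `[S_t, S_{t+1})` lie in block `t`. -/
lemma blk_interval (l : ℕ) (d : Fin l → ℕ) {n : ℕ} (i : Fin n) (t : ℕ) (ht : t < l)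
    (h1 : psum l d t ≤ (i : ℕ)) (h2 : (i : ℕ) < psum l d (t + 1)) :
    blk l d i = t := by
  unfold blk
  have he : ((Finset.univ : Finset (Fin l)).filter
        (fun s : Fin l => psum l d ((s : ℕ) + 1) ≤ (i : ℕ)))
      = ((Finset.univ : Finset (Fin l)).filter (fun s : Fin l => (s : ℕ) < t)) := by
    ext s
    simp only [Finset.mem_filter, Finset.mem_univ, true_and]
    constructor
    · intro hs
      rcases Nat.lt_or_ge (s : ℕ) t with h | h
      · exact h
      · exfalso
        have h5 : psum l d (t + 1) ≤ psum l d ((s : ℕ) + 1) :=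
          psum_mono l d (Nat.succ_le_succ h)
        omega
    · intro hs
      have h6 : psum l d ((s : ℕ) + 1) ≤ psum l d t :=
        psum_mono l d (Nat.succ_le_of_lt hs)
      omega
  rw [he, card_filter_lt l t (le_of_lt ht)]

/-- The unipotent radical `Ū_D` of the parabolic opposite to `P_D`: block
lower-triangular matrices with identity diagonal blocks. -/
def UbarS (n l : ℕ) (d : Fin l → ℕ) : Subgroup (GL (Fin n) F) where
  carrier := {g | ∀ i j : Fin n, blk l d i ≤ blk l d j →
      (↑g : Matrix (Fin n) (Fin n) F) i j = (1 : Matrix (Fin n) (Fin n) F) i j}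
  one_mem' := by
    intro i j _
    rw [Units.val_one]
  mul_mem' := by
    intro a b ha hb i j hij
    have hstep : ((↑(a * b) : Matrix (Fin n) (Fin n) F)) i j
        = (↑a : Matrix (Fin n) (Fin n) F) i i * (↑b : Matrix (Fin n) (Fin n) F) i j := by
      rw [Units.val_mul, Matrix.mul_apply]
      apply Finset.sum_eq_single i
      · intro t _ hti
        rcases Nat.lt_or_ge (blk l d t) (blk l d i) with ht | ht
        · have htj : t ≠ j := by
            intro he
            subst he
            omega
          rw [hb t j (le_trans (le_of_lt ht) hij), Matrix.one_apply_ne htj, mul_zero]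
        · rw [ha i t ht, Matrix.one_apply_ne (Ne.symm hti), zero_mul]
      · intro hi
        exact absurd (Finset.mem_univ i) hi
    rw [hstep, ha i i le_rfl, Matrix.one_apply_eq, one_mul]
    exact hb i j hij
  inv_mem' := by
    intro g hg
    have key : ∀ m : ℕ, ∀ i j : Fin n, blk l d i = m → blk l d i ≤ blk l d j →
        (↑g⁻¹ : Matrix (Fin n) (Fin n) F) i j = (1 : Matrix (Fin n) (Fin n) F) i j := by
      intro m
      induction m using Nat.strong_induction_on with
      | _ m ih =>
        intro i j him hij
        have h1 : (↑g : Matrix (Fin n) (Fin n) F) * (↑g⁻¹ : Matrix (Fin n) (Fin n) F)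
            = 1 := by
          rw [← Units.val_mul, mul_inv_cancel, Units.val_one]
        have h2 : ((↑g : Matrix (Fin n) (Fin n) F) * (↑g⁻¹ : Matrix (Fin n) (Fin n) F)) i j
            = (1 : Matrix (Fin n) (Fin n) F) i j := by rw [h1]
        have hstep : ((↑g : Matrix (Fin n) (Fin n) F) * (↑g⁻¹ : Matrix (Fin n) (Fin n) F)) i j
            = (↑g : Matrix (Fin n) (Fin n) F) i i * (↑g⁻¹ : Matrix (Fin n) (Fin n) F) i j := by
          rw [Matrix.mul_apply]
          apply Finset.sum_eq_single i
          · intro t _ hti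
            rcases Nat.lt_or_ge (blk l d t) (blk l d i) with ht | ht
            · have htj : t ≠ j := by
                intro he
                subst he
                omega
              rw [ih (blk l d t) (by omega) t j rfl (le_trans (le_of_lt ht) hij),
                Matrix.one_apply_ne htj, mul_zero]
            · rw [hg i t ht, Matrix.one_apply_ne (Ne.symm hti), zero_mul]
          · intro hi
            exact absurd (Finset.mem_univ i) hi
        rw [hstep, hg i i le_rfl, Matrix.one_apply_eq, one_mul] at h2
        exact h2
    intro i j hij
    exact key (blk l d i) i j rfl hij

/-- The subspace `E_m ⊆ F^n` of vectors supported in the first `m`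
coordinates. -/
def Esub (n m : ℕ) : Submodule F (Fin n → F) where
  carrier := {v | ∀ i : Fin n, m ≤ (i : ℕ) → v i = 0}
  add_mem' := by
    intro a b ha hb i hi
    simp [ha i hi, hb i hi]
  zero_mem' := by intro i hi; rfl
  smul_mem' := by
    intro c v hv i hi
    simp [hv i hi]

/-- The stabilizer in `GL_n(F)` of a subspace `E ⊆ F^n`. -/
def stabE {n : ℕ} (E : Submodule F (Fin n → F)) : Subgroup (GL (Fin n) F) where
  carrier := {g | ∀ v ∈ E, (↑g : Matrix (Fin n) (Fin n) F) *ᵥ v ∈ E}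
  one_mem' := by intro v hv; simpa using hv
  mul_mem' := by
    intro g h hg hh v hv
    rw [Units.val_mul, ← Matrix.mulVec_mulVec]
    exact hg _ (hh v hv)
  inv_mem' := by
    intro g hg v hv
    let e : (Fin n → F) ≃ₗ[F] (Fin n → F) :=
      LinearEquiv.ofLinear
        (Matrix.mulVecLin (↑g : Matrix (Fin n) (Fin n) F))
        (Matrix.mulVecLin (↑g⁻¹ : Matrix (Fin n) (Fin n) F))
        (by rw [← Matrix.mulVecLin_mul, ← Units.val_mul, mul_inv_cancel, Units.val_one,
              Matrix.mulVecLin_one])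
        (by rw [← Matrix.mulVecLin_mul, ← Units.val_mul, inv_mul_cancel, Units.val_one,
              Matrix.mulVecLin_one])
    have ecoe : (e : (Fin n → F) →ₗ[F] (Fin n → F))
        = Matrix.mulVecLin (↑g : Matrix (Fin n) (Fin n) F) := rfl
    have hmap : Submodule.map
        (Matrix.mulVecLin (↑g : Matrix (Fin n) (Fin n) F)) E = E := by
      apply Submodule.eq_of_le_of_finrank_le
      · rintro x ⟨u, hu, rfl⟩
        simpa using hg u hu
      · rw [← ecoe, LinearEquiv.finrank_map_eq]
    have hv' : v ∈ Submodule.map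
        (Matrix.mulVecLin (↑g : Matrix (Fin n) (Fin n) F)) E := by
      rw [hmap]; exact hv
    rcases hv' with ⟨u, hu, heq⟩
    rw [Matrix.mulVecLin_apply] at heq
    have hgu : (↑g⁻¹ : Matrix (Fin n) (Fin n) F) *ᵥ v = u := by
      rw [← heq, Matrix.mulVec_mulVec, ← Units.val_mul, inv_mul_cancel, Units.val_one,
        Matrix.one_mulVec]
    rw [hgu]; exact hu

/-- The block upper-triangular parabolic subgroup `P_D` attached to the
partition `D`: the simultaneous stabilizer of the subspaces spanned by the
first `psum l d j` coordinates. -/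
def parab (n l : ℕ) (d : Fin l → ℕ) : Subgroup (GL (Fin n) F) :=
  ⨅ j : ℕ, stabE (Esub n (psum l d j))

/-- The subspace of vectors supported in block `t`. -/
def blkSpace (l : ℕ) (d : Fin l → ℕ) (n t : ℕ) : Submodule F (Fin n → F) where
  carrier := {v | ∀ i : Fin n, blk l d i ≠ t → v i = 0}
  add_mem' := by
    intro a b ha hb i hi
    simp [ha i hi, hb i hi]
  zero_mem' := by intro i hi; rfl
  smul_mem' := by
    intro c v hv i hi
    simp [hv i hi]

/-- The block-diagonal Levi subgroup `L_D ≅ GL_{d_1} × ⋯ × GL_{d_ℓ}`: the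
simultaneous stabilizer of all the block-coordinate subspaces. -/
def LD (n l : ℕ) (d : Fin l → ℕ) : Subgroup (GL (Fin n) F) :=
  ⨅ t : ℕ, stabE (blkSpace l d n t)

/-- The matrix with `X` placed in the block with rows starting at `r₀` and
columns starting at `c₀`. -/
def offEmbed (n r₀ c₀ a b : ℕ) (X : Matrix (Fin a) (Fin b) F) :
    Matrix (Fin n) (Fin n) F :=
  Matrix.of fun i j =>
    if hi : r₀ ≤ (i : ℕ) ∧ (i : ℕ) - r₀ < a then
      if hj : c₀ ≤ (j : ℕ) ∧ (j : ℕ) - c₀ < b then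
        X ⟨(i : ℕ) - r₀, hi.2⟩ ⟨(j : ℕ) - c₀, hj.2⟩
      else 0
    else 0

lemma offEmbed_mul_offEmbed (n r₀ c₀ a b : ℕ) (hd : c₀ + b ≤ r₀)
    (X Y : Matrix (Fin a) (Fin b) F) :
    offEmbed n r₀ c₀ a b X * offEmbed n r₀ c₀ a b Y = 0 := by
  ext i j
  rw [Matrix.mul_apply, Matrix.zero_apply]
  apply Finset.sum_eq_zero
  intro t _
  by_cases htr : r₀ ≤ (t : ℕ) ∧ (t : ℕ) - r₀ < a
  · have hcf : ¬ (c₀ ≤ (t : ℕ) ∧ (t : ℕ) - c₀ < b) := by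
      rintro ⟨h1, h2⟩
      omega
    have hz : offEmbed n r₀ c₀ a b X i t = 0 := by
      unfold offEmbed
      by_cases hi : r₀ ≤ (i : ℕ) ∧ (i : ℕ) - r₀ < a
      · rw [Matrix.of_apply, dif_pos hi, dif_neg hcf]
      · rw [Matrix.of_apply, dif_neg hi]
    rw [hz, zero_mul]
  · have hz : offEmbed n r₀ c₀ a b Y t j = 0 := by
      unfold offEmbed
      rw [Matrix.of_apply, dif_neg htr]
    rw [hz, mul_zero]

/-- The element `I + X` of the one-parameter block subgroup
`U(r) ≅ M_{d_{r+1}, d_r}(F)` of `Ū_D` (the block just below the diagonal in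
rows `r+1`, columns `r`). -/
def uBlk (n l : ℕ) (d : Fin l → ℕ) (r : ℕ) (hr : r + 1 < l)
    (X : Matrix (Fin (d ⟨r + 1, hr⟩)) (Fin (d ⟨r, Nat.lt_of_succ_lt hr⟩)) F) :
    GL (Fin n) F where
  val := 1 + offEmbed n (psum l d (r + 1)) (psum l d r)
      (d ⟨r + 1, hr⟩) (d ⟨r, Nat.lt_of_succ_lt hr⟩) X
  inv := 1 - offEmbed n (psum l d (r + 1)) (psum l d r)
      (d ⟨r + 1, hr⟩) (d ⟨r, Nat.lt_of_succ_lt hr⟩) X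
  val_inv := by
    have h := offEmbed_mul_offEmbed n (psum l d (r + 1)) (psum l d r)
      (d ⟨r + 1, hr⟩) (d ⟨r, Nat.lt_of_succ_lt hr⟩)
      (le_of_eq (psum_succ l d r (Nat.lt_of_succ_lt hr)).symm) X X
    have e : ∀ E : Matrix (Fin n) (Fin n) F, (1 + E) * (1 - E) = 1 - E * E := by
      intro E
      noncomm_ring
    rw [e, h, sub_zero]
  inv_val := by
    have h := offEmbed_mul_offEmbed n (psum l d (r + 1)) (psum l d r)
      (d ⟨r + 1, hr⟩) (d ⟨r, Nat.lt_of_succ_lt hr⟩)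
      (le_of_eq (psum_succ l d r (Nat.lt_of_succ_lt hr)).symm) X X
    have e : ∀ E : Matrix (Fin n) (Fin n) F, (1 - E) * (1 + E) = 1 - E * E := by
      intro E
      noncomm_ring
    rw [e, h, sub_zero]

lemma uBlk_mem (n l : ℕ) (d : Fin l → ℕ) (r : ℕ) (hr : r + 1 < l)
    (X : Matrix (Fin (d ⟨r + 1, hr⟩)) (Fin (d ⟨r, Nat.lt_of_succ_lt hr⟩)) F) :
    uBlk n l d r hr X ∈ (UbarS n l d : Subgroup (GL (Fin n) F)) := by
  intro i j hij
  show (1 + offEmbed n (psum l d (r + 1)) (psum l d r)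
      (d ⟨r + 1, hr⟩) (d ⟨r, Nat.lt_of_succ_lt hr⟩) X) i j
      = (1 : Matrix (Fin n) (Fin n) F) i j
  rw [Matrix.add_apply]
  have hz : offEmbed n (psum l d (r + 1)) (psum l d r)
      (d ⟨r + 1, hr⟩) (d ⟨r, Nat.lt_of_succ_lt hr⟩) X i j = 0 := by
    unfold offEmbed
    rw [Matrix.of_apply]
    by_cases hi : psum l d (r + 1) ≤ (i : ℕ) ∧ (i : ℕ) - psum l d (r + 1) < d ⟨r + 1, hr⟩
    · by_cases hj : psum l d r ≤ (j : ℕ) ∧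
          (j : ℕ) - psum l d r < d ⟨r, Nat.lt_of_succ_lt hr⟩
      · exfalso
        have hbi : blk l d i = r + 1 := by
          refine blk_interval l d i (r + 1) hr hi.1 ?_
          rw [psum_succ l d (r + 1) hr]
          omega
        have hbj : blk l d j = r := by
          refine blk_interval l d j r (Nat.lt_of_succ_lt hr) hj.1 ?_
          rw [psum_succ l d r (Nat.lt_of_succ_lt hr)]
          omega
        omega
      · rw [dif_pos hi, dif_neg hj]
    · rw [dif_neg hi]
  rw [hz, add_zero]

/-- A character `ψ` of `Ū_D` has maximal rank: for every `r`, the restriction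
of `ψ` to the block subgroup `U(r) ≅ M_{d_{r+1}, d_r}(F)`, which has the form
`X ↦ χ₀(trace (T_r X))`, satisfies `rank T_r = d_{r+1}`. -/
def IsMaxRankChar (χ₀ : AddChar F ℂ) (n l : ℕ) (d : Fin l → ℕ)
    (ψ : ↥(UbarS n l d : Subgroup (GL (Fin n) F)) →* ℂ) : Prop :=
  ∀ (r : ℕ) (hr : r + 1 < l),
    ∃ T : Matrix (Fin (d ⟨r, Nat.lt_of_succ_lt hr⟩)) (Fin (d ⟨r + 1, hr⟩)) F,
      (∀ X : Matrix (Fin (d ⟨r + 1, hr⟩)) (Fin (d ⟨r, Nat.lt_of_succ_lt hr⟩)) F,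
        ψ ⟨uBlk n l d r hr X, uBlk_mem n l d r hr X⟩ = χ₀ ((T * X).trace)) ∧
      T.rank = d ⟨r + 1, hr⟩

/-- The `(Ū_D, ψ)`-Whittaker space of `Ind_P^{GL_n} 1`: functions on `GL_n(F)`
with `f(ū g p) = ψ(ū) f(g)`. -/
noncomputable def whitSpace {n : ℕ} (P U : Subgroup (GL (Fin n) F))
    (ψ : ↥U →* ℂ) : Submodule ℂ (GL (Fin n) F → ℂ) where
  carrier := {f | ∀ (u : ↥U) (g : GL (Fin n) F) (p : ↥P),
      f (↑u * g * ↑p) = ψ u * f g}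
  add_mem' := by
    intro a b ha hb u g p
    simp [ha u g p, hb u g p, mul_add]
  zero_mem' := by intro u g p; simp
  smul_mem' := by
    intro c f hf u g p
    simp only [Pi.smul_apply, smul_eq_mul, hf u g p]
    ring

attribute [irreducible] UbarS LD parab whitSpace IsMaxRankChar

/-!
`Ū_D` is generated by the transvections with entries just below the block diagonal, so a maximal
rank character is `u ↦ χ₀ (trace (T u))` for a matrix `T` supported just above the block diagonal,
all of whose superdiagonal blocks are injective. Two such matrices are two chains of injections
between the same spaces, and base changes chosen one block at a time intertwine them; this is (a).

If a Whittaker vector for `P_{D'}` does not vanish at `g`, then `ψ` is trivial on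
`Ū_D ∩ g P_{D'} g⁻¹`. By induction on `k`, the image under `g` of the span of the first `k` blocks
of `D'` then meets the span of the blocks of `D` after the first `k` trivially: a nonzero vector `w`
in both would yield an element `1 + w μᵀ` of this intersection with `χ₀ (μᵀ T w) ≠ 1`. Comparing
dimensions gives (c). For `D' = D`, transversality for all `k` says that `g` lies in the big cell
`Ū_D P_D`, on which a Whittaker vector is determined by its value at `1`; this gives (b).
-/

section LowerUnipotent

variable {ι R : Type*} [DecidableEq ι] [CommRing R] {b : ι → ℕ}

/-- Block lower unipotent matrices for the blocks `{i | b i = t}`: the entries on and above the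
block diagonal are those of the identity. -/
def IsLowerUnipotent (b : ι → ℕ) (M : Matrix ι ι R) : Prop :=
  ∀ i j, b i ≤ b j → M i j = (1 : Matrix ι ι R) i j

namespace IsLowerUnipotent

lemma apply_self {M : Matrix ι ι R} (hM : IsLowerUnipotent b M) (i : ι) : M i i = 1 := by
  rw [hM i i le_rfl, one_apply_eq]

lemma lt_of_apply_ne_zero {M : Matrix ι ι R} (hM : IsLowerUnipotent b M) {i j : ι} (hij : i ≠ j)
    (h : M i j ≠ 0) : b j < b i := by
  by_contra! hle
  exact h (by rw [hM i j hle, one_apply_ne hij])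

lemma eq_one {M : Matrix ι ι R} (hM : IsLowerUnipotent b M)
    (h : ∀ i j, i ≠ j → M i j = 0) : M = 1 := by
  ext i j
  obtain rfl | hij := eq_or_ne i j
  · exact hM i i le_rfl
  · rw [h i j hij, one_apply_ne hij]

lemma sub_one_apply {M : Matrix ι ι R} (hM : IsLowerUnipotent b M) {i j : ι} (hij : b i ≤ b j) :
    (M - 1) i j = 0 := by
  rw [Matrix.sub_apply, hM i j hij, sub_self]

variable [Fintype ι]

lemma det_eq_one {M : Matrix ι ι R} (hM : IsLowerUnipotent b M) : M.det = 1 := by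
  have htri : M.BlockTriangular (OrderDual.toDual ∘ b) := by
    intro i j (hij : b i < b j)
    rw [hM i j hij.le, one_apply_ne (ne_of_apply_ne b hij.ne)]
  have hdiag (t : ℕᵒᵈ) : M.toSquareBlock (OrderDual.toDual ∘ b) t = 1 := by
    ext i j
    have hij : b i = b j := i.2.trans j.2.symm
    rw [toSquareBlock_def, of_apply, hM i j hij.le]
    simp only [one_apply, Subtype.ext_iff]
  rw [htri.det]
  exact Finset.prod_eq_one fun t _ ↦ by rw [hdiag, det_one]

lemma mul_transvection_apply {M : Matrix ι ι R} (hM : IsLowerUnipotent b M) {i j : ι}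
    (hcol : ∀ k, k ≠ i → M k i = 0) (k m : ι) :
    (M * transvection i j (-M i j)) k m = if k = i ∧ m = j then 0 else M k m := by
  by_cases hm : m = j
  · subst hm
    rw [mul_transvection_apply_same]
    by_cases hk : k = i
    · subst hk
      simp [hM.apply_self]
    · simp [hcol k hk, hk]
  · rw [mul_transvection_apply_of_ne _ _ _ _ hm]
    simp [hm]

lemma mul_transvection {M : Matrix ι ι R} (hM : IsLowerUnipotent b M) {i j : ι} (hlt : b j < b i)
    (hcol : ∀ k, k ≠ i → M k i = 0) :
    IsLowerUnipotent b (M * transvection i j (-M i j)) := by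
  intro k m hkm
  rw [hM.mul_transvection_apply hcol, if_neg, hM k m hkm]
  rintro ⟨rfl, rfl⟩
  exact hkm.not_gt hlt

end IsLowerUnipotent

lemma isLowerUnipotent_transvection {i j : ι} (hlt : b j < b i) (c : R) :
    IsLowerUnipotent b (transvection i j c) := by
  intro k m hkm
  rw [transvection, Matrix.add_apply, single_apply_of_ne, add_zero]
  rintro ⟨rfl, rfl⟩
  exact hkm.not_gt hlt

variable [Fintype ι]

open scoped commutatorElement in
lemma commutatorElement_transvection {i j k : ι} (hik : i ≠ k) (hkj : k ≠ j) (hij : i ≠ j) (c : R) :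
    ⁅SpecialLinearGroup.transvection hik c, SpecialLinearGroup.transvection hkj (1 : R)⁆ =
      SpecialLinearGroup.transvection hij c := by
  rw [commutatorElement_def, SpecialLinearGroup.transvection_inv,
    SpecialLinearGroup.transvection_inv]
  suffices h : (1 + single i k c) * (1 + single k j 1) * (1 + single i k (-c)) *
      (1 + single k j (-1)) = 1 + single i j c from Subtype.ext h
  simp only [mul_add, add_mul, mul_one, one_mul, single_mul_single_same, ne_eq, hik.symm,
    hkj.symm, hij.symm, not_false_eq_true, single_mul_single_of_ne, ← single_neg, add_zero,
    mul_neg, neg_mul]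
  abel

variable {H : Subgroup (GL ι R)}

lemma transvection_mem_of_adjacent (hb : ∀ i j, b j + 1 < b i → ∃ k, b k = b j + 1)
    (hH : ∀ (i j : ι) (hij : i ≠ j) (c : R), b i = b j + 1 →
      (SpecialLinearGroup.transvection hij c : GL ι R) ∈ H)
    {i j : ι} (hij : i ≠ j) (hlt : b j < b i) (c : R) :
    (SpecialLinearGroup.transvection hij c : GL ι R) ∈ H := by
  induction hm : b i - b j using Nat.strong_induction_on generalizing j c with
  | _ m ih =>
    obtain hadj | hgap : b i = b j + 1 ∨ b j + 1 < b i := by omega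
    · exact hH i j hij c hadj
    · obtain ⟨k, hk⟩ := hb i j hgap
      have hik : i ≠ k := ne_of_apply_ne b (by omega)
      have hkj : k ≠ j := ne_of_apply_ne b (by omega)
      have hik_mem := ih (b i - b k) (by omega) hik (by omega) c rfl
      have hkj_mem := hH k j hkj 1 hk
      rw [← commutatorElement_transvection hik hkj hij, commutatorElement_def]
      simpa only [map_mul, map_inv] using
        H.mul_mem (H.mul_mem (H.mul_mem hik_mem hkj_mem) (H.inv_mem hik_mem)) (H.inv_mem hkj_mem)

-- If the entries in the lowest rows are cleared first, each column operation creates no new entry.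
lemma IsLowerUnipotent.mem_of_support_subset
    (hH : ∀ (i j : ι) (hij : i ≠ j) (c : R), b j < b i →
      (SpecialLinearGroup.transvection hij c : GL ι R) ∈ H) (s : Finset (ι × ι))
    {u : GL ι R} (hu : IsLowerUnipotent b (u : Matrix ι ι R))
    (hs : ∀ i j, i ≠ j → u i j ≠ 0 → (i, j) ∈ s) : u ∈ H := by
  induction s using Finset.induction_on_max_value (fun p : ι × ι ↦ b p.1) generalizing u with
  | empty =>
    have hone : u = 1 := Units.ext <| hu.eq_one fun i j hij ↦
      by_contra fun hne ↦ Finset.notMem_empty _ (hs i j hij hne)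
    exact hone ▸ H.one_mem
  | insert p s _ hmax ih =>
    obtain ⟨i, j⟩ := p
    by_cases hlt : b j < b i
    · have hij : i ≠ j := ne_of_apply_ne b hlt.ne'
      have hcol (k : ι) (hk : k ≠ i) : u k i = 0 := by
        by_contra hne
        have hki := hu.lt_of_apply_ne_zero hk hne
        rcases Finset.mem_insert.1 (hs k i hk hne) with heq | hmem
        · exact hk (congrArg Prod.fst heq)
        · exact hki.not_ge (hmax _ hmem)
      have hut := hu.mul_transvection_apply (j := j) hcol
      refine (H.mul_mem_cancel_right (hH i j hij (-u i j) hlt)).1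
        (ih (hu.mul_transvection hlt hcol) fun k m hkm hne ↦ ?_)
      obtain ⟨hnot, hne⟩ := ite_ne_left_iff.1 ((hut k m).symm.trans_ne hne)
      exact (Finset.mem_insert.1 (hs k m hkm hne.symm)).resolve_left fun heq ↦
        hnot ⟨congrArg Prod.fst heq, congrArg Prod.snd heq⟩
    · refine ih hu fun k m hkm hne ↦ (Finset.mem_insert.1 (hs k m hkm hne)).resolve_left ?_
      rintro ⟨rfl, rfl⟩
      exact hlt (hu.lt_of_apply_ne_zero hkm hne)

lemma IsLowerUnipotent.mem_of_adjacent_transvection_mem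
    (hb : ∀ i j, b j + 1 < b i → ∃ k, b k = b j + 1)
    (hH : ∀ (i j : ι) (hij : i ≠ j) (c : R), b i = b j + 1 →
      (SpecialLinearGroup.transvection hij c : GL ι R) ∈ H)
    {u : GL ι R} (hu : IsLowerUnipotent b (u : Matrix ι ι R)) : u ∈ H :=
  hu.mem_of_support_subset
    (fun _ _ hij c hlt ↦ transvection_mem_of_adjacent hb hH hij hlt c) Finset.univ
    fun _ _ _ _ ↦ Finset.mem_univ _

end LowerUnipotent

section Superdiagonal

variable {ι R : Type*} [Fintype ι] [CommRing R] {b : ι → ℕ} {T : Matrix ι ι R}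

lemma mul_apply_eq_zero {M N : Matrix ι ι R} {i j : ι} (h : ∀ k, M i k = 0 ∨ N k j = 0) :
    (M * N) i j = 0 := by
  rw [mul_apply]
  exact Finset.sum_eq_zero fun k _ ↦ (h k).elim (mul_eq_zero_of_left · _) (mul_eq_zero_of_right _)

lemma toBlock_mulVec_apply (M : Matrix ι ι R) (p q : ι → Prop) [DecidablePred q] {v : ι → R}
    (i : {i // p i}) (h : ∀ j, ¬ q j → M i j * v j = 0) :
    (M.toBlock p q *ᵥ fun j ↦ v j) i = (M *ᵥ v) i := by
  simp only [mulVec, dotProduct, toBlock_apply]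
  rw [← Fintype.sum_subtype_add_sum_subtype q fun j ↦ M i j * v j,
    Finset.sum_eq_zero (s := (Finset.univ : Finset {j // ¬ q j})) fun j _ ↦ h j j.2, add_zero]

lemma toBlock_mulVec_eq_mulVec_extend (M : Matrix ι ι R) (p q : ι → Prop) [DecidablePred q]
    (x : {j // q j} → R) (i : {i // p i}) :
    (M.toBlock p q *ᵥ x) i = (M *ᵥ Function.extend Subtype.val x 0) i := by
  rw [← toBlock_mulVec_apply M p q i]
  · simp only [Subtype.val_injective.extend_apply]
  · intro j hj
    rw [Function.extend_apply' _ _ _ fun ⟨a, ha⟩ ↦ hj (ha ▸ a.2), Pi.zero_apply, mul_zero]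

/-- The matrices with nonzero entries only in the blocks just above the block diagonal; they
parametrize the characters of the block lower unipotent group. -/
def IsSuperdiagonal (b : ι → ℕ) (T : Matrix ι ι R) : Prop :=
  ∀ i j, b j ≠ b i + 1 → T i j = 0

/-- The superdiagonal matrices of maximal rank: each block just above the block diagonal has
trivial kernel. -/
structure IsMaxRankSuperdiagonal (b : ι → ℕ) (T : Matrix ι ι R) : Prop where
  isSuperdiagonal : IsSuperdiagonal b T
  injective (t : ℕ) :
    Function.Injective (T.toBlock (fun i ↦ b i = t) (fun i ↦ b i = t + 1)).mulVec

namespace IsSuperdiagonal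

lemma trace_eq_zero (hT : IsSuperdiagonal b T) : T.trace = 0 :=
  Finset.sum_eq_zero fun i _ ↦ hT i i (by omega)

lemma mulVec_apply (hT : IsSuperdiagonal b T) (v : ι → R) {t : ℕ} (i : {i // b i = t}) :
    (T.toBlock (fun i ↦ b i = t) (fun i ↦ b i = t + 1) *ᵥ fun j ↦ v j) i = (T *ᵥ v) i :=
  toBlock_mulVec_apply T _ _ i fun j hj ↦ by rw [hT i j (by rwa [i.2]), zero_mul]

variable [DecidableEq ι]

lemma trace_mul_mul (hT : IsSuperdiagonal b T) {u v : Matrix ι ι R}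
    (hu : IsLowerUnipotent b u) (hv : IsLowerUnipotent b v) :
    (T * (u * v)).trace = (T * u).trace + (T * v).trace := by
  have hnil : (T * ((u - 1) * (v - 1))).trace = 0 := by
    refine Finset.sum_eq_zero fun i _ ↦ mul_apply_eq_zero fun j ↦ or_iff_not_imp_left.2 fun hij ↦ ?_
    have hbij : b j = b i + 1 := not_imp_comm.1 (hT i j) hij
    refine mul_apply_eq_zero fun k ↦ ?_
    obtain hjk | hki : b j ≤ b k ∨ b k ≤ b i := by omega
    · exact .inl (hu.sub_one_apply hjk)
    · exact .inr (hv.sub_one_apply hki)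
  have hexp : T * (u * v) = T * ((u - 1) * (v - 1)) + T * u + T * v - T := by noncomm_ring
  rw [hexp, trace_sub, trace_add, trace_add, hnil, hT.trace_eq_zero, zero_add, sub_zero]

lemma trace_mul_transvection (hT : IsSuperdiagonal b T) (i j : ι) (c : R) :
    (T * transvection i j c).trace = T j i * c := by
  rw [transvection, mul_add, mul_one, trace_add, hT.trace_eq_zero, zero_add, trace_mul_single,
    op_smul_eq_mul]

end IsSuperdiagonal

namespace IsMaxRankSuperdiagonal

lemma exists_mulVec_ne_zero (hT : IsMaxRankSuperdiagonal b T) {v : ι → R} {j : ι} {t : ℕ}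
    (hj : b j = t + 1) (hvj : v j ≠ 0) : ∃ i, b i = t ∧ (T *ᵥ v) i ≠ 0 := by
  by_contra! hzero
  have hv : (fun j : {j // b j = t + 1} ↦ v j) = 0 := hT.injective t <| by
    funext i
    rw [hT.isSuperdiagonal.mulVec_apply, hzero i i.2, mulVec_zero, Pi.zero_apply]
  exact hvj (congrFun hv ⟨j, hj⟩)

lemma exists_eq_of_le [Nontrivial R] (hT : IsMaxRankSuperdiagonal b T) {s : ℕ} {i : ι}
    (hs : s ≤ b i) : ∃ k, b k = s := by
  induction hs using Nat.decreasingInduction with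
  | self => exact ⟨i, rfl⟩
  | of_succ s _ ih =>
    obtain ⟨j, hj⟩ := ih
    obtain ⟨k, hk, -⟩ := hT.exists_mulVec_ne_zero (v := 1) hj one_ne_zero
    exact ⟨k, hk⟩

end IsMaxRankSuperdiagonal

end Superdiagonal

section Transversality

variable {ι K : Type*} [Fintype ι] [Field K] {b b' : ι → ℕ}

lemma exists_dotProduct_eq_of_notMem {S : Submodule K (ι → K)} {x : ι → K} (hx : x ∉ S) (c : K) :
    ∃ μ : ι → K, (∀ y ∈ S, μ ⬝ᵥ y = 0) ∧ μ ⬝ᵥ x = c := by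
  classical
  obtain ⟨f, hfx, hf⟩ := Submodule.exists_le_ker_of_notMem hx
  obtain ⟨ν, rfl⟩ := (dotProductEquiv K ι).surjective f
  rw [dotProductEquiv_apply_apply] at hfx
  refine ⟨(c / (ν ⬝ᵥ x)) • ν, fun y hy ↦ ?_, ?_⟩
  · have hνy : ν ⬝ᵥ y = 0 := hf hy
    rw [smul_dotProduct, hνy, smul_zero]
  · rw [smul_dotProduct, smul_eq_mul, div_mul_cancel₀ _ hfx]

/-- General position of two flags at step `k`: no nonzero vector in the span of the coordinates
`b' i < k` is moved by `g` into the span of the coordinates `k ≤ b i`. -/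
def IsTransverseAt (b b' : ι → ℕ) (g : Matrix ι ι K) (k : ℕ) : Prop :=
  ∀ v : ι → K, (∀ i, k ≤ b' i → v i = 0) → (∀ i, b i < k → (g *ᵥ v) i = 0) → v = 0

lemma isTransverseAt_zero (b b' : ι → ℕ) (g : Matrix ι ι K) : IsTransverseAt b b' g 0 :=
  fun _ hv _ ↦ funext fun i ↦ hv i (Nat.zero_le _)

namespace IsTransverseAt

lemma toBlock_mulVec_injective {g : Matrix ι ι K} {k : ℕ} (hg : IsTransverseAt b b' g k) :
    Function.Injective (g.toBlock (fun i ↦ b i < k) (fun i ↦ b' i < k)).mulVec := by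
  rw [← coe_mulVecLin, ← LinearMap.ker_eq_bot, LinearMap.ker_eq_bot']
  intro x hx
  have hext : Function.extend Subtype.val x 0 = 0 := by
    refine hg _ (fun i hi ↦ Function.extend_apply' _ _ _ fun ⟨a, ha⟩ ↦ ?_) fun i hi ↦ ?_
    · exact hi.not_gt (ha ▸ a.2)
    · rw [← toBlock_mulVec_eq_mulVec_extend g (fun i ↦ b i < k) _ x ⟨i, hi⟩]
      exact congrFun hx ⟨i, hi⟩
  funext j
  rw [← Subtype.val_injective.extend_apply x 0 j, hext, Pi.zero_apply, Pi.zero_apply]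

lemma card_le {g : Matrix ι ι K} {k : ℕ} (hg : IsTransverseAt b b' g k) :
    Fintype.card {i // b' i < k} ≤ Fintype.card {i // b i < k} := by
  simpa only [Module.finrank_fintype_fun_eq_card] using
    LinearMap.finrank_le_finrank_of_injective
      (f := (g.toBlock (fun i ↦ b i < k) (fun i ↦ b' i < k)).mulVecLin) hg.toBlock_mulVec_injective

lemma exists_mulVec_eq {g : Matrix ι ι K} {k : ℕ} (hg : IsTransverseAt b b g k) (y : ι → K) :
    ∃ v : ι → K, (∀ i, k ≤ b i → v i = 0) ∧ ∀ i, b i < k → (g *ᵥ v) i = y i := by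
  have hsurj : Function.Surjective (g.toBlock (fun i ↦ b i < k) (fun i ↦ b i < k)).mulVec := by
    rw [← coe_mulVecLin, ← LinearMap.injective_iff_surjective]
    exact hg.toBlock_mulVec_injective
  obtain ⟨x, hx⟩ := hsurj fun i ↦ y i
  refine ⟨Function.extend Subtype.val x 0, fun i hi ↦
    Function.extend_apply' _ _ _ fun ⟨a, ha⟩ ↦ hi.not_gt (ha ▸ a.2), fun i hi ↦ ?_⟩
  rw [← toBlock_mulVec_eq_mulVec_extend g (fun i ↦ b i < k) _ x ⟨i, hi⟩, hx]

lemma exists_dotProduct_eq {g : Matrix ι ι K} {j k : ℕ}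
    (hg : IsTransverseAt b b' g j) (hjk : j ≤ k) {x : ι → K} (hx : ∀ i, b i < k → x i = 0)
    {i₀ : ι} (hi₀ : b i₀ = k) (hxi₀ : x i₀ ≠ 0) (c : K) :
    ∃ μ : ι → K, (∀ i, b' i < j → (μ ᵥ* g) i = 0) ∧ (∀ i, k < b i → μ i = 0) ∧ μ ⬝ᵥ x = c := by
  classical
  let E : Submodule K (ι → K) := Submodule.pi {i | j ≤ b' i} fun _ ↦ ⊥
  let W : Submodule K (ι → K) := Submodule.pi {i | b i ≤ k} fun _ ↦ ⊥
  have hxS : x ∉ E.map g.mulVecLin ⊔ W := by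
    intro hmem
    obtain ⟨_, ⟨e, he, rfl⟩, y, hy, hxy⟩ := Submodule.mem_sup.1 hmem
    have hge (i : ι) (hi : b i ≤ k) : (g *ᵥ e) i = x i := by
      have := congrFun hxy i
      rwa [Pi.add_apply, (hy i hi : y i = 0), add_zero] at this
    have he0 : e = 0 := hg e he fun i hi ↦ by rw [hge i (by omega), hx i (by omega)]
    exact hxi₀ (by rw [← hge i₀ hi₀.le, he0, mulVec_zero, Pi.zero_apply])
  obtain ⟨μ, hμ, hμx⟩ := exists_dotProduct_eq_of_notMem hxS c
  refine ⟨μ, fun i hi ↦ ?_, fun i hi ↦ ?_, hμx⟩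
  · have hiE : Pi.single i 1 ∈ E := fun m hm ↦
      Pi.single_eq_of_ne (ne_of_apply_ne b' (hi.trans_le hm).ne') 1
    have hμg := hμ _ (Submodule.mem_sup_left (Submodule.mem_map_of_mem hiE))
    rwa [mulVecLin_apply, dotProduct_mulVec, dotProduct_single_one] at hμg
  · have hiW : Pi.single i 1 ∈ W := fun m hm ↦
      Pi.single_eq_of_ne (ne_of_apply_ne b (lt_of_le_of_lt hm hi).ne) 1
    have hμi := hμ _ (Submodule.mem_sup_right hiW)
    rwa [dotProduct_single_one] at hμi

end IsTransverseAt

variable [DecidableEq ι]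

-- Column `j` of `q` solves the system of the blocks up to that of `j`.
lemma exists_isLowerUnipotent_mul {g : GL ι K} (hg : ∀ k, IsTransverseAt b b (g : Matrix ι ι K) k) :
    ∃ q : GL ι K, (q : Matrix ι ι K).BlockTriangular b ∧
      IsLowerUnipotent b ((g * q : GL ι K) : Matrix ι ι K) := by
  choose v hv hgv using fun j ↦ (hg (b j + 1)).exists_mulVec_eq (Pi.single j 1)
  have hlow : IsLowerUnipotent b ((g : Matrix ι ι K) * (of v)ᵀ) := by
    intro i j hij
    rw [one_eq_pi_single, Pi.single_comm]
    exact hgv j i (Nat.lt_succ_of_le hij)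
  have hdet : IsUnit (of v)ᵀ.det :=
    isUnit_of_mul_isUnit_right (by rw [← det_mul, hlow.det_eq_one]; exact isUnit_one)
  refine ⟨GeneralLinearGroup.mk'' _ hdet, fun i j hij ↦ hv j i hij, hlow⟩

lemma exists_val_eq_one_add_vecMulVec {w μ : ι → K} (h : μ ⬝ᵥ w = 0) :
    ∃ u : GL ι K, (u : Matrix ι ι K) = 1 + vecMulVec w μ := by
  have hsq : vecMulVec w μ * vecMulVec w μ = 0 := by
    rw [vecMulVec_mul_vecMulVec, h, zero_smul, vecMulVec_zero]
  exact (IsNilpotent.isUnit_one_add ⟨2, by rw [sq, hsq]⟩).imp fun _ ↦ id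

lemma inv_mul_mul_eq_one_add_vecMulVec {g u : GL ι K} {v μ : ι → K}
    (hu : (u : Matrix ι ι K) = 1 + vecMulVec ((g : Matrix ι ι K) *ᵥ v) μ) :
    ((g⁻¹ * u * g : GL ι K) : Matrix ι ι K) = 1 + vecMulVec v (μ ᵥ* (g : Matrix ι ι K)) := by
  rw [Units.val_mul, Units.val_mul, hu, mul_add, add_mul, mul_one, ← Units.val_mul, inv_mul_cancel,
    Units.val_one, mul_vecMulVec, vecMulVec_mul, mulVec_mulVec, ← Units.val_mul, inv_mul_cancel,
    Units.val_one, one_mulVec]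

lemma exists_isLowerUnipotent_eq_one_add_vecMulVec {g : GL ι K} {v μ : ι → K} {j k : ℕ}
    (hv : ∀ i, j + 1 ≤ b' i → v i = 0) (hμg : ∀ i, b' i < j → (μ ᵥ* (g : Matrix ι ι K)) i = 0)
    (hw : ∀ i, b i ≤ k → ((g : Matrix ι ι K) *ᵥ v) i = 0) (hμ : ∀ i, k < b i → μ i = 0) :
    ∃ u : GL ι K, (u : Matrix ι ι K) = 1 + vecMulVec ((g : Matrix ι ι K) *ᵥ v) μ ∧
      IsLowerUnipotent b (u : Matrix ι ι K) ∧
      ((g⁻¹ * u * g : GL ι K) : Matrix ι ι K).BlockTriangular b' := by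
  set w := (g : Matrix ι ι K) *ᵥ v
  have hwμ (i m : ι) (him : b i ≤ b m) : w i * μ m = 0 := by
    obtain hi | hm := le_or_gt (b i) k
    · rw [hw i hi, zero_mul]
    · rw [hμ m (hm.trans_le him), mul_zero]
  obtain ⟨u, hu⟩ := exists_val_eq_one_add_vecMulVec (w := w) (μ := μ) <|
    Finset.sum_eq_zero fun i _ ↦ by rw [mul_comm, hwμ i i le_rfl]
  refine ⟨u, hu, fun i m him ↦ ?_, ?_⟩
  · rw [hu, Matrix.add_apply, vecMulVec_apply, hwμ i m him, add_zero]
  · rw [inv_mul_mul_eq_one_add_vecMulVec hu]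
    refine blockTriangular_one.add fun i m him ↦ ?_
    obtain hi | hm : j + 1 ≤ b' i ∨ b' m < j := by omega
    · rw [vecMulVec_apply, hv i hi, zero_mul]
    · rw [vecMulVec_apply, hμg m hm, mul_zero]

namespace IsMaxRankSuperdiagonal

variable {T : Matrix ι ι K}

lemma exists_trace_mul_eq (hT : IsMaxRankSuperdiagonal b T) {g : GL ι K} {j : ℕ}
    (hj : IsTransverseAt b b' (g : Matrix ι ι K) j) {v : ι → K} (hv0 : v ≠ 0)
    (hv : ∀ i, j + 1 ≤ b' i → v i = 0)
    (hw : ∀ i, b i < j + 1 → ((g : Matrix ι ι K) *ᵥ v) i = 0) (c : K) :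
    ∃ u : GL ι K, IsLowerUnipotent b (u : Matrix ι ι K) ∧
      ((g⁻¹ * u * g : GL ι K) : Matrix ι ι K).BlockTriangular b' ∧
      (T * (u : Matrix ι ι K)).trace = c := by
  set w := (g : Matrix ι ι K) *ᵥ v
  have hw0 : w ≠ 0 := fun h ↦ hv0 <|
    mulVec_injective_of_isUnit g.isUnit (h.trans (mulVec_zero _).symm)
  obtain ⟨i₁, hi₁, hmin⟩ := Set.exists_min_image {i | w i ≠ 0} b (Set.toFinite _)
    (Function.ne_iff.1 hw0)
  have hi₁j : j < b i₁ := not_lt.1 (mt (hw i₁) hi₁)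
  obtain ⟨k, hk⟩ := Nat.exists_eq_add_one_of_ne_zero hi₁j.ne_bot
  have hwk (i : ι) (hi : b i ≤ k) : w i = 0 := not_not.1 (mt (hmin i) (by omega))
  obtain ⟨i₀, hi₀, hxi₀⟩ := hT.exists_mulVec_ne_zero hk hi₁
  have hx (i : ι) (hi : b i < k) : (T *ᵥ w) i = 0 := by
    rw [← hT.isSuperdiagonal.mulVec_apply w ⟨i, rfl⟩, show (fun m : {m // b m = b i + 1} ↦ w m) = 0
      from funext fun m ↦ hwk m (m.2.trans_le hi), mulVec_zero, Pi.zero_apply]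
  obtain ⟨μ, hμg, hμ, hμx⟩ := hj.exists_dotProduct_eq (by omega) hx hi₀ hxi₀ c
  obtain ⟨u, hu, hulow, hutri⟩ := exists_isLowerUnipotent_eq_one_add_vecMulVec hv hμg hwk hμ
  refine ⟨u, hulow, hutri, ?_⟩
  rw [hu, mul_add, mul_one, trace_add, hT.isSuperdiagonal.trace_eq_zero, mul_vecMulVec,
    trace_vecMulVec, zero_add, dotProduct_comm, hμx]

lemma isTransverseAt (hT : IsMaxRankSuperdiagonal b T) {g : GL ι K} {c : K}
    (hc : ∀ u : GL ι K, IsLowerUnipotent b (u : Matrix ι ι K) →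
      ((g⁻¹ * u * g : GL ι K) : Matrix ι ι K).BlockTriangular b' →
      (T * (u : Matrix ι ι K)).trace ≠ c) (k : ℕ) :
    IsTransverseAt b b' (g : Matrix ι ι K) k := by
  induction k with
  | zero => exact isTransverseAt_zero b b' _
  | succ j hj =>
    intro v hv hw
    by_contra hv0
    obtain ⟨u, hu, hgu, huc⟩ := hT.exists_trace_mul_eq hj hv0 hv hw c
    exact hc u hu hgu huc

end IsMaxRankSuperdiagonal

end Transversality

section Intertwining

variable {K : Type*} [Field K]

lemma exists_linearEquiv_apply_eq {V W : Type*} [AddCommGroup V] [Module K V]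
    [FiniteDimensional K V] [AddCommGroup W] [Module K W] {A B : W →ₗ[K] V}
    (hA : Function.Injective A) (hB : Function.Injective B) (e' : W ≃ₗ[K] W) :
    ∃ e : V ≃ₗ[K] V, ∀ w, e (A w) = B (e' w) := by
  let f : A.range ≃ₗ[K] B.range :=
    (LinearEquiv.ofInjective A hA).symm ≪≫ₗ e' ≪≫ₗ LinearEquiv.ofInjective B hB
  obtain ⟨e, he⟩ := Submodule.exists_linearEquiv_restrict_eq f
  refine ⟨e, fun w ↦ (he (LinearEquiv.ofInjective A hA w)).symm.trans ?_⟩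
  simp only [f, LinearEquiv.trans_apply, LinearEquiv.symm_apply_apply,
    LinearEquiv.ofInjective_apply]

lemma exists_linearEquiv_family {V : ℕ → Type*} [∀ t, AddCommGroup (V t)] [∀ t, Module K (V t)]
    [∀ t, FiniteDimensional K (V t)] {A B : ∀ t, V (t + 1) →ₗ[K] V t}
    (hA : ∀ t, Function.Injective (A t)) (hB : ∀ t, Function.Injective (B t)) {N : ℕ}
    (hN : ∀ t, N ≤ t → Subsingleton (V t)) :
    ∃ e : ∀ t, V t ≃ₗ[K] V t, ∀ t v, e t (A t v) = B t (e (t + 1) v) := by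
  induction N generalizing V with
  | zero =>
    have (t : ℕ) := hN t t.zero_le
    exact ⟨fun t ↦ .refl K _, fun t v ↦ Subsingleton.elim _ _⟩
  | succ N ih =>
    obtain ⟨e, he⟩ := ih (fun t ↦ hA (t + 1)) (fun t ↦ hB (t + 1))
      fun t ht ↦ hN (t + 1) (Nat.succ_le_succ ht)
    obtain ⟨e₀, he₀⟩ := exists_linearEquiv_apply_eq (hA 0) (hB 0) (e 0)
    refine ⟨fun | 0 => e₀ | t + 1 => e t, ?_⟩
    rintro (_ | t) v
    · exact he₀ v
    · exact he t v

variable {ι : Type*} {b : ι → ℕ}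

/-- The splitting of a vector into its restrictions to the blocks `{i | b i = t}`. -/
def blockRestrictEquiv (b : ι → ℕ) : (ι → K) ≃ₗ[K] ∀ t, {i // b i = t} → K where
  toFun v _ i := v i
  invFun w i := w (b i) ⟨i, rfl⟩
  map_add' _ _ := rfl
  map_smul' _ _ := rfl
  right_inv w := by
    funext t ⟨i, hi⟩
    subst hi
    rfl

variable [Fintype ι] [DecidableEq ι]

lemma exists_isBlockDiagonal_mulVec_eq (e : ∀ t, ({i // b i = t} → K) ≃ₗ[K] ({i // b i = t} → K)) :
    ∃ m : GL ι K, (∀ i j, b i ≠ b j → m i j = 0) ∧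
      ∀ v t (i : {i // b i = t}), ((m : Matrix ι ι K) *ᵥ v) i = e t (fun j ↦ v j) i := by
  let E : (ι → K) ≃ₗ[K] (ι → K) :=
    blockRestrictEquiv b ≪≫ₗ LinearEquiv.piCongrRight e ≪≫ₗ (blockRestrictEquiv b).symm
  have hE (v : ι → K) (i : ι) : E v i = e (b i) (fun j ↦ v j) ⟨i, rfl⟩ := rfl
  refine ⟨GeneralLinearGroup.toLin.symm (LinearMap.GeneralLinearGroup.ofLinearEquiv E), ?_, ?_⟩
  · intro i j hij
    have hrestr : (fun k : {k // b k = b i} ↦ (Pi.single j 1 : ι → K) k) = 0 :=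
      funext fun k ↦ Pi.single_eq_of_ne (ne_of_apply_ne b (by rwa [k.2])) 1
    change LinearMap.toMatrix' (E : (ι → K) →ₗ[K] (ι → K)) i j = 0
    rw [LinearMap.toMatrix'_apply, LinearEquiv.coe_coe, hE, hrestr, map_zero,
      Pi.zero_apply]
  · rintro v _ ⟨i, rfl⟩
    change ((LinearMap.toMatrix' E) *ᵥ v) i = _
    rw [LinearMap.toMatrix'_mulVec]
    rfl

lemma IsMaxRankSuperdiagonal.exists_mul_eq_mul {T T' : Matrix ι ι K}
    (hT : IsMaxRankSuperdiagonal b T) (hT' : IsMaxRankSuperdiagonal b T') :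
    ∃ m : GL ι K, (∀ i j, b i ≠ b j → m i j = 0) ∧
      T * (m : Matrix ι ι K) = (m : Matrix ι ι K) * T' := by
  obtain ⟨N, hN⟩ := (Set.finite_range b).bddAbove
  have hsub (t : ℕ) (ht : N + 1 ≤ t) : Subsingleton ({i // b i = t} → K) := by
    have : IsEmpty {i // b i = t} := ⟨fun i ↦ by have := hN ⟨i, rfl⟩; omega⟩
    infer_instance
  obtain ⟨e, he⟩ := exists_linearEquiv_family
    (A := fun t ↦ (T'.toBlock (fun i ↦ b i = t) (fun i ↦ b i = t + 1)).mulVecLin)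
    (B := fun t ↦ (T.toBlock (fun i ↦ b i = t) (fun i ↦ b i = t + 1)).mulVecLin)
    hT'.injective hT.injective hsub
  obtain ⟨m, hm, hme⟩ := exists_isBlockDiagonal_mulVec_eq e
  have hmT (t : ℕ) (v : ι → K) (i : {i // b i = t}) :
      (T *ᵥ ((m : Matrix ι ι K) *ᵥ v)) i = ((m : Matrix ι ι K) *ᵥ (T' *ᵥ v)) i := by
    rw [← hT.isSuperdiagonal.mulVec_apply, hme, funext (hme v (t + 1))]
    have := congrFun (he t fun j ↦ v j) i
    simp only [mulVecLin_apply, funext (hT'.isSuperdiagonal.mulVec_apply v)] at this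
    exact this.symm
  refine ⟨m, hm, mulVec_injective (funext fun v ↦ funext fun i ↦ ?_)⟩
  rw [← mulVec_mulVec, ← mulVec_mulVec]
  exact hmT (b i) v ⟨i, rfl⟩

variable {R : Type*} [CommRing R]

lemma IsLowerUnipotent.mul_mul {m u m' : Matrix ι ι R} (hm : ∀ i j, b i ≠ b j → m i j = 0)
    (hu : IsLowerUnipotent b u) (hm' : ∀ i j, b i ≠ b j → m' i j = 0) (hmm' : m * m' = 1) :
    IsLowerUnipotent b (m * u * m') := by
  intro i j hij
  have hconj : m * u * m' = 1 + m * (u - 1) * m' := by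
    rw [mul_sub, mul_one, sub_mul, hmm', add_sub_cancel]
  have hmu (k : ι) (hik : b i ≤ b k) : (m * (u - 1)) i k = 0 := by
    refine mul_apply_eq_zero fun h ↦ (ne_or_eq (b i) (b h)).imp (hm i h) fun hih ↦ ?_
    exact hu.sub_one_apply (hih ▸ hik)
  rw [hconj, Matrix.add_apply, add_eq_left]
  exact mul_apply_eq_zero fun k ↦ (eq_or_ne (b k) (b j)).imp
    (fun hkj ↦ hmu k (hij.trans_eq hkj.symm)) (hm' k j)

lemma trace_mul_conj {T T' u : Matrix ι ι R} {m : GL ι R}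
    (h : T * (m : Matrix ι ι R) = (m : Matrix ι ι R) * T') :
    (T * ((m : Matrix ι ι R) * u * ((m⁻¹ : GL ι R) : Matrix ι ι R))).trace = (T' * u).trace := by
  rw [← mul_assoc, ← mul_assoc, h, mul_assoc (m : Matrix ι ι R), trace_units_conj]

end Intertwining

section Blocks

variable {n l : ℕ} {d : Fin l → ℕ}

lemma psum_eq_sum_of_le {j : ℕ} (hj : l ≤ j) : psum l d j = ∑ i, d i := by
  rw [psum, Finset.filter_true_of_mem fun i _ ↦ i.2.trans_le hj]

lemma psum_le_sum (j : ℕ) : psum l d j ≤ ∑ i, d i :=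
  Finset.sum_le_sum_of_subset (Finset.filter_subset _ _)

lemma blk_lt_and_mem_Ico (hsum : ∑ i, d i = n) (i : Fin n) :
    blk l d i < l ∧ (i : ℕ) ∈ Set.Ico (psum l d (blk l d i)) (psum l d (blk l d i + 1)) := by
  have hex : ∃ t, (i : ℕ) < psum l d (t + 1) :=
    ⟨l, by rw [psum_eq_sum_of_le l.le_succ, hsum]; exact i.2⟩
  have hle : psum l d (Nat.find hex) ≤ i := by
    rcases hfind : Nat.find hex with _ | t
    · simp [psum]
    · exact not_lt.1 (Nat.find_min hex (hfind ▸ t.lt_succ_self))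
  have hlt : Nat.find hex < l := by
    by_contra! hl
    rw [psum_eq_sum_of_le hl, hsum] at hle
    exact i.2.not_ge hle
  rw [blk_interval l d i _ hlt hle (Nat.find_spec hex)]
  exact ⟨hlt, hle, Nat.find_spec hex⟩

lemma blk_lt_iff (hsum : ∑ i, d i = n) {i : Fin n} {j : ℕ} :
    blk l d i < j ↔ (i : ℕ) < psum l d j := by
  obtain ⟨-, hle, hlt⟩ := blk_lt_and_mem_Ico hsum i
  exact ⟨fun h ↦ hlt.trans_le (psum_mono l d h),
    fun h ↦ lt_of_not_ge fun hj ↦ (h.trans_le ((psum_mono l d hj).trans hle)).false⟩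

lemma card_blk_lt (hsum : ∑ i, d i = n) (j : ℕ) :
    Fintype.card {i : Fin n // blk l d i < j} = psum l d j := by
  simp_rw [Fintype.card_subtype, blk_lt_iff hsum]
  exact card_filter_lt n _ (hsum ▸ psum_le_sum j)

/-- The order-preserving numbering of the coordinates in block `r`. -/
def blockEquiv (hsum : ∑ i, d i = n) (r : Fin l) : {i : Fin n // blk l d i = r} ≃ Fin (d r) where
  toFun i := ⟨i - psum l d r, by
    obtain ⟨-, hle, hlt⟩ := blk_lt_and_mem_Ico hsum i.1
    rw [i.2] at hle hlt
    exact Nat.sub_lt_left_of_lt_add hle (hlt.trans_eq (psum_succ l d r r.2))⟩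
  invFun a := ⟨⟨psum l d r + a, by
      have hle : psum l d (r + 1) ≤ n := hsum ▸ psum_le_sum (r + 1)
      rw [psum_succ l d r r.2] at hle
      exact (Nat.add_lt_add_left a.2 _).trans_le hle⟩,
    blk_interval l d _ r r.2 (Nat.le_add_right _ _)
      ((Nat.add_lt_add_left a.2 _).trans_eq (psum_succ l d r r.2).symm)⟩
  left_inv i := by
    have hle := (blk_lt_and_mem_Ico hsum i.1).2.1
    rw [i.2] at hle
    exact Subtype.ext (Fin.ext (Nat.add_sub_of_le hle))
  right_inv a := Fin.ext (Nat.add_sub_cancel_left _ _)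

lemma psum_add_blockEquiv (hsum : ∑ i, d i = n) (r : Fin l) (i : {i : Fin n // blk l d i = r}) :
    psum l d r + blockEquiv hsum r i = (i : ℕ) :=
  congrArg (fun j ↦ (j.1 : ℕ)) ((blockEquiv hsum r).left_inv i)

end Blocks

section Membership

variable {K : Type} [Field K] {n l : ℕ} {d : Fin l → ℕ}

lemma mem_UbarS {g : GL (Fin n) K} :
    g ∈ UbarS n l d ↔ IsLowerUnipotent (blk l d) (g : Matrix (Fin n) (Fin n) K) := by
  unfold UbarS
  exact Iff.rfl

lemma mem_stabE_iff {E : Submodule K (Fin n → K)} {p : Fin n → Prop}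
    (hE : ∀ v, v ∈ E ↔ ∀ i, p i → v i = 0) {g : GL (Fin n) K} :
    g ∈ stabE E ↔ ∀ i j, p i → ¬ p j → g i j = 0 := by
  constructor
  · intro hg i j hi hj
    have hjE : Pi.single j 1 ∈ E := (hE _).2 fun k hk ↦
      Pi.single_eq_of_ne (fun hkj : k = j ↦ hj (hkj ▸ hk)) 1
    have hgj := (hE _).1 (hg _ hjE) i hi
    rwa [mulVec_single_one] at hgj
  · intro hg v hv
    refine (hE _).2 fun i hi ↦ ?_
    rw [mulVec, dotProduct]
    refine Finset.sum_eq_zero fun j _ ↦ ?_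
    by_cases hj : p j
    · rw [(hE v).1 hv j hj, mul_zero]
    · rw [hg i j hi hj, zero_mul]

lemma mem_parab (hsum : ∑ i, d i = n) {g : GL (Fin n) K} :
    g ∈ parab n l d ↔ (g : Matrix (Fin n) (Fin n) K).BlockTriangular (blk l d) := by
  have hE (k : ℕ) (v : Fin n → K) :
      v ∈ Esub n (psum l d k) ↔ ∀ i, k ≤ blk l d i → v i = 0 :=
    forall_congr' fun i ↦ by rw [← not_lt, ← not_lt, blk_lt_iff hsum]
  unfold parab
  simp_rw [Subgroup.mem_iInf, mem_stabE_iff (hE _), not_le]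
  exact ⟨fun hg i j hij ↦ hg _ i j le_rfl hij, fun hg k i j hi hj ↦ hg (hj.trans_le hi)⟩

lemma mem_LD {g : GL (Fin n) K} :
    g ∈ LD n l d ↔ ∀ i j, blk l d i ≠ blk l d j → g i j = 0 := by
  have hE (t : ℕ) (v : Fin n → K) :
      v ∈ blkSpace l d n t ↔ ∀ i, blk l d i ≠ t → v i = 0 := Iff.rfl
  unfold LD
  simp_rw [Subgroup.mem_iInf, mem_stabE_iff (hE _), not_not]
  exact ⟨fun hg i j hij ↦ hg _ i j hij rfl, fun hg t i j hi hj ↦ hg i j (hj ▸ hi)⟩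

lemma disjoint_UbarS_parab (hsum : ∑ i, d i = n) :
    Disjoint (UbarS n l d) (parab n l d : Subgroup (GL (Fin n) K)) := by
  refine Subgroup.disjoint_def.2 fun {g} hU hP ↦ Units.ext ?_
  rw [mem_UbarS] at hU
  rw [mem_parab hsum] at hP
  exact hU.eq_one fun i j hij ↦ by_contra fun hne ↦
    hne (hP (hU.lt_of_apply_ne_zero hij hne))

lemma mem_whitSpace {P U : Subgroup (GL (Fin n) K)} {ψ : U →* ℂ} {f : GL (Fin n) K → ℂ} :
    f ∈ whitSpace P U ψ ↔ ∀ (u : U) g (p : P), f (u * g * p) = ψ u * f g := by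
  unfold whitSpace
  exact Iff.rfl

end Membership

section Characters

variable {n l : ℕ} {d : Fin l → ℕ}

lemma offEmbed_single {K : Type} [Field K] {r₀ c₀ a b : ℕ} {i j : Fin n} {x : Fin a} {y : Fin b}
    (hi : r₀ + x = (i : ℕ)) (hj : c₀ + y = (j : ℕ)) (c : K) :
    offEmbed n r₀ c₀ a b (single x y c) = single i j c := by
  ext i' j'
  simp only [offEmbed, of_apply, single_apply, Fin.ext_iff]
  split_ifs <;> first | rfl | omega

lemma mulVec_injective_of_rank_eq_card {K ι κ : Type*} [Field K] [Fintype κ] {M : Matrix ι κ K}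
    (hM : M.rank = Fintype.card κ) : Function.Injective M.mulVec := by
  rw [mulVec_injective_iff, linearIndependent_iff_card_eq_finrank_span, ← hM]
  exact rank_eq_finrank_span_cols M

/-- The matrix with blocks `A r` just above the block diagonal. -/
def ofSuperdiagonalBlocks {K : Type} [Field K] (hsum : ∑ i, d i = n)
    (A : ∀ (r : ℕ) (hr : r + 1 < l),
      Matrix (Fin (d ⟨r, Nat.lt_of_succ_lt hr⟩)) (Fin (d ⟨r + 1, hr⟩)) K) :
    Matrix (Fin n) (Fin n) K :=
  of fun i j ↦
    if h : blk l d j = blk l d i + 1 then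
      have hr : blk l d i + 1 < l := h ▸ (blk_lt_and_mem_Ico hsum j).1
      A (blk l d i) hr (blockEquiv hsum ⟨_, Nat.lt_of_succ_lt hr⟩ ⟨i, rfl⟩)
        (blockEquiv hsum ⟨_, hr⟩ ⟨j, h⟩)
    else 0

section ofSuperdiagonalBlocks

variable {K : Type} [Field K] {hsum : ∑ i, d i = n} {A : ∀ (r : ℕ) (hr : r + 1 < l),
  Matrix (Fin (d ⟨r, Nat.lt_of_succ_lt hr⟩)) (Fin (d ⟨r + 1, hr⟩)) K}

lemma isSuperdiagonal_ofSuperdiagonalBlocks :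
    IsSuperdiagonal (blk l d) (ofSuperdiagonalBlocks hsum A) :=
  fun _ _ h ↦ dif_neg h

lemma toBlock_ofSuperdiagonalBlocks {r : ℕ} (hr : r + 1 < l) :
    (ofSuperdiagonalBlocks hsum A).toBlock (fun i ↦ blk l d i = r) (fun j ↦ blk l d j = r + 1) =
      (A r hr).submatrix (blockEquiv hsum ⟨r, Nat.lt_of_succ_lt hr⟩)
        (blockEquiv hsum ⟨r + 1, hr⟩) := by
  ext ⟨i, rfl⟩ ⟨j, hj⟩
  exact dif_pos hj

lemma isMaxRankSuperdiagonal_ofSuperdiagonalBlocks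
    (hA : ∀ (r : ℕ) (hr : r + 1 < l), (A r hr).rank = d ⟨r + 1, hr⟩) :
    IsMaxRankSuperdiagonal (blk l d) (ofSuperdiagonalBlocks hsum A) where
  isSuperdiagonal := isSuperdiagonal_ofSuperdiagonalBlocks
  injective r := by
    obtain hr | hr := lt_or_ge (r + 1) l
    · refine mulVec_injective_of_rank_eq_card ?_
      rw [toBlock_ofSuperdiagonalBlocks hr, rank_submatrix, hA r hr,
        Fintype.card_congr (blockEquiv hsum ⟨r + 1, hr⟩), Fintype.card_fin]
    · have : IsEmpty {j : Fin n // blk l d j = r + 1} :=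
        ⟨fun j ↦ hr.not_gt (j.2 ▸ (blk_lt_and_mem_Ico hsum j.1).1)⟩
      exact Function.injective_of_subsingleton _

end ofSuperdiagonalBlocks

/-- The character `u ↦ χ₀ (trace (T u))` of `Ū_D` attached to a superdiagonal matrix `T`. -/
def traceChar {K : Type} [Field K] (χ₀ : AddChar K ℂ) {T : Matrix (Fin n) (Fin n) K}
    (hT : IsSuperdiagonal (blk l d) T) : (UbarS n l d : Subgroup (GL (Fin n) K)) →* ℂ where
  toFun u := χ₀ (T * (u : GL (Fin n) K)).trace
  map_one' := by
    rw [OneMemClass.coe_one, Units.val_one, mul_one, hT.trace_eq_zero, AddChar.map_zero_eq_one]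
  map_mul' u v := by
    rw [Subgroup.coe_mul, Units.val_mul, hT.trace_mul_mul (mem_UbarS.1 u.2) (mem_UbarS.1 v.2),
      AddChar.map_add_eq_mul]

lemma UbarS_hom_ext {K : Type} {M : Type*} [Field K] [Monoid M]
    (hb : ∀ i j : Fin n, blk l d j + 1 < blk l d i → ∃ k : Fin n, blk l d k = blk l d j + 1)
    {φ ψ : (UbarS n l d : Subgroup (GL (Fin n) K)) →* M}
    (h : ∀ (u : UbarS n l d) (i j : Fin n) (hij : i ≠ j) (c : K), blk l d i = blk l d j + 1 →
      (u : GL (Fin n) K) = SpecialLinearGroup.transvection hij c → φ u = ψ u) : φ = ψ := by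
  refine MonoidHom.ext fun u ↦ ?_
  have hu : (u : GL (Fin n) K) ∈ (φ.eqLocus ψ).map (UbarS n l d).subtype := by
    refine (mem_UbarS.1 u.2).mem_of_adjacent_transvection_mem hb fun i j hij c hadj ↦ ?_
    have hmem : (SpecialLinearGroup.transvection hij c : GL (Fin n) K) ∈ UbarS n l d :=
      mem_UbarS.2 (isLowerUnipotent_transvection (hadj ▸ Nat.lt_succ_self _) c)
    exact ⟨⟨_, hmem⟩, h _ i j hij c hadj rfl, rfl⟩
  obtain ⟨v, hv, hvu⟩ := hu
  rwa [Subtype.ext hvu] at hv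

lemma transvection_eq_uBlk (hsum : ∑ i, d i = n) {r : ℕ} (hr : r + 1 < l)
    (i : {i : Fin n // blk l d i = r + 1}) (j : {j : Fin n // blk l d j = r})
    (hij : (i : Fin n) ≠ j) (c : F) :
    (SpecialLinearGroup.transvection hij c : GL (Fin n) F) =
      uBlk n l d r hr (single (blockEquiv hsum ⟨r + 1, hr⟩ i)
        (blockEquiv hsum ⟨r, Nat.lt_of_succ_lt hr⟩ j) c) := by
  refine Units.ext ?_
  rw [SpecialLinearGroup.coe_GL_coe_matrix, SpecialLinearGroup.transvection_coe]
  exact congrArg (1 + ·) (offEmbed_single (psum_add_blockEquiv hsum ⟨r + 1, hr⟩ i)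
    (psum_add_blockEquiv hsum ⟨r, Nat.lt_of_succ_lt hr⟩ j) c).symm

lemma IsMaxRankChar.exists_isMaxRankSuperdiagonal (hsum : ∑ i, d i = n) {χ₀ : AddChar F ℂ}
    {ψ : (UbarS n l d : Subgroup (GL (Fin n) F)) →* ℂ} (hψ : IsMaxRankChar χ₀ n l d ψ) :
    ∃ T : Matrix (Fin n) (Fin n) F, IsMaxRankSuperdiagonal (blk l d) T ∧
      ∀ u : UbarS n l d, ψ u = χ₀ (T * ((u : GL (Fin n) F) : Matrix (Fin n) (Fin n) F)).trace := by
  unfold IsMaxRankChar at hψ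
  choose A hψA hA using hψ
  have hT := isMaxRankSuperdiagonal_ofSuperdiagonalBlocks (hsum := hsum) hA
  refine ⟨ofSuperdiagonalBlocks hsum A, hT,
    DFunLike.congr_fun (g := traceChar χ₀ hT.isSuperdiagonal) (UbarS_hom_ext
      (fun i j hij ↦ hT.exists_eq_of_le hij.le) fun u i j hij c hadj hu ↦ ?_)⟩
  have hr : blk l d j + 1 < l := hadj ▸ (blk_lt_and_mem_Ico hsum i).1
  have hTu : (ofSuperdiagonalBlocks hsum A * ((u : GL (Fin n) F) : Matrix (Fin n) (Fin n) F)).trace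
      = ofSuperdiagonalBlocks hsum A j i * c := by
    rw [hu]
    exact hT.isSuperdiagonal.trace_mul_transvection i j c
  have hTji := congrFun₂ (toBlock_ofSuperdiagonalBlocks (hsum := hsum) (A := A) hr)
    ⟨j, rfl⟩ ⟨i, hadj⟩
  have hu' := hu.trans (transvection_eq_uBlk hsum hr ⟨i, hadj⟩ ⟨j, rfl⟩ hij c)
  obtain rfl : u = ⟨_, uBlk_mem n l d _ hr _⟩ := Subtype.ext hu'
  rw [hψA, trace_mul_single, op_smul_eq_mul]
  exact congrArg χ₀ ((congrArg (· * c) hTji).symm.trans hTu.symm)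

end Characters

section WhittakerSpace

variable {K : Type} [Field K] {n : ℕ} {P U : Subgroup (GL (Fin n) K)} {ψ : U →* ℂ}

lemma apply_eq_one_of_mem_whitSpace {f : GL (Fin n) K → ℂ} (hf : f ∈ whitSpace P U ψ)
    {g : GL (Fin n) K} (hfg : f g ≠ 0) {u : U} (hu : g⁻¹ * u * g ∈ P) : ψ u = 1 := by
  have hfix := mem_whitSpace.1 hf 1 g ⟨_, hu⟩
  have hug := mem_whitSpace.1 hf u g 1
  simp only [mul_assoc, mul_inv_cancel_left, OneMemClass.coe_one, one_mul, mul_one, map_one]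
    at hfix hug
  exact mul_right_cancel₀ hfg (by rw [← hug, hfix, one_mul])

/-- The candidate for the unique Whittaker vector: `u p ↦ ψ u` on `U P`, and zero elsewhere. -/
noncomputable def whittakerFun (P U : Subgroup (GL (Fin n) K)) (ψ : U →* ℂ) :
    GL (Fin n) K → ℂ :=
  Function.extend (fun x : U × P ↦ (x.1 * x.2 : GL (Fin n) K)) (fun x ↦ ψ x.1) 0

lemma whittakerFun_mul (hUP : Disjoint U P) (u : U) (p : P) :
    whittakerFun P U ψ (u * p) = ψ u :=
  (Subgroup.mul_injective_of_disjoint hUP).extend_apply _ _ (u, p)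

lemma whittakerFun_eq_zero {g : GL (Fin n) K} (hg : ∀ (u : U) (p : P), g ≠ u * p) :
    whittakerFun P U ψ g = 0 :=
  Function.extend_apply' _ _ _ fun ⟨x, hx⟩ ↦ hg x.1 x.2 hx.symm

lemma whittakerFun_mem_whitSpace (hUP : Disjoint U P) : whittakerFun P U ψ ∈ whitSpace P U ψ := by
  refine mem_whitSpace.2 fun u g p ↦ ?_
  by_cases hg : ∃ (u₁ : U) (p₁ : P), g = u₁ * p₁
  · obtain ⟨u₁, p₁, rfl⟩ := hg
    rw [whittakerFun_mul hUP, ← map_mul, ← whittakerFun_mul hUP (u * u₁) (p₁ * p)]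
    simp only [Subgroup.coe_mul, mul_assoc]
  · push Not at hg
    rw [whittakerFun_eq_zero hg, mul_zero]
    refine whittakerFun_eq_zero fun u₁ p₁ hug ↦ hg (u⁻¹ * u₁) (p₁ * p⁻¹) ?_
    rw [Subgroup.coe_mul, Subgroup.coe_mul, Subgroup.coe_inv, Subgroup.coe_inv, mul_assoc,
      ← mul_assoc (u₁ : GL (Fin n) K), ← hug]
    group

lemma finrank_whitSpace_eq_one (hUP : Disjoint U P)
    (hsupp : ∀ f ∈ whitSpace P U ψ, ∀ g, f g ≠ 0 → ∃ (u : U) (p : P), g = u * p) :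
    Module.finrank ℂ (whitSpace P U ψ) = 1 := by
  refine finrank_eq_one ⟨_, whittakerFun_mem_whitSpace hUP⟩ (fun h ↦ ?_) fun ⟨f, hf⟩ ↦
    ⟨f 1, Subtype.ext (funext fun g ↦ ?_)⟩
  · have hone := congrFun (congrArg Subtype.val h) 1
    rw [← one_mul (1 : GL (Fin n) K)] at hone
    exact one_ne_zero ((map_one ψ).symm.trans ((whittakerFun_mul hUP 1 1).symm.trans hone))
  · change f 1 * whittakerFun P U ψ g = f g
    by_cases hg : ∃ (u : U) (p : P), g = u * p
    · obtain ⟨u, p, rfl⟩ := hg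
      have hup := mem_whitSpace.1 hf u 1 p
      rw [mul_one] at hup
      rw [whittakerFun_mul hUP, hup, mul_comm]
    · rw [not_imp_comm.1 (hsupp f hf g) hg]
      push Not at hg
      rw [whittakerFun_eq_zero hg, mul_zero]

end WhittakerSpace

section MaximalRank

variable {K : Type} [Field K] {n l l' : ℕ} {d : Fin l → ℕ} {d' : Fin l' → ℕ} {χ₀ : AddChar K ℂ}
  {T : Matrix (Fin n) (Fin n) K} {ψ : (UbarS n l d : Subgroup (GL (Fin n) K)) →* ℂ}

lemma isTransverseAt_of_mem_whitSpace (hχ₀ : χ₀ ≠ 1) (hT : IsMaxRankSuperdiagonal (blk l d) T)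
    (hψ : ∀ u, ψ u = χ₀ (T * ((u : GL (Fin n) K) : Matrix (Fin n) (Fin n) K)).trace)
    (hsum' : ∑ i, d' i = n) {f : GL (Fin n) K → ℂ}
    (hf : f ∈ whitSpace (parab n l' d') (UbarS n l d) ψ) {g : GL (Fin n) K} (hfg : f g ≠ 0)
    (k : ℕ) : IsTransverseAt (blk l d) (blk l' d') (g : Matrix (Fin n) (Fin n) K) k := by
  obtain ⟨c, hc⟩ := AddChar.ne_one_iff.1 hχ₀
  refine hT.isTransverseAt (c := c) (fun u hu hgu htrace ↦ hc ?_) k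
  rw [← htrace, ← hψ ⟨u, mem_UbarS.2 hu⟩]
  exact apply_eq_one_of_mem_whitSpace hf hfg ((mem_parab hsum').2 hgu)

lemma whitSpace_eq_bot_of_psum_lt (hχ₀ : χ₀ ≠ 1) (hT : IsMaxRankSuperdiagonal (blk l d) T)
    (hψ : ∀ u, ψ u = χ₀ (T * ((u : GL (Fin n) K) : Matrix (Fin n) (Fin n) K)).trace)
    (hsum : ∑ i, d i = n) (hsum' : ∑ i, d' i = n) {j : ℕ} (hj : psum l d j < psum l' d' j) :
    whitSpace (parab n l' d') (UbarS n l d) ψ = ⊥ := by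
  refine (Submodule.eq_bot_iff _).2 fun f hf ↦ funext fun g ↦ by_contra fun hfg ↦ ?_
  have hcard := (isTransverseAt_of_mem_whitSpace hχ₀ hT hψ hsum' hf hfg j).card_le
  rw [card_blk_lt hsum, card_blk_lt hsum'] at hcard
  exact hcard.not_gt hj

lemma finrank_whitSpace_parab_UbarS (hχ₀ : χ₀ ≠ 1) (hT : IsMaxRankSuperdiagonal (blk l d) T)
    (hψ : ∀ u, ψ u = χ₀ (T * ((u : GL (Fin n) K) : Matrix (Fin n) (Fin n) K)).trace)
    (hsum : ∑ i, d i = n) :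
    Module.finrank ℂ (whitSpace (parab n l d) (UbarS n l d) ψ) = 1 := by
  refine finrank_whitSpace_eq_one (disjoint_UbarS_parab hsum) fun f hf g hfg ↦ ?_
  obtain ⟨q, hq, hgq⟩ :=
    exists_isLowerUnipotent_mul (isTransverseAt_of_mem_whitSpace hχ₀ hT hψ hsum hf hfg)
  exact ⟨⟨g * q, mem_UbarS.2 hgq⟩, ⟨q⁻¹, inv_mem ((mem_parab hsum).2 hq)⟩,
    (mul_inv_cancel_right g q).symm⟩

lemma mul_mul_inv_mem_UbarS {m u : GL (Fin n) K} (hm : m ∈ LD n l d) (hu : u ∈ UbarS n l d) :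
    m * u * m⁻¹ ∈ UbarS n l d :=
  mem_UbarS.2 <| (mem_UbarS.1 hu).mul_mul (mem_LD.1 hm) (mem_LD.1 (inv_mem hm)) m.mul_inv

end MaximalRank

theorem whittaker_multiplicity_one_general {χ₀ : AddChar F ℂ} (hχ₀ : χ₀ ≠ 1) {n l : ℕ}
    {d : Fin l → ℕ} (hsum : ∑ i, d i = n) :
    (∀ ψ ψ' : ↥(UbarS n l d : Subgroup (GL (Fin n) F)) →* ℂ,
      IsMaxRankChar χ₀ n l d ψ → IsMaxRankChar χ₀ n l d ψ' →
      ∃ m : GL (Fin n) F, m ∈ LD n l d ∧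
        (∀ u ∈ (UbarS n l d : Subgroup (GL (Fin n) F)),
            m * u * m⁻¹ ∈ (UbarS n l d : Subgroup (GL (Fin n) F))) ∧
        ∀ u u' : ↥(UbarS n l d : Subgroup (GL (Fin n) F)),
          (u' : GL (Fin n) F) = m * (u : GL (Fin n) F) * m⁻¹ →
            ψ' u = ψ u') ∧
    (∀ ψ : ↥(UbarS n l d : Subgroup (GL (Fin n) F)) →* ℂ,
      IsMaxRankChar χ₀ n l d ψ →
      Module.finrank ℂ ↥(whitSpace (parab n l d) (UbarS n l d) ψ) = 1) ∧
    (∀ ψ : ↥(UbarS n l d : Subgroup (GL (Fin n) F)) →* ℂ,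
      IsMaxRankChar χ₀ n l d ψ →
      ∀ (l' : ℕ) (d' : Fin l' → ℕ), (∑ i, d' i = n) →
        (∃ j : ℕ, psum l d j < psum l' d' j) →
        whitSpace (parab n l' d') (UbarS n l d) ψ = ⊥) := by
  refine ⟨fun ψ ψ' hψ hψ' ↦ ?_, fun ψ hψ ↦ ?_, fun ψ hψ l' d' hsum' ⟨j, hj⟩ ↦ ?_⟩
  · obtain ⟨T, hT, hψT⟩ := hψ.exists_isMaxRankSuperdiagonal hsum
    obtain ⟨T', hT', hψT'⟩ := hψ'.exists_isMaxRankSuperdiagonal hsum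
    obtain ⟨m, hm, hTm⟩ := hT.exists_mul_eq_mul hT'
    refine ⟨m, mem_LD.2 hm, fun u ↦ mul_mul_inv_mem_UbarS (mem_LD.2 hm), fun u u' huu' ↦ ?_⟩
    rw [hψT, hψT', huu', Units.val_mul, Units.val_mul, trace_mul_conj hTm]
  · obtain ⟨T, hT, hψT⟩ := hψ.exists_isMaxRankSuperdiagonal hsum
    exact finrank_whitSpace_parab_UbarS hχ₀ hT hψT hsum
  · obtain ⟨T, hT, hψT⟩ := hψ.exists_isMaxRankSuperdiagonal hsum
    exact whitSpace_eq_bot_of_psum_lt hχ₀ hT hψT hsum hsum' hj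

/-- Proposition 10.5.1: (a) the maximal rank characters of
`Ū_D` form a single orbit under conjugation by the Levi subgroup `L_D`;
(b) each maximal rank character `ψ` occurs with multiplicity one in
`Ind_{P_D}^{GL_n} 1`; (c) for a partition `D'` strictly dominating `D`, the
`ψ`-Whittaker space of `Ind_{P_{D'}}^{GL_n} 1` vanishes. -/
theorem whittaker_multiplicity_one
    (χ₀ : AddChar F ℂ) (hχ₀ : χ₀ ≠ 1)
    {n : ℕ} (l : ℕ) (hl : 0 < l) (d : Fin l → ℕ)
    (hmono : ∀ i j : Fin l, i ≤ j → d j ≤ d i)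
    (hpos : ∀ i, 0 < d i) (hsum : ∑ i, d i = n) :
    -- (a)
    (∀ ψ ψ' : ↥(UbarS n l d : Subgroup (GL (Fin n) F)) →* ℂ,
      IsMaxRankChar χ₀ n l d ψ → IsMaxRankChar χ₀ n l d ψ' →
      ∃ m : GL (Fin n) F, m ∈ LD n l d ∧
        (∀ u ∈ (UbarS n l d : Subgroup (GL (Fin n) F)),
            m * u * m⁻¹ ∈ (UbarS n l d : Subgroup (GL (Fin n) F))) ∧
        ∀ u u' : ↥(UbarS n l d : Subgroup (GL (Fin n) F)),
          (u' : GL (Fin n) F) = m * (u : GL (Fin n) F) * m⁻¹ →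
            ψ' u = ψ u') ∧
    -- (b)
    (∀ ψ : ↥(UbarS n l d : Subgroup (GL (Fin n) F)) →* ℂ,
      IsMaxRankChar χ₀ n l d ψ →
      Module.finrank ℂ ↥(whitSpace (parab n l d) (UbarS n l d) ψ) = 1) ∧
    -- (c)
    (∀ ψ : ↥(UbarS n l d : Subgroup (GL (Fin n) F)) →* ℂ,
      IsMaxRankChar χ₀ n l d ψ →
      ∀ (l' : ℕ) (d' : Fin l' → ℕ),
        (∀ i j : Fin l', i ≤ j → d' j ≤ d' i) → (∀ i, 0 < d' i) →
        (∑ i, d' i = n) →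
        (∀ j : ℕ, psum l d j ≤ psum l' d' j) →
        (∃ j : ℕ, psum l d j ≠ psum l' d' j) →
        whitSpace (parab n l' d') (UbarS n l d) ψ = ⊥) := by
  obtain ⟨orbit, multiplicity, vanishing⟩ := whittaker_multiplicity_one_general hχ₀ hsum
  exact ⟨orbit, multiplicity, fun ψ hψ l' d' _ _ hsum' hdom ⟨j, hne⟩ ↦
    vanishing ψ hψ l' d' hsum' ⟨j, (hdom j).lt_of_ne hne⟩⟩

end Stmt16
end
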